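/- (Convexity for Littlewood–Richardson coefficients along root-lattice segments) Let λ^{(1)}, …, λ^{(r)} be partitions, ν a partition, γ ∈ ℤⁿ with coordinates summing to zero, and k a positive integer such that ν + kγ is also a partition. If the multiplicity of V(ν) and of V(ν + kγ) in V(λ^{(1)}) ⊗ ⋯ ⊗ V(λ^{(r)}) are both nonzero (as SL(n)-representations), then for each 0 ≤ l ≤ k the multiplicity of V(ν + lγ) in the same tensor product is nonzero. -/

import Mathlib

/-!
(Convexity for Littlewood–Richardson coefficients along root-lattice segments.)
Let `λ⁽¹⁾, …, λ⁽ʳ⁾` be partitions, `ν` a partition, `γ ∈ ℤⁿ` with coordinates summing to zero,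
and `k ≥ 1` such that `ν + kγ` is also a partition.  If `V(ν)` and `V(ν + kγ)` both occur in
`V(λ⁽¹⁾) ⊗ ⋯ ⊗ V(λ⁽ʳ⁾)` (as `SL(n)`-representations), then for each `0 ≤ l ≤ k` the
representation `V(ν + lγ)` occurs in the same tensor product.

Irreducible representations of `SL(n)` are indexed by partitions with at most `n` parts via
their highest weights (a partition `p` gives the torus character `diag d ↦ ∏ dᵢ^{pᵢ}`); the root
lattice of `SL(n)` is identified with integer vectors in `ℤⁿ` summing to zero.  `Occurs ρ a`
says the tensor product contains a highest weight vector of weight `a`, i.e. the (generalized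
Littlewood–Richardson) multiplicity of `V(a)` is nonzero.
-/

open scoped TensorProduct
abbrev SL (n : ℕ) := Matrix.SpecialLinearGroup (Fin n) ℂ

section Defs

variable {n : ℕ} {V W : Type*} [AddCommGroup V] [Module ℂ V] [AddCommGroup W] [Module ℂ W]

/-- A matrix in `SL(n)` lying in the standard maximal torus (diagonal matrices). -/
def SLIsDiag (g : SL n) : Prop := ∀ i j, i ≠ j → g.val i j = 0

/-- A matrix in `SL(n)` lying in the unipotent radical of the standard Borel
(upper triangular, 1's on the diagonal). -/
def SLIsUniUpper (g : SL n) : Prop :=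
  (∀ i, g.val i i = 1) ∧ ∀ i j : Fin n, j < i → g.val i j = 0

/-- `v` is a highest weight vector of weight `a` (a character of the diagonal torus,
`diag d ↦ ∏ dᵢ^{aᵢ}`): it is nonzero, fixed by the unipotent radical of the Borel, and the
torus acts on it through the character `a`. -/
def IsHWVector (ρ : Representation ℂ (SL n) V) (a : Fin n → ℤ) (v : V) : Prop :=
  v ≠ 0 ∧ (∀ g, SLIsUniUpper g → ρ g v = v) ∧
    ∀ g, SLIsDiag g → ρ g v = (∏ i, g.val i i ^ a i) • v

/-- The irreducible representation `V(a)` of highest weight `a` occurs in `ρ`: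
equivalently (for completely reducible `ρ`), `ρ` has a highest weight vector of weight `a`. -/
def Occurs (ρ : Representation ℂ (SL n) V) (a : Fin n → ℤ) : Prop := ∃ v, IsHWVector ρ a v

/-- `ρ` is irreducible: `V ≠ 0` and the only invariant subspaces are `⊥` and `⊤`. -/
def RepIsIrreducible (ρ : Representation ℂ (SL n) V) : Prop :=
  (∃ v : V, v ≠ 0) ∧ ∀ p : Submodule ℂ V, (∀ g, ∀ x ∈ p, ρ g x ∈ p) → p = ⊥ ∨ p = ⊤

/-- The space of invariants `V^G` is nonzero. -/
def HasInvariant (ρ : Representation ℂ (SL n) V) : Prop := ∃ v : V, v ≠ 0 ∧ ∀ g, ρ g v = v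

/-- Dominance of the weight `a` (for the standard choice of positive roots). -/
def SLDominant (a : Fin n → ℤ) : Prop := ∀ i j : Fin n, i ≤ j → a j ≤ a i

/-- The tensor product of a finite family of representations of `SL(n)`,
with the diagonal action. -/
noncomputable def piTensorRep {r : ℕ} {V : Fin r → Type*} [∀ i, AddCommGroup (V i)]
    [∀ i, Module ℂ (V i)] (ρ : ∀ i, Representation ℂ (SL n) (V i)) :
    Representation ℂ (SL n) (⨂[ℂ] i, V i) where
  toFun g := PiTensorProduct.map fun i => ρ i g
  map_one' := by simp
  map_mul' g h := by
    simpa using PiTensorProduct.map_mul (fun i => ρ i g) (fun i => ρ i h)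

/-- The tensor product of two representations of `SL(n)` with the diagonal action. -/
noncomputable def tensorRep2 (ρ : Representation ℂ (SL n) V) (σ : Representation ℂ (SL n) W) :
    Representation ℂ (SL n) (V ⊗[ℂ] W) := ρ.tprod σ

end Defs

/-- A partition with at most `n` parts: a non-increasing vector of naturals. -/
def IsPartition {n : ℕ} (a : Fin n → ℕ) : Prop := ∀ i j : Fin n, i ≤ j → a j ≤ a i

section PolynomialFunctions

variable {Z Z' : Type*} [AddCommGroup Z] [Module ℂ Z] [AddCommGroup Z'] [Module ℂ Z']

/-- The algebra of polynomial functions on a complex vector space. -/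
def polyFn (Z : Type*) [AddCommGroup Z] [Module ℂ Z] : Subalgebra ℂ (Z → ℂ) :=
  Algebra.adjoin ℂ (Set.range fun ξ : Module.Dual ℂ Z => (ξ : Z → ℂ))

theorem dual_mem_polyFn (ξ : Module.Dual ℂ Z) : (fun z => ξ z) ∈ polyFn Z :=
  Algebra.subset_adjoin ⟨ξ, rfl⟩

theorem const_mem_polyFn (c : ℂ) : (fun _ : Z => c) ∈ polyFn Z :=
  (polyFn Z).algebraMap_mem c

theorem add_mem_polyFn {f g : Z → ℂ} (hf : f ∈ polyFn Z) (hg : g ∈ polyFn Z) :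
    (fun z => f z + g z) ∈ polyFn Z := add_mem hf hg

theorem mul_mem_polyFn {f g : Z → ℂ} (hf : f ∈ polyFn Z) (hg : g ∈ polyFn Z) :
    (fun z => f z * g z) ∈ polyFn Z := mul_mem hf hg

theorem sum_mem_polyFn {κ : Type*} {s : Finset κ} {f : κ → Z → ℂ}
    (hf : ∀ i ∈ s, f i ∈ polyFn Z) : (fun z => ∑ i ∈ s, f i z) ∈ polyFn Z := by
  have := sum_mem hf
  convert this using 1
  ext z; simp

theorem prod_mem_polyFn {κ : Type*} {s : Finset κ} {f : κ → Z → ℂ}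
    (hf : ∀ i ∈ s, f i ∈ polyFn Z) : (fun z => ∏ i ∈ s, f i z) ∈ polyFn Z := by
  have := prod_mem hf
  convert this using 1
  ext z; simp

theorem pow_mem_polyFn {f : Z → ℂ} (hf : f ∈ polyFn Z) (k : ℕ) :
    (fun z => f z ^ k) ∈ polyFn Z := pow_mem hf k

theorem det_mem_polyFn {κ : Type*} [Fintype κ] [DecidableEq κ] {A : Z → Matrix κ κ ℂ}
    (hA : ∀ i j, (fun z => A z i j) ∈ polyFn Z) : (fun z => (A z).det) ∈ polyFn Z := by
  simp only [Matrix.det_apply']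
  exact sum_mem_polyFn fun σ _ => mul_mem_polyFn (const_mem_polyFn _)
    (prod_mem_polyFn fun i _ => hA _ _)

theorem polyFn_comp {f : Z → ℂ} (hf : f ∈ polyFn Z) {Φ : Z' → Z}
    (hΦ : ∀ ξ : Module.Dual ℂ Z, (fun z => ξ (Φ z)) ∈ polyFn Z') :
    (fun z => f (Φ z)) ∈ polyFn Z' := by
  induction hf using Algebra.adjoin_induction with
  | mem x hx => obtain ⟨ξ, rfl⟩ := hx; exact hΦ ξ
  | algebraMap r => exact const_mem_polyFn r
  | add x y _ _ hx hy => exact add_mem_polyFn hx hy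
  | mul x y _ _ hx hy => exact mul_mem_polyFn hx hy

theorem polyFn_comp_affine {f : Z → ℂ} (hf : f ∈ polyFn Z) (c : Z) (A : Z' →ₗ[ℂ] Z) :
    (fun z => f (c + A z)) ∈ polyFn Z' := by
  refine polyFn_comp hf fun ξ => ?_
  simp only [map_add]
  exact add_mem_polyFn (const_mem_polyFn _) (dual_mem_polyFn (ξ.comp A))

theorem polyFn_eval_line {f : Z → ℂ} (hf : f ∈ polyFn Z) (x y : Z) :
    ∃ p : Polynomial ℂ, ∀ t : ℂ, f (x + t • y) = p.eval t := by
  induction hf using Algebra.adjoin_induction with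
  | mem g hg =>
    obtain ⟨ξ, rfl⟩ := hg
    exact ⟨Polynomial.C (ξ x) + Polynomial.C (ξ y) * Polynomial.X, fun t => by
      simp [mul_comm t]⟩
  | algebraMap r => exact ⟨Polynomial.C r, fun t => by simp⟩
  | add g h _ _ hg hh =>
    obtain ⟨p, hp⟩ := hg; obtain ⟨q, hq⟩ := hh
    exact ⟨p + q, fun t => by simp [hp, hq]⟩
  | mul g h _ _ hg hh =>
    obtain ⟨p, hp⟩ := hg; obtain ⟨q, hq⟩ := hh
    exact ⟨p * q, fun t => by simp [hp, hq]⟩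

theorem polyFn_exists_mul_ne_zero {f g : Z → ℂ} (hf : f ∈ polyFn Z) (hg : g ∈ polyFn Z)
    {x y : Z} (hx : f x ≠ 0) (hy : g y ≠ 0) : ∃ z, f z * g z ≠ 0 := by
  obtain ⟨p, hp⟩ := polyFn_eval_line hf x (y - x)
  obtain ⟨q, hq⟩ := polyFn_eval_line hg x (y - x)
  have hp0 : p ≠ 0 := by
    rintro rfl
    exact hx (by simpa using hp 0)
  have hq0 : q ≠ 0 := by
    rintro rfl
    exact hy (by simpa using hq 1)
  obtain ⟨t, ht⟩ := Polynomial.exists_eval_ne_zero_of_natDegree_lt_card (p * q)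
    (mul_ne_zero hp0 hq0) (by
      rw [Cardinal.mk_complex]
      exact (Cardinal.natCast_lt_aleph0).trans_le Cardinal.aleph0_le_continuum)
  exact ⟨x + t • (y - x), by rw [hp, hq, ← Polynomial.eval_mul]; exact ht⟩

theorem polyFn_exists_prod_ne_zero {κ : Type*} (s : Finset κ) (f : κ → Z → ℂ)
    (hf : ∀ i ∈ s, f i ∈ polyFn Z) (hne : ∀ i ∈ s, ∃ z, f i z ≠ 0) :
    ∃ z, ∏ i ∈ s, f i z ≠ 0 := by
  classical
  induction s using Finset.induction_on with
  | empty => exact ⟨0, by simp⟩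
  | insert a s ha ih =>
    obtain ⟨x, hx⟩ := ih (fun i hi => hf i (by simp [hi])) fun i hi => hne i (by simp [hi])
    obtain ⟨y, hy⟩ := hne a (by simp)
    obtain ⟨z, hz⟩ := polyFn_exists_mul_ne_zero (hf a (by simp))
      (prod_mem_polyFn (s := s) fun i hi => hf i (by simp [hi])) hy hx
    exact ⟨z, by rwa [Finset.prod_insert ha]⟩

end PolynomialFunctions

section Rank

variable {E F Z : Type*} [AddCommGroup E] [Module ℂ E] [AddCommGroup F] [Module ℂ F]
  [AddCommGroup Z] [Module ℂ Z]

theorem exists_dual_det_ne_zero {κ : Type*} [Fintype κ] [DecidableEq κ] {u : κ → F}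
    (hu : LinearIndependent ℂ u) :
    ∃ ξ : κ → Module.Dual ℂ F, (Matrix.of fun i j => ξ i (u j)).det ≠ 0 := by
  obtain ⟨g, hg⟩ := (Fintype.linearCombination ℂ u).exists_leftInverse_of_injective
    (LinearMap.ker_eq_bot.2 (linearIndependent_iff_injective_fintypeLinearCombination.1 hu))
  refine ⟨fun i => (LinearMap.proj i).comp g, ?_⟩
  have : (Matrix.of fun i j => ((LinearMap.proj i).comp g) (u j)) = (1 : Matrix κ κ ℂ) := by
    ext i j
    have := LinearMap.congr_fun hg (Pi.single j 1)
    simp only [LinearMap.comp_apply, Fintype.linearCombination_apply_single, one_smul,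
      LinearMap.id_apply] at this
    simp [this, Matrix.one_apply, Pi.single_apply]
  rw [this]; simp

theorem linearIndependent_of_dual_det_ne_zero {κ : Type*} [Fintype κ] [DecidableEq κ] {u : κ → F}
    (ξ : κ → Module.Dual ℂ F) (h : (Matrix.of fun i j => ξ i (u j)).det ≠ 0) :
    LinearIndependent ℂ u := by
  rw [Fintype.linearIndependent_iff]
  intro c hc
  have : (Matrix.of fun i j => ξ i (u j)).mulVec c = 0 := by
    ext i
    have := congrArg (ξ i) hc
    simpa [Matrix.mulVec, dotProduct, mul_comm] using this
  exact fun i => congrFun (Matrix.eq_zero_of_mulVec_eq_zero h this) i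

theorem exists_linearIndependent_image [FiniteDimensional ℂ F] (A : E →ₗ[ℂ] F) :
    ∃ u : Fin (Module.finrank ℂ A.range) → E, LinearIndependent ℂ (fun i => A (u i)) := by
  let b := Module.finBasis ℂ A.range
  choose u hu using fun i => (b i).2
  refine ⟨u, ?_⟩
  have := b.linearIndependent.map' A.range.subtype (by simp)
  simpa [Function.comp_def, hu] using this

theorem card_le_finrank_range [FiniteDimensional ℂ F] {κ : Type*} [Fintype κ]
    (A : E →ₗ[ℂ] F) (u : κ → E) (hu : LinearIndependent ℂ (fun i => A (u i))) :
    Fintype.card κ ≤ Module.finrank ℂ A.range := by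
  have : LinearIndependent ℂ (fun i => (⟨A (u i), ⟨u i, rfl⟩⟩ : A.range)) :=
    LinearIndependent.of_comp A.range.subtype (by simpa [Function.comp_def] using hu)
  exact this.fintype_card_le_finrank

/-- Having rank at least that of the value at `z₀` is a polynomial open condition. -/
theorem exists_polyFn_rank_le [FiniteDimensional ℂ F] (A : Z → E →ₗ[ℂ] F)
    (hA : ∀ u (ξ : Module.Dual ℂ F), (fun z => ξ (A z u)) ∈ polyFn Z) (z₀ : Z) :
    ∃ m ∈ polyFn Z, m z₀ ≠ 0 ∧ ∀ z, m z ≠ 0 →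
      Module.finrank ℂ (A z₀).range ≤ Module.finrank ℂ (A z).range := by
  obtain ⟨u, hu⟩ := exists_linearIndependent_image (A z₀)
  obtain ⟨ξ, hξ⟩ := exists_dual_det_ne_zero hu
  refine ⟨_, det_mem_polyFn (A := fun z => Matrix.of fun i j => ξ i (A z (u j)))
    (fun i j => hA _ _), hξ, fun z hz => ?_⟩
  simpa using card_le_finrank_range (A z) u (linearIndependent_of_dual_det_ne_zero ξ hz)

/-- If `A` has maximal rank on the line `A + τ B`, then `B` maps `ker A` into the range of `A`. -/
theorem mem_range_of_rank_le [FiniteDimensional ℂ F] (A B : E →ₗ[ℂ] F)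
    (h : ∀ τ : ℂ, Module.finrank ℂ (A + τ • B).range ≤ Module.finrank ℂ A.range)
    {φ : E} (hφ : A φ = 0) : B φ ∈ A.range := by
  by_contra hB
  obtain ⟨u, hu⟩ := exists_linearIndependent_image A
  have hli : LinearIndependent ℂ
      (fun o : Option (Fin (Module.finrank ℂ A.range)) => o.elim (B φ) fun i => A (u i)) := by
    have := (linearIndependent_option'
      (v := fun i => A (u i)) (x := B φ)).2 ⟨hu, fun hmem => hB ?_⟩
    · have he : (fun o : Option (Fin (Module.finrank ℂ A.range)) => o.elim (B φ) fun i => A (u i))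
          = fun o => Option.casesOn' o (B φ) fun i => A (u i) := by
        funext o; cases o <;> rfl
      rwa [he]
    · refine Submodule.span_le.2 ?_ hmem
      rintro _ ⟨i, rfl⟩
      exact ⟨u i, rfl⟩
  obtain ⟨ξ, hξ⟩ := exists_dual_det_ne_zero hli
  let m : ℂ → ℂ := fun τ => (Matrix.of fun i (j : Option (Fin (Module.finrank ℂ A.range))) =>
    ξ i (j.elim (B φ) fun k => (A + τ • B) (u k))).det
  have hm : m ∈ polyFn ℂ := by
    refine det_mem_polyFn fun i j => ?_
    cases j with
    | none => exact const_mem_polyFn (ξ i (B φ))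
    | some k =>
      simp only [Matrix.of_apply, Option.elim, LinearMap.add_apply, LinearMap.smul_apply, map_add,
        map_smul, smul_eq_mul]
      exact add_mem_polyFn (const_mem_polyFn _)
        (mul_mem_polyFn (dual_mem_polyFn LinearMap.id) (const_mem_polyFn _))
  have hm0 : m 0 ≠ 0 := by simpa [m] using hξ
  obtain ⟨τ, hτ⟩ := polyFn_exists_mul_ne_zero hm (dual_mem_polyFn (LinearMap.id : ℂ →ₗ[ℂ] ℂ)) hm0
    (y := 1) (by simp)
  have hτ0 : τ ≠ 0 := by simpa using right_ne_zero_of_mul hτ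
  have key := card_le_finrank_range (A + τ • B)
    (fun o : Option (Fin (Module.finrank ℂ A.range)) => o.elim (τ⁻¹ • φ) u) (by
      have := linearIndependent_of_dual_det_ne_zero ξ (left_ne_zero_of_mul hτ)
      have he : (fun o : Option (Fin (Module.finrank ℂ A.range)) =>
          (A + τ • B) (o.elim (τ⁻¹ • φ) u)) = fun o => o.elim (B φ) fun k => (A + τ • B) (u k) := by
        funext o
        cases o with
        | none => simp [hφ, smul_smul, inv_mul_cancel₀ hτ0]
        | some k => rfl
      rwa [he])
  have := h τ
  simp at key
  omega

end Rank

section Kolchin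

open Matrix.SpecialLinearGroup (transvection transvection_coe)

theorem eq_one_of_image_pow_sq {S : Set ℂ} (hS : S.Finite) (h0 : (0 : ℂ) ∉ S)
    (h : ∀ m : ℕ, 0 < m → (fun z : ℂ => z ^ (m ^ 2)) '' S = S) : ∀ μ ∈ S, μ = 1 := by
  have : Finite S := hS
  have hmap : ∀ μ : S, (μ : ℂ) ^ 4 ∈ S := fun μ => by
    have : (fun z : ℂ => z ^ (2 ^ 2)) '' S ⊆ S := (h 2 (by norm_num)).le
    exact this ⟨μ, μ.2, by norm_num⟩
  let f : S → S := fun μ => ⟨(μ : ℂ) ^ 4, hmap μ⟩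
  have hsurj : Function.Surjective f := by
    rintro ⟨y, hy⟩
    obtain ⟨x, hx, hxy⟩ := (h 2 (by norm_num)).ge hy
    exact ⟨⟨x, hx⟩, Subtype.ext (by simpa [f] using hxy)⟩
  let e : Equiv.Perm S := Equiv.ofBijective f ⟨Finite.injective_iff_surjective.2 hsurj, hsurj⟩
  have hpow : ∀ (p : ℕ) (μ : S), (((e ^ p) μ : S) : ℂ) = (μ : ℂ) ^ (4 ^ p) := by
    intro p
    induction p with
    | zero => intro μ; simp
    | succ p ih =>
      intro μ
      rw [pow_succ, Equiv.Perm.mul_apply, ih]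
      change ((μ : ℂ) ^ 4) ^ 4 ^ p = _
      rw [← pow_mul, pow_succ, mul_comm]
  have hp : 0 < orderOf e := orderOf_pos e
  set p := orderOf e
  have h4 : 4 ^ 1 ≤ 4 ^ p := Nat.pow_le_pow_right (by norm_num) hp
  have hd : ∀ μ ∈ S, μ ^ (4 ^ p - 1) = 1 := by
    intro μ hμ
    have h1 := hpow p ⟨μ, hμ⟩
    rw [pow_orderOf_eq_one] at h1
    have hμ0 : μ ≠ 0 := fun hh => h0 (hh ▸ hμ)
    apply mul_right_cancel₀ hμ0
    rw [← pow_succ, Nat.sub_add_cancel (by omega), one_mul]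
    exact h1.symm
  intro μ hμ
  obtain ⟨x, hx, rfl⟩ := (h (4 ^ p - 1) (by omega)).ge hμ
  simp only [pow_two, pow_mul, hd x hx, one_pow]

variable {n : ℕ}

/-- The one-parameter torus element with entries `m` at `i` and `m⁻¹` at `j`. -/
noncomputable def corootSL (i j : Fin n) (m : ℂ) (hm : m ≠ 0) : SL n :=
  ⟨Matrix.diagonal fun a => (if a = i then m else 1) * (if a = j then m⁻¹ else 1), by
    rw [Matrix.det_diagonal, Finset.prod_mul_distrib]
    simp [hm]⟩

theorem corootSL_mul_transvection {i j : Fin n} (hij : i ≠ j) (m : ℂ) (hm : m ≠ 0) (s : ℂ) :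
    corootSL i j m hm * transvection hij s = transvection hij (m ^ 2 * s) * corootSL i j m hm := by
  apply Subtype.ext
  ext a b
  change (Matrix.diagonal _ * (1 + Matrix.single i j s) : Matrix (Fin n) (Fin n) ℂ) a b
    = ((1 + Matrix.single i j (m ^ 2 * s)) * Matrix.diagonal _ : Matrix (Fin n) (Fin n) ℂ) a b
  simp only [Matrix.diagonal_mul, Matrix.mul_diagonal, Matrix.add_apply, Matrix.one_apply,
    Matrix.single_apply]
  by_cases hab : a = b
  · subst hab
    have : ¬ (i = a ∧ j = a) := fun h => hij (h.1.trans h.2.symm)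
    simp [this]
  · by_cases h : i = a ∧ j = b
    · obtain ⟨rfl, rfl⟩ := h
      simp [hij, hij.symm]
      field_simp
    · simp [hab, h]

variable {W : Type*} [AddCommGroup W] [Module ℂ W]

theorem transvection_pow {i j : Fin n} (hij : i ≠ j) (s : ℂ) (k : ℕ) :
    transvection hij s ^ k = transvection hij (k * s) := by
  induction k with
  | zero => simp
  | succ k ih =>
    rw [pow_succ, ih, ← Matrix.SpecialLinearGroup.transvection_add]
    push_cast
    ring_nf

theorem eigenvalue_transvection [FiniteDimensional ℂ W] (σ : Representation ℂ (SL n) W)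
    {i j : Fin n} (hij : i ≠ j) (s : ℂ) {μ : ℂ}
    (hμ : Module.End.HasEigenvalue (σ (transvection hij s)) μ) : μ = 1 := by
  have hunit : ∀ g : SL n, σ g * σ g⁻¹ = 1 := fun g => by rw [← map_mul]; simp
  have hunit' : ∀ g : SL n, σ g⁻¹ * σ g = 1 := fun g => by rw [← map_mul]; simp
  refine eq_one_of_image_pow_sq (S := spectrum ℂ (σ (transvection hij s)))
    (Module.End.finite_spectrum _) ?_ ?_ μ hμ.mem_spectrum
  · rw [spectrum.zero_mem_iff, not_not]
    exact ⟨⟨_, _, hunit _, hunit' _⟩, rfl⟩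
  · intro m hm
    rw [← spectrum.map_pow_of_pos _ (by positivity), ← map_pow, transvection_pow]
    have hm' : (m : ℂ) ≠ 0 := by exact_mod_cast hm.ne'
    let u : (Module.End ℂ W)ˣ := ⟨σ (corootSL i j m hm'), _, hunit _, hunit' _⟩
    have hc : σ (transvection hij (((m ^ 2 : ℕ) : ℂ) * s))
        = (u : Module.End ℂ W) * σ (transvection hij s) * (u⁻¹ : (Module.End ℂ W)ˣ) := by
      change _ = σ (corootSL i j m hm') * σ (transvection hij s) * σ (corootSL i j m hm')⁻¹
      rw [← map_mul, ← map_mul, corootSL_mul_transvection]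
      push_cast
      congr 1
      group
    rw [hc, spectrum.units_conjugate]

theorem apply_eq_self_of_transvections (σ : Representation ℂ (SL n) W) {w : W}
    (hw : ∀ (i j : Fin n) (hij : i < j) (s : ℂ), σ (transvection hij.ne s) w = w) :
    ∀ g, SLIsUniUpper g → σ g w = w := by
  classical
  suffices H : ∀ (N : ℕ) (g : SL n), SLIsUniUpper g →
      (Finset.univ.filter fun p : Fin n × Fin n => p.1 < p.2 ∧ g.val p.1 p.2 ≠ 0).card = N →
      σ g w = w from fun g hg => H _ g hg rfl
  intro N
  induction N with
  | zero =>
    intro g hg hN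
    have : g = 1 := by
      apply Subtype.ext
      ext a b
      rcases lt_trichotomy a b with h | rfl | h
      · rw [Finset.card_eq_zero, Finset.filter_eq_empty_iff] at hN
        have := @hN (a, b) (Finset.mem_univ _)
        simp only [h, true_and, not_not] at this
        simpa [Matrix.one_apply, h.ne] using this
      · simpa using hg.1 a
      · simpa [Matrix.one_apply, h.ne'] using hg.2 a b h
    simp [this]
  | succ N ih =>
    intro g hg hN
    set T := Finset.univ.filter fun p : Fin n × Fin n => p.1 < p.2 ∧ g.val p.1 p.2 ≠ 0 with hT
    have hne : T.Nonempty := Finset.card_pos.1 (by omega)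
    obtain ⟨⟨i, j⟩, hijT, hmax⟩ := T.exists_max_image (fun p => p.1) hne
    obtain ⟨hij, hgij⟩ : i < j ∧ g.val i j ≠ 0 := (Finset.mem_filter.1 hijT).2
    have hrow : ∀ b, g.val j b = (1 : Matrix (Fin n) (Fin n) ℂ) j b := by
      intro b
      rcases lt_trichotomy j b with h | rfl | h
      · by_contra hb
        have := hmax (j, b) (by simpa [hT, h, Matrix.one_apply, h.ne] using hb)
        exact absurd hij this.not_gt
      · simpa using hg.1 j
      · simpa [Matrix.one_apply, h.ne'] using hg.2 j b h
    set g' := transvection hij.ne (-g.val i j) * g with hg'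
    have hentry : ∀ a b, g'.val a b = if a = i ∧ b = j then 0 else g.val a b := by
      intro a b
      have : g'.val = Matrix.transvection i j (-g.val i j) * g.val := rfl
      rw [this]
      by_cases ha : a = i
      · subst ha
        rw [Matrix.transvection_mul_apply_same, hrow]
        by_cases hb : b = j
        · subst hb; simp
        · simp [hb, Ne.symm hb]
      · rw [Matrix.transvection_mul_apply_of_ne _ _ _ _ ha]
        simp [ha]
    have hg'u : SLIsUniUpper g' := by
      constructor
      · intro a
        rw [hentry, if_neg (by rintro ⟨rfl, h⟩; exact hij.ne h), hg.1]
      · intro a b hab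
        rw [hentry, if_neg (by rintro ⟨rfl, rfl⟩; exact absurd hij hab.not_gt), hg.2 a b hab]
    have hcard : (Finset.univ.filter fun p : Fin n × Fin n => p.1 < p.2 ∧ g'.val p.1 p.2 ≠ 0)
        = T.erase (i, j) := by
      ext ⟨a, b⟩
      simp only [hT, Finset.mem_filter, Finset.mem_univ, true_and, Finset.mem_erase, hentry,
        Prod.mk.injEq, ne_eq]
      by_cases h : a = i ∧ b = j <;> simp [h]
    have := ih g' hg'u (by rw [hcard, Finset.card_erase_of_mem hijT]; omega)
    have hgg : g = transvection hij.ne (g.val i j) * g' := by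
      rw [hg', ← mul_assoc, Matrix.SpecialLinearGroup.transvection_mul_neg, one_mul]
    rw [hgg, map_mul, Module.End.mul_apply, this, hw i j hij]

theorem transvection_comm_snd {i j k : Fin n} (hij : i ≠ j) (hjk : j ≠ k) (hik : i ≠ k) (s t : ℂ) :
    transvection hij s * transvection hjk t
      = transvection hik (s * t) * (transvection hjk t * transvection hij s) := by
  apply Subtype.ext
  simp [transvection_coe, add_mul, mul_add, Matrix.single_mul_single_of_ne, hjk.symm,
    hik.symm]
  abel

theorem transvection_comm_of_ne {i j k l : Fin n} (hij : i ≠ j) (hkl : k ≠ l) (hjk : j ≠ k)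
    (hli : l ≠ i) (s t : ℂ) :
    transvection hij s * transvection hkl t = transvection hkl t * transvection hij s := by
  apply Subtype.ext
  simp [transvection_coe, add_mul, mul_add, Matrix.single_mul_single_of_ne, hjk, hli]
  abel

/-- A nonzero stable subspace of a finite-dimensional representation of `SL(n)` contains a nonzero
vector fixed by the upper triangular unipotent matrices. -/
theorem exists_uniUpper_fixed [FiniteDimensional ℂ W] (σ : Representation ℂ (SL n) W)
    (p : Submodule ℂ W) (hp : p ≠ ⊥) (hstab : ∀ g, ∀ w ∈ p, σ g w ∈ p) :
    ∃ w ∈ p, w ≠ 0 ∧ ∀ g, SLIsUniUpper g → σ g w = w := by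
  obtain ⟨q, ⟨hqp, hq0, hqs⟩, hmin⟩ := IsArtinian.set_has_minimal
    {q : Submodule ℂ W | q ≤ p ∧ q ≠ ⊥ ∧ ∀ (i j : Fin n) (hij : i < j) (s : ℂ), ∀ w ∈ q,
      σ (transvection hij.ne s) w ∈ q} ⟨p, le_rfl, hp, fun i j hij s w hw => hstab _ w hw⟩
  have key : ∀ d : ℕ, ∀ (i j : Fin n) (hij : i < j), n ≤ (j : ℕ) - i + d → ∀ (s : ℂ), ∀ w ∈ q,
      σ (transvection hij.ne s) w = w := by
    intro d
    induction d with
    | zero => intro i j hij h; omega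
    | succ d ih =>
      intro i j hij h s
      set A := σ (transvection hij.ne s) with hA
      let q' : Submodule ℂ W := q ⊓ LinearMap.ker (A - 1)
      have hmem : ∀ w, w ∈ q' ↔ w ∈ q ∧ A w = w := fun w => by
        simp [q', LinearMap.mem_ker, sub_eq_zero]
      have hq'0 : q' ≠ ⊥ := by
        have hAq : ∀ w ∈ q, A w ∈ q := hqs i j hij s
        have : Nontrivial q := Submodule.nontrivial_iff_ne_bot.2 hq0
        obtain ⟨μ, hμ⟩ := Module.End.exists_eigenvalue (A.restrict hAq)
        obtain ⟨v, hv⟩ := hμ.exists_hasEigenvector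
        have hAv : A v = μ • (v : W) := congrArg Subtype.val hv.apply_eq_smul
        have hv0 : (v : W) ≠ 0 := fun h => hv.2 (Subtype.ext h)
        have hμ1 : μ = 1 := eigenvalue_transvection σ hij.ne s
          (Module.End.hasEigenvalue_of_hasEigenvector
            ⟨Module.End.mem_eigenspace_iff.2 hAv, hv0⟩)
        intro hbot
        have : (v : W) ∈ q' := (hmem _).2 ⟨v.2, by rw [hAv, hμ1, one_smul]⟩
        rw [hbot] at this
        exact hv0 (by simpa using this)
      have hq's : ∀ (k l : Fin n) (hkl : k < l) (t : ℂ), ∀ w ∈ q',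
          σ (transvection hkl.ne t) w ∈ q' := by
        intro k l hkl t w hw
        obtain ⟨hwq, hAw⟩ := (hmem w).1 hw
        have hXq := hqs k l hkl t w hwq
        refine (hmem _).2 ⟨hXq, ?_⟩
        by_cases hjk : j = k
        · subst hjk
          have := transvection_comm_snd hij.ne hkl.ne (hij.trans hkl).ne s t
          rw [hA, ← Module.End.mul_apply, ← map_mul, this, map_mul, map_mul, Module.End.mul_apply,
            Module.End.mul_apply, ← hA, hAw]
          exact ih i l (hij.trans hkl) (by omega) _ _ hXq
        · by_cases hli : l = i
          · subst hli
            have := transvection_comm_snd hkl.ne hij.ne (hkl.trans hij).ne t s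
            have h2 := congrArg (fun g => σ g w) this
            simp only [map_mul, Module.End.mul_apply, ← hA, hAw] at h2
            exact (h2.trans (ih k j (hkl.trans hij) (by omega) _ _ (hqs _ _ hij s _ hXq))).symm
          · have := transvection_comm_of_ne hij.ne hkl.ne hjk hli s t
            rw [hA, ← Module.End.mul_apply, ← map_mul, this, map_mul, Module.End.mul_apply, ← hA,
              hAw]
      have hle : q' ≤ q := inf_le_left
      have heq : q' = q := by
        by_contra hne
        exact hmin q' ⟨hle.trans hqp, hq'0, hq's⟩ (lt_of_le_of_ne hle hne)
      intro w hw
      exact ((hmem w).1 (heq ▸ hw)).2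
  obtain ⟨w, hw, hw0⟩ := Submodule.exists_mem_ne_zero_of_ne_bot hq0
  exact ⟨w, hqp hw, hw0, apply_eq_self_of_transvections σ fun i j hij s =>
    key n i j hij (by omega) s w hw⟩

end Kolchin

section Flag

variable {n : ℕ}

/-- Extension of a weight by zero. -/
def weightExt (l : Fin n → ℕ) (k : ℕ) : ℕ := if h : k < n then l ⟨k, h⟩ else 0

theorem weightExt_anti {l : Fin n → ℕ} (hl : IsPartition l) (k : ℕ) :
    weightExt l (k + 1) ≤ weightExt l k := by
  unfold weightExt
  split_ifs with h1 h2
  · exact hl _ _ (by simp [Fin.le_def])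
  · omega
  all_goals exact Nat.zero_le _

/-- The matrix whose upper left `k × k` block agrees with `g`, completed by the identity. -/
def truncMat (k : ℕ) (g : Matrix (Fin n) (Fin n) ℂ) : Matrix (Fin n) (Fin n) ℂ :=
  Matrix.of fun a b => if (a : ℕ) < k ∧ (b : ℕ) < k then g a b else if a = b then 1 else 0

theorem truncMat_mul {k : ℕ} {b g : Matrix (Fin n) (Fin n) ℂ} (hb : ∀ i j, i < j → b i j = 0) :
    truncMat k (b * g) = truncMat k b * truncMat k g := by
  ext i j
  rw [Matrix.mul_apply]
  by_cases hi : (i : ℕ) < k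
  · by_cases hj : (j : ℕ) < k
    · simp only [truncMat, Matrix.of_apply, hi, hj, and_self, if_true, true_and, and_true,
        Matrix.mul_apply]
      refine Finset.sum_congr rfl fun c _ => ?_
      by_cases hc : (c : ℕ) < k
      · simp [hc]
      · have h1 : i < c := Fin.lt_def.2 (by omega)
        simp [hc, hb i c h1, h1.ne]
    · have : ∀ c, truncMat k g c j = if c = j then 1 else 0 := fun c => by simp [truncMat, hj]
      simp [this]
      simp [truncMat, hj]
  · have : ∀ c, truncMat k b i c = if i = c then 1 else 0 := fun c => by simp [truncMat, hi]
    simp [this]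
    simp [truncMat, hi]

theorem det_truncMat_of_lower {k : ℕ} {b : Matrix (Fin n) (Fin n) ℂ}
    (hb : ∀ i j, i < j → b i j = 0) :
    (truncMat k b).det = ∏ j : Fin n, if (j : ℕ) < k then b j j else 1 := by
  rw [Matrix.det_of_isLowerTriangular]
  · simp [truncMat]
  · intro i j hij
    have hij' : i < j := hij
    simp [truncMat, hb i j hij', hij'.ne]

/-- The semi-invariant polynomial function on matrices attached to a partition. -/
def flagMinor (l : Fin n → ℕ) (g : Matrix (Fin n) (Fin n) ℂ) : ℂ :=
  ∏ k ∈ Finset.range n, (truncMat (k + 1) g).det ^ (weightExt l k - weightExt l (k + 1))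

theorem flagMinor_mem_polyFn (l : Fin n → ℕ) : flagMinor l ∈ polyFn (Matrix (Fin n) (Fin n) ℂ) := by
  refine prod_mem_polyFn fun k _ => pow_mem_polyFn (det_mem_polyFn fun i j => ?_) _
  simp only [truncMat, Matrix.of_apply]
  split_ifs
  · exact dual_mem_polyFn (Matrix.entryLinearMap ℂ ℂ i j)
  · exact const_mem_polyFn 1
  · exact const_mem_polyFn 0

theorem flagMinor_one (l : Fin n → ℕ) : flagMinor l 1 = 1 := by
  have : ∀ k, truncMat k (1 : Matrix (Fin n) (Fin n) ℂ) = 1 := fun k => by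
    ext i j
    simp only [truncMat, Matrix.of_apply, Matrix.one_apply]
    split_ifs <;> rfl
  simp [flagMinor, this]

theorem sum_weight_sub {L : ℕ → ℕ} (hL : ∀ k, L (k + 1) ≤ L k) {j N : ℕ} (h : j ≤ N) :
    (∑ k ∈ Finset.range N, if j ≤ k then L k - L (k + 1) else 0) + L N = L j := by
  induction N, h using Nat.le_induction with
  | base =>
    rw [Finset.sum_eq_zero, zero_add]
    intro k hk
    rw [if_neg (by simpa using hk)]
  | succ N hN ih =>
    rw [Finset.sum_range_succ, if_pos hN]
    have := hL N
    omega

theorem flagMinor_lower_mul {l : Fin n → ℕ} (hl : IsPartition l) {b : Matrix (Fin n) (Fin n) ℂ}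
    (hb : ∀ i j, i < j → b i j = 0) (g : Matrix (Fin n) (Fin n) ℂ) :
    flagMinor l (b * g) = (∏ j, b j j ^ l j) * flagMinor l g := by
  simp only [flagMinor, truncMat_mul hb, Matrix.det_mul, mul_pow, Finset.prod_mul_distrib]
  congr 1
  simp only [det_truncMat_of_lower hb, ← Finset.prod_pow]
  rw [Finset.prod_comm]
  refine Finset.prod_congr rfl fun j _ => ?_
  have h1 : ∀ k, (if (j : ℕ) < k + 1 then b j j else 1) ^ (weightExt l k - weightExt l (k + 1))
      = b j j ^ (if (j : ℕ) ≤ k then weightExt l k - weightExt l (k + 1) else 0) := by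
    intro k
    by_cases h : (j : ℕ) ≤ k
    · simp [h]
    · simp [h]
  simp only [h1]
  rw [Finset.prod_pow_eq_pow_sum]
  have := sum_weight_sub (weightExt_anti hl) j.2.le
  congr 1
  simpa [weightExt] using this

theorem flagMinor_transpose (l : Fin n → ℕ) (g : Matrix (Fin n) (Fin n) ℂ) :
    flagMinor l g.transpose = flagMinor l g := by
  have : ∀ k, truncMat k g.transpose = (truncMat k g).transpose := fun k => by
    ext i j
    simp only [truncMat, Matrix.of_apply, Matrix.transpose_apply, and_comm, eq_comm]
  simp [flagMinor, this, Matrix.det_transpose]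

theorem flagMinor_mul_upper {l : Fin n → ℕ} (hl : IsPartition l) {b : Matrix (Fin n) (Fin n) ℂ}
    (hb : ∀ i j, j < i → b i j = 0) (g : Matrix (Fin n) (Fin n) ℂ) :
    flagMinor l (g * b) = (∏ j, b j j ^ l j) * flagMinor l g := by
  rw [← flagMinor_transpose, Matrix.transpose_mul, flagMinor_lower_mul (b :=
    b.transpose) hl (fun i j h => hb j i h),
    flagMinor_transpose]
  simp

/-- The left translates of `h` span a finite-dimensional space. -/
def FinTranslates (h : SL n → ℂ) : Prop :=
  ∃ S : Submodule ℂ (SL n → ℂ), S.FG ∧ ∀ x : SL n, (fun g => h (x * g)) ∈ S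

theorem FinTranslates.sub_smul {h h' : SL n → ℂ} (H : FinTranslates h) (H' : FinTranslates h')
    (c : ℂ) : FinTranslates (fun g => h g - c * h' g) := by
  obtain ⟨S, hS, h1⟩ := H
  obtain ⟨S', hS', h1'⟩ := H'
  refine ⟨S ⊔ S', hS.sup hS', fun x => ?_⟩
  exact sub_mem (Submodule.mem_sup_left (h1 x)) (Submodule.mem_sup_right (S'.smul_mem c (h1' x)))

theorem finTranslates_polyFn {f : Matrix (Fin n) (Fin n) ℂ → ℂ}
    (hf : f ∈ polyFn (Matrix (Fin n) (Fin n) ℂ)) : FinTranslates fun g : SL n => f g.val := by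
  induction hf using Algebra.adjoin_induction with
  | mem f hf =>
    obtain ⟨ξ, rfl⟩ := hf
    let R : Module.Dual ℂ (Matrix (Fin n) (Fin n) ℂ) →ₗ[ℂ] (SL n → ℂ) :=
      { toFun := fun ξ g => ξ g.val, map_add' := fun _ _ => rfl, map_smul' := fun _ _ => rfl }
    refine ⟨LinearMap.range R, ?_, fun x => ⟨ξ.comp (LinearMap.mulLeft ℂ x.val), rfl⟩⟩
    exact Module.Finite.iff_fg.1 inferInstance
  | algebraMap r =>
    exact ⟨Submodule.span ℂ {fun _ => r}, ⟨{fun _ => r}, by simp⟩, fun x =>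
      Submodule.subset_span rfl⟩
  | add f f' _ _ h h' =>
    obtain ⟨S, hS, h⟩ := h
    obtain ⟨S', hS', h'⟩ := h'
    exact ⟨S ⊔ S', hS.sup hS', fun x =>
      add_mem (Submodule.mem_sup_left (h x)) (Submodule.mem_sup_right (h' x))⟩
  | mul f f' _ _ h h' =>
    obtain ⟨S, hS, h⟩ := h
    obtain ⟨S', hS', h'⟩ := h'
    exact ⟨S * S', hS.mul hS', fun x => Submodule.mul_mem_mul (h x) (h' x)⟩

theorem finTranslates_coeff {V : Type*} [AddCommGroup V] [Module ℂ V] [FiniteDimensional ℂ V]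
    (ρ : Representation ℂ (SL n) V) (φ : Module.Dual ℂ V) (v : V) :
    FinTranslates fun g => φ (ρ g v) := by
  let R : Module.Dual ℂ V →ₗ[ℂ] (SL n → ℂ) :=
    { toFun := fun ξ g => ξ (ρ g v), map_add' := fun _ _ => rfl, map_smul' := fun _ _ => rfl }
  refine ⟨LinearMap.range R, Module.Finite.iff_fg.1 inferInstance, fun x => ⟨φ.comp (ρ x), ?_⟩⟩
  funext g
  simp [R]

open Matrix.SpecialLinearGroup (transvection transvection_coe)

/-- A row of a matrix can be cleared to the right of its nonzero diagonal entry. -/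
theorem exists_uniUpper_clear_row (g : SL n) (k : Fin n) (hk : g.val k k ≠ 0)
    (hg : ∀ i < k, g.val i i ≠ 0 ∧ ∀ j, i < j → g.val i j = 0) :
    ∃ u : SL n, SLIsUniUpper u ∧
      ∀ i ≤ k, (g * u).val i i ≠ 0 ∧ ∀ j, i < j → (g * u).val i j = 0 := by
  let w : Fin n → ℂ := fun j => if k < j then -(g.val k j / g.val k k) else 0
  let U : Matrix (Fin n) (Fin n) ℂ := Matrix.of fun a b =>
    (if a = b then 1 else 0) + (if a = k then w b else 0)
  have hUd : ∀ i, U i i = 1 := fun i => by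
    by_cases h : i = k <;> simp [U, w, h]
  have hUl : ∀ i j, j < i → U i j = 0 := fun i j hij => by
    by_cases h : i = k
    · subst h; simp [U, w, hij.ne', hij.not_gt]
    · simp [U, h, hij.ne']
  have hdet : U.det = 1 := by
    rw [Matrix.det_of_isUpperTriangular (fun i j hij => hUl i j hij)]
    simp [hUd]
  let u : SL n := ⟨U, hdet⟩
  have hgu : ∀ i j, (g * u).val i j = g.val i j + g.val i k * w j := fun i j => by
    change (g.val * U) i j = _
    simp [Matrix.mul_apply, U, mul_add, Finset.sum_add_distrib]
  refine ⟨u, ⟨hUd, hUl⟩, fun i hi => ?_⟩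
  rcases hi.lt_or_eq with hi | rfl
  · have h0 := (hg i hi).2 k hi
    exact ⟨by simpa [hgu, h0] using (hg i hi).1, fun j hj => by
      simpa [hgu, h0] using (hg i hi).2 j hj⟩
  · refine ⟨by simpa [hgu, w] using hk, fun j hj => ?_⟩
    simp only [hgu, w, hj, if_true]
    field_simp
    ring

theorem exists_translate_ne_zero {h : SL n → ℂ} (hfin : FinTranslates h) {i k : Fin n}
    (hki : k ≠ i) {g : SL n} (hg : h g ≠ 0) : ∃ a : ℂ, a ≠ 0 ∧ h (transvection hki a * g) ≠ 0 := by
  by_contra! hcon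
  obtain ⟨S, hS, hmem⟩ := hfin
  have : Module.Finite ℂ S := Module.Finite.iff_fg.2 hS
  let H : ℂ → S := fun b => ⟨fun y => h (transvection hki b * y), hmem _⟩
  have hli : LinearIndependent ℂ H := by
    rw [linearIndependent_iff']
    intro s c hc b hb
    have h1 := congrFun (congrArg Subtype.val hc) (transvection hki (-b) * g)
    simp only [H, Submodule.coe_sum, Finset.sum_apply, Submodule.coe_smul, Pi.smul_apply,
      smul_eq_mul, ← mul_assoc, ← Matrix.SpecialLinearGroup.transvection_add, ZeroMemClass.coe_zero,
      Pi.zero_apply] at h1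
    rw [Finset.sum_eq_single b] at h1
    · simpa [hg] using h1
    · intro b' _ hb'
      rw [hcon _ (by rwa [← sub_eq_add_neg, sub_ne_zero]), mul_zero]
    · exact fun hb' => absurd hb hb'
  exact Module.Finite.not_linearIndependent_of_infinite H hli

/-- A bi-invariant function under opposite unipotent groups that vanishes on the torus and has
finite-dimensional span of translates vanishes identically. -/
theorem eq_zero_of_biinvariant {h : SL n → ℂ}
    (hleft : ∀ u : SL n, SLIsUniUpper u.transpose → ∀ g, h (u * g) = h g)
    (hright : ∀ u : SL n, SLIsUniUpper u → ∀ g, h (g * u) = h g)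
    (hdiag : ∀ t : SL n, SLIsDiag t → h t = 0) (hfin : FinTranslates h) (g : SL n) : h g = 0 := by
  by_contra hg
  have key : ∀ k : ℕ, k ≤ n → ∃ g : SL n, h g ≠ 0 ∧
      ∀ i : Fin n, (i : ℕ) < k → g.val i i ≠ 0 ∧ ∀ j, i < j → g.val i j = 0 := by
    intro k
    induction k with
    | zero => exact fun _ => ⟨g, hg, fun i hi => absurd hi (by omega)⟩
    | succ k ih =>
      intro hk
      obtain ⟨g, hg, hT⟩ := ih (by omega)
      set κ : Fin n := ⟨k, hk⟩ with hκ
      have main : ∀ g : SL n, h g ≠ 0 → g.val κ κ ≠ 0 →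
          (∀ i < κ, g.val i i ≠ 0 ∧ ∀ j, i < j → g.val i j = 0) → ∃ g : SL n, h g ≠ 0 ∧
          ∀ i : Fin n, (i : ℕ) < k + 1 → g.val i i ≠ 0 ∧ ∀ j, i < j → g.val i j = 0 := by
        intro g hg hgk hT
        obtain ⟨u, hu, hgu⟩ := exists_uniUpper_clear_row g κ hgk hT
        exact ⟨g * u, by rwa [hright u hu], fun i hi => hgu i (Fin.le_def.2 (by simp [hκ]; omega))⟩
      have hT' : ∀ i < κ, g.val i i ≠ 0 ∧ ∀ j, i < j → g.val i j = 0 := fun i hi => hT i hi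
      by_cases hgk : g.val κ κ = 0
      · obtain ⟨i, hi, hgi⟩ : ∃ i, κ < i ∧ g.val i κ ≠ 0 := by
          by_contra! hcon
          have hdet : g.val.det = 0 := Matrix.det_eq_zero_of_column_eq_zero κ fun i => by
            rcases lt_trichotomy i κ with hi | rfl | hi
            · exact (hT' i hi).2 _ hi
            · exact hgk
            · exact hcon i hi
          have := g.2
          rw [hdet] at this
          exact zero_ne_one this
        obtain ⟨a, ha, hga⟩ := exists_translate_ne_zero hfin hi.ne hg
        refine main _ hga ?_ fun j hj => ?_
        · change (Matrix.transvection κ i a * g.val) κ κ ≠ 0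
          rw [Matrix.transvection_mul_apply_same, hgk, zero_add]
          exact mul_ne_zero ha hgi
        · have : ∀ l, (transvection hi.ne a * g).val j l = g.val j l := fun l =>
            Matrix.transvection_mul_apply_of_ne _ _ _ _ hj.ne _ _
          simpa only [this] using hT' j hj
      · exact main g hg hgk hT'
  obtain ⟨g, hg, hT⟩ := key n le_rfl
  have hdet : ∏ i, g.val i i = 1 := by
    exact (Matrix.det_of_isLowerTriangular (M := g.val) fun i j hij =>
      (hT i i.2).2 j hij).symm.trans g.2
  let t : SL n := ⟨Matrix.diagonal fun i => g.val i i, by rw [Matrix.det_diagonal, hdet]⟩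
  let s : SL n := ⟨Matrix.diagonal fun i => (g.val i i)⁻¹, by
    rw [Matrix.det_diagonal, Finset.prod_inv_distrib, hdet, inv_one]⟩
  have hst : s * t = 1 := by
    apply Subtype.ext
    change Matrix.diagonal _ * Matrix.diagonal _ = (1 : Matrix (Fin n) (Fin n) ℂ)
    rw [Matrix.diagonal_mul_diagonal, ← Matrix.diagonal_one]
    congr 1
    funext i
    exact inv_mul_cancel₀ (hT i i.2).1
  have hu : SLIsUniUpper (g * s).transpose := by
    have hgs : ∀ i j, (g * s).transpose.val i j = g.val j i * (g.val i i)⁻¹ := fun i j => by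
      change (g.val * Matrix.diagonal fun i => (g.val i i)⁻¹) j i = _
      rw [Matrix.mul_diagonal]
    exact ⟨fun i => by rw [hgs, mul_inv_cancel₀ (hT i i.2).1], fun i j hij => by
      rw [hgs, (hT j j.2).2 i hij, zero_mul]⟩
  apply hg
  have h1 := hleft _ hu t
  rw [mul_assoc, hst, mul_one] at h1
  rw [h1]
  refine hdiag t fun i j hij => ?_
  simp [t, hij]

theorem span_orbit_eq_top {V : Type*} [AddCommGroup V] [Module ℂ V]
    {ρ : Representation ℂ (SL n) V} (hirr : RepIsIrreducible ρ) {v : V} (hv : v ≠ 0) :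
    Submodule.span ℂ (Set.range fun g => ρ g v) = ⊤ := by
  refine (hirr.2 _ fun g x hx => ?_).resolve_left fun hb => ?_
  · induction hx using Submodule.span_induction with
    | mem x hx =>
      obtain ⟨h, rfl⟩ := hx
      exact Submodule.subset_span ⟨g * h, by simp⟩
    | zero => simp
    | add x y _ _ hx hy => rw [map_add]; exact add_mem hx hy
    | smul c x _ hx => rw [map_smul]; exact Submodule.smul_mem _ _ hx
  · have : v ∈ (⊥ : Submodule ℂ V) := hb ▸ Submodule.subset_span ⟨1, by simp⟩
    exact hv (by simpa using this)

/-- The highest weight matrix coefficient of an irreducible representation. -/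
theorem exists_dual_eq_flagMinor {V : Type*} [AddCommGroup V] [Module ℂ V] [FiniteDimensional ℂ V]
    {ρ : Representation ℂ (SL n) V} (hirr : RepIsIrreducible ρ) {l : Fin n → ℕ} (hl : IsPartition l)
    {v : V} (hv : IsHWVector ρ (fun j => (l j : ℤ)) v) :
    ∃ φ : Module.Dual ℂ V, ∀ g : SL n, φ (ρ g v) = flagMinor l g.val := by
  obtain ⟨hv0, hvU, hvT⟩ := hv
  have hmulT : ∀ g h : SL n, (g * h).transpose = h.transpose * g.transpose := fun g h =>
    Subtype.ext (Matrix.transpose_mul _ _)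
  have hTT : ∀ g : SL n, g.transpose.transpose = g :=
    fun g => Subtype.ext (Matrix.transpose_transpose _)
  let ρ' : Representation ℂ (SL n) (Module.Dual ℂ V) :=
    { toFun := fun g => (ρ g.transpose).dualMap
      map_one' := by
        have : (1 : SL n).transpose = 1 := Subtype.ext Matrix.transpose_one
        ext; simp [this]
      map_mul' := fun g h => by ext; simp [hmulT] }
  have hnt : Nontrivial V := ⟨v, 0, hv0⟩
  obtain ⟨φ, -, hφ0, hφ⟩ := exists_uniUpper_fixed ρ' ⊤ (by exact top_ne_bot) (fun _ _ _ => trivial)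
  have hφ' : ∀ u : SL n, SLIsUniUpper u.transpose → ∀ w, φ (ρ u w) = φ w := fun u hu w => by
    have := LinearMap.congr_fun (hφ _ hu) w
    simpa [ρ', hTT] using this
  have hφv : φ v ≠ 0 := by
    intro h0
    have hz : ∀ g, φ (ρ g v) = 0 := eq_zero_of_biinvariant
      (fun u hu g => by simp [hφ' u hu]) (fun u hu g => by simp [hvU u hu])
      (fun t ht => by simp [hvT t ht, h0]) (finTranslates_coeff ρ φ v)
    apply hφ0
    ext w
    have hw : w ∈ Submodule.span ℂ (Set.range fun g => ρ g v) := by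
      rw [span_orbit_eq_top hirr hv0]; trivial
    have : Submodule.span ℂ (Set.range fun g => ρ g v) ≤ LinearMap.ker φ :=
      Submodule.span_le.2 (by rintro _ ⟨g, rfl⟩; exact hz g)
    exact this hw
  refine ⟨(φ v)⁻¹ • φ, fun g => ?_⟩
  have := eq_zero_of_biinvariant
    (h := fun g => ((φ v)⁻¹ • φ) (ρ g v) - 1 * flagMinor l g.val) ?_ ?_ ?_
    ((finTranslates_coeff ρ _ v).sub_smul (finTranslates_polyFn (flagMinor_mem_polyFn l)) 1) g
  · simpa [sub_eq_zero] using this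
  · intro u hu g
    have h1 : flagMinor l (u * g).val = flagMinor l g.val := by
      change flagMinor l (u.val * g.val) = _
      rw [flagMinor_lower_mul (b := u.val) hl (fun i j hij => hu.2 j i hij)]
      have : ∀ i, u.val i i = 1 := hu.1
      simp [this]
    simp only [h1, map_mul, Module.End.mul_apply, LinearMap.smul_apply, hφ' u hu]
  · intro u hu g
    have h1 : flagMinor l (g * u).val = flagMinor l g.val := by
      change flagMinor l (g.val * u.val) = _
      rw [flagMinor_mul_upper hl hu.2]
      simp [hu.1]
    simp only [h1, map_mul, Module.End.mul_apply, hvU u hu]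
  · intro t ht
    have h1 : flagMinor l t.val = ∏ j, t.val j j ^ l j := by
      rw [← mul_one t.val, flagMinor_lower_mul hl (fun i j hij => ht i j hij.ne), flagMinor_one]
      simp
    simp only [hvT t ht, h1, map_smul, LinearMap.smul_apply, smul_eq_mul, zpow_natCast]
    field_simp
    ring

end Flag

section BorelWeil

open Matrix ComplexConjugate
open scoped ComplexOrder

variable {n : ℕ}

/-- Every polynomial function on matrices is a matrix coefficient of a polynomial
`*`-representation of the monoid of matrices. -/
theorem exists_star_rep_of_polyFn {f : Matrix (Fin n) (Fin n) ℂ → ℂ}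
    (hf : f ∈ polyFn (Matrix (Fin n) (Fin n) ℂ)) :
    ∃ (A : Type) (_ : Fintype A) (_ : DecidableEq A)
      (K : Matrix (Fin n) (Fin n) ℂ →* Matrix A A ℂ) (c : Matrix A A ℂ),
      (∀ h, K hᴴ = (K h)ᴴ) ∧
      (∀ a b, (fun g => K g a b) ∈ polyFn (Matrix (Fin n) (Fin n) ℂ)) ∧
      ∀ g, f g = (c * K g).trace := by
  induction hf using Algebra.adjoin_induction with
  | mem f hf =>
    obtain ⟨ξ, rfl⟩ := hf
    refine ⟨Fin n, inferInstance, inferInstance, MonoidHom.id _,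
      Matrix.of fun j i => ξ (Matrix.single i j 1), fun h => rfl,
      fun a b => dual_mem_polyFn (Matrix.entryLinearMap ℂ ℂ a b), fun g => ?_⟩
    conv_lhs => rw [Matrix.matrix_eq_sum_single g]
    simp only [map_sum, Matrix.trace, Matrix.diag_apply, Matrix.mul_apply, Matrix.of_apply,
      MonoidHom.id_apply]
    rw [Finset.sum_comm]
    refine Finset.sum_congr rfl fun i _ => Finset.sum_congr rfl fun j _ => ?_
    rw [show Matrix.single j i (g j i) = g j i • Matrix.single j i (1 : ℂ) by simp, map_smul,
      smul_eq_mul, mul_comm]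
  | algebraMap r =>
    exact ⟨Unit, inferInstance, inferInstance, 1, r • 1, fun h => by simp,
      fun a b => const_mem_polyFn _, fun g => by simp⟩
  | add f f' _ _ h h' =>
    obtain ⟨A, _, _, K, c, hK, hp, hc⟩ := h
    obtain ⟨A', _, _, K', c', hK', hp', hc'⟩ := h'
    refine ⟨A ⊕ A', inferInstance, inferInstance,
      { toFun := fun g => Matrix.fromBlocks (K g) 0 0 (K' g)
        map_one' := by simp
        map_mul' := fun g h => by simp [Matrix.fromBlocks_multiply] },
      Matrix.fromBlocks c 0 0 c', fun h => ?_, fun a b => ?_, fun g => ?_⟩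
    · simp [Matrix.fromBlocks_conjTranspose, hK, hK']
    · rcases a with a | a <;> rcases b with b | b
      · exact hp a b
      · exact const_mem_polyFn 0
      · exact const_mem_polyFn 0
      · exact hp' a b
    · simp [Matrix.fromBlocks_multiply, Matrix.trace, Fintype.sum_sum_type, hc, hc']
  | mul f f' _ _ h h' =>
    obtain ⟨A, _, _, K, c, hK, hp, hc⟩ := h
    obtain ⟨A', _, _, K', c', hK', hp', hc'⟩ := h'
    refine ⟨A × A', inferInstance, inferInstance,
      { toFun := fun g => Matrix.kroneckerMap (· * ·) (K g) (K' g)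
        map_one' := by rw [map_one, map_one]; exact Matrix.one_kronecker_one
        map_mul' := fun g h => by
          rw [map_mul, map_mul]; exact Matrix.mul_kronecker_mul _ _ _ _ },
      Matrix.kroneckerMap (· * ·) c c', fun h => ?_, fun a b => ?_, fun g => ?_⟩
    · ext ⟨a, a'⟩ ⟨b, b'⟩
      simp [hK, hK', Matrix.conjTranspose_apply]
    · exact mul_mem_polyFn (hp a.1 b.1) (hp' a.2 b.2)
    · have := Matrix.mul_kronecker_mul c (K g) c' (K' g)
      simp only [MonoidHom.coe_mk, OneHom.coe_mk, Pi.mul_apply, hc, hc']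
      exact (Matrix.trace_kronecker _ _).symm.trans (congrArg Matrix.trace this)

theorem exists_sub_orthogonal {ι : Type*} [Fintype ι] (P : Submodule ℂ (ι → ℂ)) (c : ι → ℂ) :
    ∃ p ∈ P, ∀ q ∈ P, ∑ i, conj (q i) * (c i - p i) = 0 := by
  let e := WithLp.linearEquiv 2 ℂ (ι → ℂ)
  obtain ⟨y, hy, z, hz, hyz⟩ := (P.comap e.toLinearMap).exists_add_mem_mem_orthogonal (e.symm c)
  refine ⟨e y, hy, fun q hq => ?_⟩
  have h1 := hz (e.symm q) (by simpa using hq)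
  have hz' : ∀ i, e z i = c i - e y i := fun i => by
    have : c = e y + e z := by rw [← map_add, ← hyz]; simp
    rw [this]; simp
  rw [PiLp.inner_apply] at h1
  rw [← h1]
  refine Finset.sum_congr rfl fun i _ => ?_
  rw [← hz' i]
  simp [e, mul_comm]

theorem exists_sub_orthogonal_matrix {A : Type*} [Fintype A] (P : Submodule ℂ (Matrix A A ℂ))
    (c : Matrix A A ℂ) : ∃ p ∈ P, ∀ q ∈ P, (qᴴ * (c - p)).trace = 0 := by
  let e : (A × A → ℂ) →ₗ[ℂ] Matrix A A ℂ :=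
    { toFun := fun x => Matrix.of fun a b => x (a, b)
      map_add' := fun _ _ => rfl
      map_smul' := fun _ _ => rfl }
  obtain ⟨p, hp, h⟩ := exists_sub_orthogonal (P.comap e) fun x => c x.1 x.2
  refine ⟨e p, hp, fun q hq => ?_⟩
  have := h (fun x => q x.1 x.2) hq
  rw [← this, Fintype.sum_prod_type, Finset.sum_comm]
  simp [Matrix.trace, Matrix.mul_apply, Matrix.conjTranspose_apply, e]
  rfl

theorem apply_lower {V : Type*} [AddCommGroup V] [Module ℂ V] {ρ : Representation ℂ (SL n) V}
    (hirr : RepIsIrreducible ρ) {l : Fin n → ℕ} (hl : IsPartition l) {v : V} (hv : v ≠ 0)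
    {φ : Module.Dual ℂ V} (hφ : ∀ g : SL n, φ (ρ g v) = flagMinor l g.val)
    {b : SL n} (hb : ∀ i j, i < j → b.val i j = 0) (w : V) :
    φ (ρ b w) = (∏ j, b.val j j ^ l j) * φ w := by
  have hw : w ∈ Submodule.span ℂ (Set.range fun g => ρ g v) := by
    rw [span_orbit_eq_top hirr hv]; trivial
  induction hw using Submodule.span_induction with
  | mem x hx =>
    obtain ⟨g, rfl⟩ := hx
    have : φ (ρ b (ρ g v)) = φ (ρ (b * g) v) := by simp
    simp only [this, hφ]
    exact flagMinor_lower_mul hl hb g.val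
  | zero => simp
  | add x y _ _ hx hy => rw [map_add, map_add, map_add, hx, hy, mul_add]
  | smul c x _ hx => rw [map_smul, map_smul, map_smul, hx, smul_eq_mul, smul_eq_mul, mul_left_comm]

/-- A left semi-invariant polynomial function is a matrix coefficient of the irreducible
representation. -/
theorem exists_coeff_of_semiinvariant {V : Type*} [AddCommGroup V] [Module ℂ V]
    {ρ : Representation ℂ (SL n) V}
    (hirr : RepIsIrreducible ρ) {l : Fin n → ℕ} (hl : IsPartition l) {v : V} (hv : v ≠ 0)
    {φ : Module.Dual ℂ V} (hφ : ∀ g : SL n, φ (ρ g v) = flagMinor l g.val)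
    {f : Matrix (Fin n) (Fin n) ℂ → ℂ} (hf : f ∈ polyFn (Matrix (Fin n) (Fin n) ℂ))
    (hfl : ∀ b : SL n, (∀ i j, i < j → b.val i j = 0) → ∀ g : SL n,
      f (b.val * g.val) = (∏ j, b.val j j ^ l j) * f g.val) :
    ∃ w, ∀ g : SL n, f g.val = φ (ρ g w) := by
  obtain ⟨A, _, _, K, c, hK, hKp, hc⟩ := exists_star_rep_of_polyFn hf
  let R : Representation ℂ (SL n) (Matrix A A ℂ) :=
    { toFun := fun h => LinearMap.mulLeft ℂ (K h.val)
      map_one' := by ext; simp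
      map_mul' := fun g h => by
        ext1 x
        change K (g.val * h.val) * x = K g.val * (K h.val * x)
        rw [map_mul, mul_assoc] }
  have hR : ∀ (h : SL n) (x : Matrix A A ℂ) (g : Matrix (Fin n) (Fin n) ℂ),
      (R h x * K g).trace = (x * K (g * h.val)).trace := fun h x g => by
    change (K h.val * x * K g).trace = _
    rw [mul_assoc, Matrix.trace_mul_comm, map_mul, mul_assoc]
  let L : Submodule ℂ (Matrix A A ℂ) :=
    { carrier := {x | ∀ b : SL n, (∀ i j, i < j → b.val i j = 0) → ∀ g : SL n,
        (x * K (b.val * g.val)).trace = (∏ j, b.val j j ^ l j) * (x * K g.val).trace}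
      add_mem' := fun {x y} hx hy b hb g => by
        simp only [add_mul, Matrix.trace_add, hx b hb g, hy b hb g, mul_add]
      zero_mem' := fun b hb g => by simp
      smul_mem' := fun a x hx b hb g => by
        simp only [Matrix.smul_mul, Matrix.trace_smul, hx b hb g, smul_eq_mul]; ring }
  let P : Submodule ℂ (Matrix A A ℂ) :=
    { carrier := {x | ∃ w, ∀ g : SL n, (x * K g.val).trace = φ (ρ g w)}
      add_mem' := by
        rintro x y ⟨w, hw⟩ ⟨w', hw'⟩
        exact ⟨w + w', fun g => by simp [add_mul, Matrix.trace_add, hw, hw']⟩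
      zero_mem' := ⟨0, fun g => by simp⟩
      smul_mem' := by
        rintro a x ⟨w, hw⟩
        exact ⟨a • w, fun g => by simp [Matrix.trace_smul, hw]⟩ }
  have hPL : P ≤ L := by
    rintro x ⟨w, hw⟩ b hb g
    have h1 := hw (b * g)
    have h2 : (b * g).val = b.val * g.val := rfl
    rw [h2] at h1
    rw [h1, hw, map_mul, Module.End.mul_apply, apply_lower hirr hl hv hφ hb]
  have hLR : ∀ h : SL n, ∀ x ∈ L, R h x ∈ L := fun h x hx b hb g => by
    rw [hR, hR, mul_assoc]
    exact hx b hb (g * h)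
  have hPR : ∀ h : SL n, ∀ x ∈ P, R h x ∈ P := by
    rintro h x ⟨w, hw⟩
    refine ⟨ρ h w, fun g => ?_⟩
    rw [hR]
    have := hw (g * h)
    rw [map_mul, Module.End.mul_apply] at this
    exact this
  let E : Submodule ℂ (Matrix A A ℂ) :=
    { carrier := {x | x ∈ L ∧ ∀ q ∈ P, (qᴴ * x).trace = 0}
      add_mem' := fun {x y} hx hy => ⟨add_mem hx.1 hy.1, fun q hq => by
        rw [mul_add, Matrix.trace_add, hx.2 q hq, hy.2 q hq, add_zero]⟩
      zero_mem' := ⟨zero_mem _, fun q hq => by simp⟩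
      smul_mem' := fun a x hx => ⟨L.smul_mem a hx.1, fun q hq => by
        rw [Matrix.mul_smul, Matrix.trace_smul, hx.2 q hq, smul_zero]⟩ }
  have hER : ∀ h : SL n, ∀ x ∈ E, R h x ∈ E := by
    rintro h x ⟨hx, hxP⟩
    refine ⟨hLR h x hx, fun q hq => ?_⟩
    have hdet : (h.valᴴ).det = 1 := by
      rw [Matrix.det_conjTranspose]
      have : h.val.det = 1 := h.2
      simp [this]
    have h1 := hxP _ (hPR ⟨h.valᴴ, hdet⟩ q hq)
    change (((K h.valᴴ) * q)ᴴ * x).trace = 0 at h1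
    rw [hK, Matrix.conjTranspose_mul, Matrix.conjTranspose_conjTranspose, mul_assoc] at h1
    exact h1
  have hE : E = ⊥ := by
    by_contra hE0
    obtain ⟨x, ⟨hxL, hxP⟩, hx0, hxU⟩ := exists_uniUpper_fixed R E hE0 hER
    have hpoly : (fun g => (x * K g).trace) ∈ polyFn (Matrix (Fin n) (Fin n) ℂ) := by
      simp only [Matrix.trace, Matrix.diag_apply, Matrix.mul_apply]
      exact sum_mem_polyFn fun a _ => sum_mem_polyFn fun b _ =>
        mul_mem_polyFn (const_mem_polyFn _) (hKp _ _)
    have hz := eq_zero_of_biinvariant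
      (h := fun g : SL n => (x * K g.val).trace - (x * K 1).trace * flagMinor l g.val) ?_ ?_ ?_
      ((finTranslates_polyFn hpoly).sub_smul (finTranslates_polyFn (flagMinor_mem_polyFn l)) _)
    · have hxP' : x ∈ P := ⟨(x * K 1).trace • v, fun g => by
        rw [map_smul, map_smul, hφ, smul_eq_mul]
        exact sub_eq_zero.1 (hz g)⟩
      exact hx0 (Matrix.trace_conjTranspose_mul_self_eq_zero_iff.1 (hxP x hxP'))
    · intro u hu g
      have hul : ∀ i j, i < j → u.val i j = 0 := fun i j hij => hu.2 j i hij
      have hud : ∀ i, u.val i i = 1 := hu.1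
      change (x * K (u.val * g.val)).trace - _ * flagMinor l (u.val * g.val) = _
      rw [hxL u hul, flagMinor_lower_mul hl hul]
      simp [hud]
    · intro u hu g
      change (x * K (g.val * u.val)).trace - _ * flagMinor l (g.val * u.val) = _
      rw [← hR, hxU u hu, flagMinor_mul_upper hl hu.2]
      simp [hu.1]
    · intro t ht
      have htl : ∀ i j, i < j → t.val i j = 0 := fun i j hij => ht i j hij.ne
      have h1 := hxL t htl 1
      have h2 := flagMinor_lower_mul hl htl 1
      rw [mul_one, flagMinor_one, mul_one] at h2
      change (x * K (t.val * 1)).trace = _ * (x * K 1).trace at h1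
      rw [mul_one] at h1
      simp only [h1, h2]
      ring
  have hcL : c ∈ L := fun b hb g => by rw [← hc, ← hc]; exact hfl b hb g
  obtain ⟨p, hp, hpo⟩ := exists_sub_orthogonal_matrix P c
  have hcp : c - p ∈ E := ⟨sub_mem hcL (hPL hp), hpo⟩
  rw [hE, Submodule.mem_bot, sub_eq_zero] at hcp
  obtain ⟨w, hw⟩ := hp
  exact ⟨w, fun g => by rw [hc, hcp, hw]⟩

end BorelWeil

section TensorProducts

open Matrix

theorem exists_basis_repr_eq {V : Type*} {X : Type} [AddCommGroup V] [Module ℂ V] [FiniteDimensional ℂ V]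
    (f : X → Module.Dual ℂ V) (hf : ∀ w, (∀ x, f x w = 0) → w = 0) :
    ∃ (κ : Type) (_ : Finite κ) (w : Module.Basis κ ℂ V) (x : κ → X),
      ∀ w' k, w.repr w' k = f (x k) w' := by
  classical
  have hspan : Submodule.span ℂ (Set.range f) = ⊤ := by
    refine Submodule.span_eq_top_of_ne_zero fun z hz => ?_
    by_contra! h
    exact hz (hf z fun x => h _ ⟨x, rfl⟩)
  obtain ⟨κ, x, -, hx, hli⟩ := exists_linearIndependent' ℂ f
  let B := Module.Basis.mk hli (by rw [hx, hspan])
  have : Finite κ := Module.Finite.finite_basis B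
  refine ⟨κ, this, B.dualBasis.map (Module.evalEquiv ℂ V).symm, x, fun w' k => ?_⟩
  simp [Module.Basis.map_repr, B]

theorem polyFn_comp_linear {Z Z' : Type*} [AddCommGroup Z] [Module ℂ Z] [AddCommGroup Z']
    [Module ℂ Z'] {f : Z → ℂ} (hf : f ∈ polyFn Z) (A : Z' →ₗ[ℂ] Z) :
    (fun z => f (A z)) ∈ polyFn Z' :=
  polyFn_comp hf fun ξ => dual_mem_polyFn (ξ.comp A)

theorem exists_polyFn_coeff {n : ℕ} {V : Type*} [AddCommGroup V] [Module ℂ V]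
    {ρ : Representation ℂ (SL n) V} (hirr : RepIsIrreducible ρ) {l : Fin n → ℕ}
    (hl : IsPartition l) {v : V} (hv : v ≠ 0) {φ : Module.Dual ℂ V}
    (hφ : ∀ g : SL n, φ (ρ g v) = flagMinor l g.val) (w : V) :
    ∃ f ∈ polyFn (Matrix (Fin n) (Fin n) ℂ),
      (∀ b g : Matrix (Fin n) (Fin n) ℂ, (∀ i j, i < j → b i j = 0) →
        f (b * g) = (∏ j, b j j ^ l j) * f g) ∧
      ∀ g : SL n, f g.val = φ (ρ g w) := by
  have hw : w ∈ Submodule.span ℂ (Set.range fun g => ρ g v) := by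
    rw [span_orbit_eq_top hirr hv]; trivial
  induction hw using Submodule.span_induction with
  | mem x hx =>
    obtain ⟨h, rfl⟩ := hx
    refine ⟨fun g => flagMinor l (g * h.val),
      polyFn_comp_linear (flagMinor_mem_polyFn l) (LinearMap.mulRight ℂ h.val), ?_, ?_⟩
    · intro b g hb
      simp only [mul_assoc]
      exact flagMinor_lower_mul hl hb _
    · intro g
      have := hφ (g * h)
      rw [map_mul, Module.End.mul_apply] at this
      exact this.symm
  | zero => exact ⟨fun _ => 0, const_mem_polyFn 0, by simp, by simp⟩
  | add x y _ _ hx hy =>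
    obtain ⟨f, hf, hfl, hfv⟩ := hx
    obtain ⟨f', hf', hfl', hfv'⟩ := hy
    refine ⟨fun g => f g + f' g, add_mem_polyFn hf hf', fun b g hb => ?_, fun g => ?_⟩
    · beta_reduce; rw [hfl b g hb, hfl' b g hb, mul_add]
    · beta_reduce; rw [hfv, hfv', map_add, map_add]
  | smul c x _ hx =>
    obtain ⟨f, hf, hfl, hfv⟩ := hx
    refine ⟨fun g => c * f g, mul_mem_polyFn (const_mem_polyFn c) hf, fun b g hb => ?_,
      fun g => ?_⟩
    · beta_reduce; rw [hfl b g hb, mul_left_comm]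
    · beta_reduce; rw [hfv, map_smul, map_smul, smul_eq_mul]

variable {n r : ℕ} {V : Fin r → Type*} [∀ i, AddCommGroup (V i)] [∀ i, Module ℂ (V i)]
  {ρ : ∀ i, Representation ℂ (SL n) (V i)}

/-- The functional `⊗ w i ↦ ∏ φ i (ρ i (g i) (w i))`. -/
noncomputable def tensorCoeff (ρ : ∀ i, Representation ℂ (SL n) (V i))
    (φ : ∀ i, Module.Dual ℂ (V i)) (g : Fin r → SL n) : Module.Dual ℂ (⨂[ℂ] i, V i) :=
  PiTensorProduct.lift
    ((MultilinearMap.mkPiAlgebra ℂ (Fin r) ℂ).compLinearMap fun i => φ i ∘ₗ ρ i (g i))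

variable {φ : ∀ i, Module.Dual ℂ (V i)}

theorem tensorCoeff_tprod (g : Fin r → SL n) (w : ∀ i, V i) :
    tensorCoeff ρ φ g (PiTensorProduct.tprod ℂ w) = ∏ i, φ i (ρ i (g i) (w i)) := by
  simp [tensorCoeff]

theorem tensorCoeff_rep (g : Fin r → SL n) (b : SL n) (u : ⨂[ℂ] i, V i) :
    tensorCoeff ρ φ g (piTensorRep ρ b u) = tensorCoeff ρ φ (fun i => g i * b) u := by
  induction u using PiTensorProduct.induction_on with
  | smul_tprod c w =>
    have : piTensorRep ρ b (PiTensorProduct.tprod ℂ w) =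
      PiTensorProduct.tprod ℂ fun i => ρ i b (w i) := PiTensorProduct.map_tprod _ _
    simp [this, tensorCoeff_tprod]
  | add x y hx hy => simp [hx, hy]

theorem exists_tensorCoeff_update (u : ⨂[ℂ] i, V i) (g : Fin r → SL n) (i : Fin r) :
    ∃ w, ∀ y, tensorCoeff ρ φ (Function.update g i y) u = φ i (ρ i y w) := by
  induction u using PiTensorProduct.induction_on with
  | smul_tprod c w =>
    refine ⟨(c * ∏ j ∈ Finset.univ.erase i, φ j (ρ j (g j) (w j))) • w i, fun y => ?_⟩
    rw [map_smul, map_smul, map_smul, tensorCoeff_tprod,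
      ← Finset.mul_prod_erase _ _ (Finset.mem_univ i), Function.update_self, smul_eq_mul,
      smul_eq_mul, Finset.prod_congr rfl fun j hj => by
        rw [Function.update_of_ne (Finset.ne_of_mem_erase hj)]]
    ring
  | add x y hx hy =>
    obtain ⟨w, hw⟩ := hx
    obtain ⟨w', hw'⟩ := hy
    exact ⟨w + w', fun z => by simp [hw, hw']⟩

variable {lam : Fin r → Fin n → ℕ} {v : ∀ i, V i}

theorem exists_polyFn_tensorCoeff (hlam : ∀ i, IsPartition (lam i))
    (hirr : ∀ i, RepIsIrreducible (ρ i)) (hv : ∀ i, v i ≠ 0)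
    (hφ : ∀ i (g : SL n), φ i (ρ i g (v i)) = flagMinor (lam i) g.val) (u : ⨂[ℂ] i, V i) :
    ∃ F ∈ polyFn (Fin r → Matrix (Fin n) (Fin n) ℂ),
      (∀ b g : Fin r → Matrix (Fin n) (Fin n) ℂ, (∀ i j k, j < k → b i j k = 0) →
        F (fun i => b i * g i) = (∏ i, ∏ j, b i j j ^ lam i j) * F g) ∧
      ∀ g : Fin r → SL n, F (fun i => (g i).val) = tensorCoeff ρ φ g u := by
  induction u using PiTensorProduct.induction_on with
  | smul_tprod c w =>
    choose f hf hfl hfv using fun i => exists_polyFn_coeff (hirr i) (hlam i) (hv i) (hφ i) (w i)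
    refine ⟨fun g => c * ∏ i, f i (g i), mul_mem_polyFn (const_mem_polyFn c)
      (prod_mem_polyFn fun i _ => polyFn_comp_linear (hf i)
        (LinearMap.proj (φ := fun _ : Fin r => Matrix (Fin n) (Fin n) ℂ) i)),
      fun b g hb => ?_, fun g => ?_⟩
    · beta_reduce
      rw [Finset.prod_congr rfl fun i _ => hfl i (b i) (g i) (hb i), Finset.prod_mul_distrib]
      ring
    · beta_reduce
      rw [map_smul, tensorCoeff_tprod, smul_eq_mul, Finset.prod_congr rfl fun i _ => hfv i (g i)]
  | add x y hx hy =>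
    obtain ⟨f, hf, hfl, hfv⟩ := hx
    obtain ⟨f', hf', hfl', hfv'⟩ := hy
    refine ⟨fun g => f g + f' g, add_mem_polyFn hf hf', fun b g hb => ?_, fun g => ?_⟩
    · beta_reduce; rw [hfl b g hb, hfl' b g hb, mul_add]
    · beta_reduce; rw [hfv, hfv', map_add]

theorem eq_zero_of_coeff {W : Type*} [AddCommGroup W] [Module ℂ W]
    {σ : Representation ℂ (SL n) W} (hirr : RepIsIrreducible σ) {ψ : Module.Dual ℂ W}
    (hψ : ψ ≠ 0) {w : W} (hw : ∀ g, ψ (σ g w) = 0) : w = 0 := by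
  by_contra hw0
  refine hψ (LinearMap.ext fun x => ?_)
  have hx : x ∈ Submodule.span ℂ (Set.range fun g => σ g w) := by
    rw [span_orbit_eq_top hirr hw0]; trivial
  have : Submodule.span ℂ (Set.range fun g => σ g w) ≤ LinearMap.ker ψ :=
    Submodule.span_le.2 (by rintro _ ⟨g, rfl⟩; exact hw g)
  exact this hx

theorem ne_zero_of_coeff_eq_flagMinor (hφ : ∀ i (g : SL n),
    φ i (ρ i g (v i)) = flagMinor (lam i) g.val) (i : Fin r) : φ i ≠ 0 := fun h0 => by
  have := hφ i 1
  rw [h0] at this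
  have h1 : (1 : SL n).val = 1 := rfl
  rw [h1, flagMinor_one] at this
  simp at this

/-- Polynomial functions on `r`-tuples of matrices which are semi-invariant of weight `lam i` under
left multiplication of the `i`-th matrix by lower triangular matrices, and of weight `a` under
simultaneous right multiplication by upper triangular matrices in `SL(n)`. -/
structure IsSemiInvariant (lam : Fin r → Fin n → ℕ) (a : Fin n → ℤ)
    (F : (Fin r → Matrix (Fin n) (Fin n) ℂ) → ℂ) : Prop where
  poly : F ∈ polyFn (Fin r → Matrix (Fin n) (Fin n) ℂ)
  lower_mul : ∀ b g : Fin r → Matrix (Fin n) (Fin n) ℂ, (∀ i, (b i).det ≠ 0) →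
    (∀ i j k, j < k → b i j k = 0) →
      F (fun i => b i * g i) = (∏ i, ∏ j, b i j j ^ lam i j) * F g
  mul_uniUpper : ∀ b : SL n, SLIsUniUpper b → ∀ g : Fin r → SL n,
    F (fun i => (g i).val * b.val) = F fun i => (g i).val
  mul_diag : ∀ b : SL n, SLIsDiag b → ∀ g : Fin r → SL n,
    F (fun i => (g i).val * b.val) = (∏ j, b.val j j ^ a j) * F fun i => (g i).val

variable [∀ i, FiniteDimensional ℂ (V i)]

/-- The coefficient functionals separate the tensor product, and any function on `SL(n)^r` which
is a matrix coefficient in each variable is the coefficient function of a tensor. -/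
theorem tensorCoeff_interpolation (hirr : ∀ i, RepIsIrreducible (ρ i)) (hφ : ∀ i, φ i ≠ 0) :
    (∀ u : ⨂[ℂ] i, V i, (∀ g, tensorCoeff ρ φ g u = 0) → u = 0) ∧
    ∀ h : (Fin r → SL n) → ℂ,
      (∀ g i, ∃ w, ∀ y, h (Function.update g i y) = φ i (ρ i y w)) →
      ∃ u, ∀ g, tensorCoeff ρ φ g u = h g := by
  classical
  choose κ hκ B x hB using fun i => exists_basis_repr_eq (fun g => φ i ∘ₗ ρ i g)
    fun w hw => eq_zero_of_coeff (hirr i) (hφ i) hw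
  have hrepr : ∀ (u : ⨂[ℂ] i, V i) p, (Basis.piTensorProduct B).repr u p =
      tensorCoeff ρ φ (fun i => x i (p i)) u := by
    intro u p
    induction u using PiTensorProduct.induction_on with
    | smul_tprod c w =>
      rw [map_smul, map_smul, tensorCoeff_tprod, Finsupp.smul_apply,
        Basis.piTensorProduct_repr_tprod_apply]
      simp [hB]
    | add y z hy hz => simp [hy, hz]
  refine ⟨fun u hu => ?_, fun h hh => ?_⟩
  · refine (Basis.piTensorProduct B).ext_elem fun p => ?_
    rw [hrepr, hu]; simp
  · let u := (Basis.piTensorProduct B).equivFun.symm fun p => h fun i => x i (p i)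
    have hu : ∀ p : ∀ i, κ i, tensorCoeff ρ φ (fun i => x i (p i)) u = h fun i => x i (p i) := by
      intro p
      rw [← hrepr, ← Module.Basis.equivFun_apply, LinearEquiv.apply_symm_apply]
    refine ⟨u, ?_⟩
    suffices ∀ s : Finset (Fin r), ∀ g : Fin r → SL n, (∀ i ∉ s, ∃ k, g i = x i k) →
        tensorCoeff ρ φ g u = h g from fun g => this Finset.univ g (by simp)
    intro s
    induction s using Finset.induction_on with
    | empty =>
      intro g hg
      choose p hp using fun i => hg i (Finset.notMem_empty i)
      obtain rfl : g = fun i => x i (p i) := funext hp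
      exact hu p
    | insert i s _ ih =>
      intro g hg
      obtain ⟨w, hw⟩ := exists_tensorCoeff_update (ρ := ρ) (φ := φ) u g i
      obtain ⟨w', hw'⟩ := hh g i
      have : w = w' := by
        refine (B i).ext_elem fun k => ?_
        rw [hB, hB]
        refine (hw _).symm.trans (Eq.trans (ih _ fun j hj => ?_) (hw' _))
        by_cases hji : j = i
        · subst hji; exact ⟨k, by simp⟩
        · rw [Function.update_of_ne hji]
          exact hg j (by simp [hji, hj])
      rw [← Function.update_eq_self i g, hw, hw', this]

theorem exists_semiInvariant_of_occurs (hlam : ∀ i, IsPartition (lam i))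
    (hirr : ∀ i, RepIsIrreducible (ρ i)) (hhw : ∀ i, Occurs (ρ i) (fun j => (lam i j : ℤ)))
    {a : Fin n → ℤ} (ha : Occurs (piTensorRep ρ) a) :
    ∃ F, IsSemiInvariant lam a F ∧
      ∃ g : Fin r → SL n, F (fun i => (g i).val) ≠ 0 := by
  choose v hv using hhw
  choose φ hφ using fun i => exists_dual_eq_flagMinor (hirr i) (hlam i) (hv i)
  obtain ⟨u, hu0, huU, huD⟩ := ha
  obtain ⟨F, hF, hFl, hFv⟩ := exists_polyFn_tensorCoeff hlam hirr (fun i => (hv i).1) hφ u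
  have hmul : ∀ (b : SL n) (g : Fin r → SL n), F (fun i => (g i).val * b.val) =
      tensorCoeff ρ φ g (piTensorRep ρ b u) := fun b g => by
    rw [tensorCoeff_rep, ← hFv]; rfl
  refine ⟨F, ⟨hF, fun b g _ => hFl b g, fun b hb g => ?_, fun b hb g => ?_⟩, ?_⟩
  · rw [hmul, huU b hb, hFv]
  · rw [hmul, huD b hb, map_smul, hFv, smul_eq_mul]
  · by_contra! h
    exact hu0 ((tensorCoeff_interpolation hirr (ne_zero_of_coeff_eq_flagMinor hφ)).1 u
      fun g => by rw [← hFv, h])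

theorem occurs_of_semiInvariant (hlam : ∀ i, IsPartition (lam i))
    (hirr : ∀ i, RepIsIrreducible (ρ i)) (hhw : ∀ i, Occurs (ρ i) (fun j => (lam i j : ℤ)))
    {a : Fin n → ℤ} {F : (Fin r → Matrix (Fin n) (Fin n) ℂ) → ℂ}
    (hF : IsSemiInvariant lam a F)
    (hF0 : ∃ g : Fin r → SL n, F (fun i => (g i).val) ≠ 0) :
    Occurs (piTensorRep ρ) a := by
  classical
  choose v hv using hhw
  choose φ hφ using fun i => exists_dual_eq_flagMinor (hirr i) (hlam i) (hv i)
  obtain ⟨hinj, hint⟩ := tensorCoeff_interpolation hirr (ne_zero_of_coeff_eq_flagMinor hφ)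
  obtain ⟨u, hu⟩ := hint (fun g => F fun i => (g i).val) fun g i => by
    let Φ : Matrix (Fin n) (Fin n) ℂ → Fin r → Matrix (Fin n) (Fin n) ℂ :=
      fun y => Function.update (fun j => (g j).val) i y
    have hΦ : ∀ y : SL n, Φ y.val = fun j => (Function.update g i y j).val := fun y => by
      ext1 j
      by_cases hj : j = i
      · subst hj; simp [Φ]
      · simp [Φ, hj]
    have hp : (fun y => F (Φ y)) ∈ polyFn (Matrix (Fin n) (Fin n) ℂ) := by
      refine polyFn_comp hF.poly fun ξ => ?_
      have : ∀ y, Φ y = (Φ 0) + LinearMap.single ℂ (fun _ => Matrix (Fin n) (Fin n) ℂ) i y := by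
        intro y
        ext1 j
        by_cases hj : j = i
        · subst hj; simp [Φ]
        · simp [Φ, hj]
      rw [show (fun y => ξ (Φ y)) = fun y => ξ (Φ 0) + (ξ.comp (LinearMap.single ℂ _ i)) y from
        funext fun y => by rw [this y, map_add, LinearMap.comp_apply]]
      exact add_mem_polyFn (const_mem_polyFn _) (dual_mem_polyFn _)
    obtain ⟨w, hw⟩ := exists_coeff_of_semiinvariant (hirr i) (hlam i) (hv i).1 (hφ i) hp
      fun b hb y => by
      have h1 := hF.lower_mul (fun j => ((Function.update 1 i b : Fin r → SL n) j).val)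
        (fun j => (Function.update g i y j).val) (fun j => by simp) (fun j k l hkl => by
        by_cases hj : j = i
        · subst hj; simpa using hb k l hkl
        · simp [hj, hkl.ne])
      have h2 : (b.val * y.val) = (b * y).val := rfl
      rw [h2, hΦ, hΦ]
      convert h1 using 2
      · ext1 j
        by_cases hj : j = i
        · subst hj; simp
        · simp [hj]
      · rw [Finset.prod_eq_single i]
        · simp
        · intro j _ hj; simp [hj]
        · simp
    exact ⟨w, fun y => by rw [← hw, hΦ]⟩
  have hrep : ∀ (b : SL n) g, tensorCoeff ρ φ g (piTensorRep ρ b u) =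
      F (fun i => (g i).val * b.val) := fun b g => by
    rw [tensorCoeff_rep, hu]; rfl
  refine ⟨u, ?_, fun b hb => ?_, fun b hb => ?_⟩
  · rintro rfl
    obtain ⟨g, hg⟩ := hF0
    exact hg (by rw [← hu, map_zero])
  · refine sub_eq_zero.1 (hinj _ fun g => ?_)
    rw [map_sub, hrep, hF.mul_uniUpper b hb, hu, sub_self]
  · refine sub_eq_zero.1 (hinj _ fun g => ?_)
    rw [map_sub, hrep, hF.mul_diag b hb, map_smul, hu, smul_eq_mul, sub_self]

end TensorProducts

section Echelon

open Matrix

variable {n : ℕ}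

/-- The vectors supported on indices of rank less than `m`. -/
def supportedBelow (rk : Fin n → ℕ) (m : ℕ) : Submodule ℂ (Fin n → ℂ) where
  carrier := {s | ∀ j, m ≤ rk j → s j = 0}
  add_mem' hx hy j hj := by rw [Pi.add_apply, hx j hj, hy j hj, add_zero]
  zero_mem' _ _ := rfl
  smul_mem' c x hx j hj := by rw [Pi.smul_apply, hx j hj, smul_zero]

/-- Echelon form of a subspace with respect to an ordering of the coordinates. -/
theorem exists_echelon (S : Submodule ℂ (Fin n → ℂ)) {rk : Fin n → ℕ}
    (hrk : Function.Injective rk) :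
    ∃ (I : Finset (Fin n)) (P : Matrix (Fin n) (Fin n) ℂ), (∀ k, P k k = 1) ∧
      (∀ i k, rk k < rk i → P i k = 0) ∧ (∀ k ∈ I, P.col k ∈ S) ∧
      ∀ m, ∀ s ∈ S, s ∈ supportedBelow rk m →
        ∃ c : Fin n → ℂ, (∀ j, c j ≠ 0 → j ∈ I ∧ rk j < m) ∧ s = P *ᵥ c := by
  classical
  let lead : Fin n → (Fin n → ℂ) → Prop := fun k s => s k = 1 ∧ ∀ i, rk k < rk i → s i = 0
  have hex : ∀ k, ∃ s, lead k s ∧ ((∃ s ∈ S, lead k s) → s ∈ S) := fun k => by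
    by_cases h : ∃ s ∈ S, lead k s
    · obtain ⟨s, hs, hl⟩ := h
      exact ⟨s, hl, fun _ => hs⟩
    · refine ⟨Pi.single k 1, ⟨by simp, fun i hi => ?_⟩, fun h' => (h h').elim⟩
      exact Pi.single_eq_of_ne (by rintro rfl; exact lt_irrefl _ hi) _
  choose f hf hfS using hex
  let I : Finset (Fin n) := Finset.univ.filter fun k => ∃ s ∈ S, lead k s
  refine ⟨I, Matrix.of fun i k => f k i, fun k => (hf k).1, fun i k h => (hf k).2 i h,
    fun k hk => hfS k (Finset.mem_filter.1 hk).2, fun m => ?_⟩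
  induction m with
  | zero =>
    intro s _ hs
    exact ⟨0, fun j hj => (hj rfl).elim, by ext j; simp [hs j (Nat.zero_le _)]⟩
  | succ m ih =>
    intro s hs hsm
    have key : ∀ s ∈ S, s ∈ supportedBelow rk m → ∃ c : Fin n → ℂ,
        (∀ j, c j ≠ 0 → j ∈ I ∧ rk j < m + 1) ∧ s = (Matrix.of fun i k => f k i) *ᵥ c :=
      fun s hs hsm => by
        obtain ⟨c, hc, h⟩ := ih s hs hsm
        exact ⟨c, fun j hj => ⟨(hc j hj).1, (hc j hj).2.trans m.lt_succ_self⟩, h⟩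
    by_cases hj : ∃ j, rk j = m ∧ s j ≠ 0
    · obtain ⟨j, hjm, hj0⟩ := hj
      have hjI : ∃ s ∈ S, lead j s := by
        refine ⟨(s j)⁻¹ • s, S.smul_mem _ hs, ?_, fun i hi => ?_⟩
        · simp [hj0]
        · simp [hsm i (by omega)]
      obtain ⟨c, hc, h⟩ := key (s - s j • f j) (S.sub_mem hs (S.smul_mem _ (hfS j hjI)))
        fun i hi => by
          rcases eq_or_lt_of_le hi with h | h
          · obtain rfl : i = j := hrk (by omega)
            simp [(hf i).1]
          · simp [hsm i h, (hf j).2 i (by omega)]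
      refine ⟨c + Pi.single j (s j), fun i hi => ?_, ?_⟩
      · by_cases hij : i = j
        · subst hij
          exact ⟨Finset.mem_filter.2 ⟨Finset.mem_univ _, hjI⟩, by omega⟩
        · exact hc i (by simpa [hij] using hi)
      · rw [Matrix.mulVec_add, ← h, Matrix.mulVec_single]
        ext i
        simp [mul_comm]
    · push Not at hj
      refine key s hs fun j h => ?_
      rcases eq_or_lt_of_le h with h | h
      · exact hj j h.symm
      · exact hsm j h

theorem finrank_inf_supportedBelow_le {S : Submodule ℂ (Fin n → ℂ)} {rk : Fin n → ℕ}
    {I : Finset (Fin n)} {P : Matrix (Fin n) (Fin n) ℂ} {m : ℕ}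
    (h : ∀ s ∈ S, s ∈ supportedBelow rk m →
      ∃ c : Fin n → ℂ, (∀ j, c j ≠ 0 → j ∈ I ∧ rk j < m) ∧ s = P *ᵥ c) :
    Module.finrank ℂ (S ⊓ supportedBelow rk m : Submodule ℂ (Fin n → ℂ)) ≤
      (I.filter fun j => rk j < m).card := by
  classical
  have hle : S ⊓ supportedBelow rk m ≤
      Submodule.span ℂ (((I.filter fun j => rk j < m).image P.col : Finset (Fin n →
        ℂ)) : Set (Fin n → ℂ)) := by
    rintro s ⟨hs, hsm⟩
    obtain ⟨c, hc, rfl⟩ := h s hs hsm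
    rw [Matrix.mulVec_eq_sum]
    refine Submodule.sum_mem _ fun j _ => ?_
    by_cases hj : c j = 0
    · simp [hj]
    · rw [op_smul_eq_smul]
      refine Submodule.smul_mem _ _ (Submodule.subset_span ?_)
      simp only [Finset.coe_image, Set.mem_image, Finset.mem_coe, Finset.mem_filter]
      exact ⟨j, hc j hj, rfl⟩
  have hcard := finrank_span_finset_le_card (R := ℂ) ((I.filter fun j => rk j < m).image P.col)
  exact (Submodule.finrank_mono hle).trans (hcard.trans Finset.card_image_le)

theorem card_eq_finrank_of_echelon {S : Submodule ℂ (Fin n → ℂ)} {rk : Fin n → ℕ}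
    {I : Finset (Fin n)} {P : Matrix (Fin n) (Fin n) ℂ} (hP : P.det ≠ 0)
    (hPS : ∀ k ∈ I, P.col k ∈ S)
    (h : ∀ m, ∀ s ∈ S, s ∈ supportedBelow rk m →
      ∃ c : Fin n → ℂ, (∀ j, c j ≠ 0 → j ∈ I ∧ rk j < m) ∧ s = P *ᵥ c) :
    I.card = Module.finrank ℂ S := by
  refine le_antisymm ?_ ?_
  · have hli : LinearIndependent ℂ fun k : I => (⟨P.col k, hPS k k.2⟩ : S) :=
      LinearIndependent.of_comp S.subtype
        ((Matrix.linearIndependent_cols_of_det_ne_zero hP).comp (Subtype.val : I → Fin n)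
          Subtype.val_injective)
    simpa using hli.fintype_card_le_finrank
  · obtain ⟨m, hm⟩ : ∃ m, ∀ j, rk j < m :=
      ⟨(Finset.univ.sup rk) + 1, fun j => Nat.lt_succ_of_le (Finset.le_sup (Finset.mem_univ j))⟩
    have htop : supportedBelow rk m = ⊤ :=
      eq_top_iff.2 fun s _ j hj => (hj.not_gt (hm j)).elim
    have := finrank_inf_supportedBelow_le (h m)
    rw [htop, inf_top_eq] at this
    exact this.trans (Finset.card_filter_le _ _)

end Echelon

section KingInequality

open Matrix

variable {n r : ℕ} {lam : Fin r → Fin n → ℕ} {a : Fin n → ℤ}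
  {F : (Fin r → Matrix (Fin n) (Fin n) ℂ) → ℂ}

theorem IsSemiInvariant.smul (hF : IsSemiInvariant lam a F) (c : Fin r → ℂ) (hc : ∀ i, c i ≠ 0)
    (g : Fin r → Matrix (Fin n) (Fin n) ℂ) :
    F (fun i => c i • g i) = (∏ i, c i ^ ∑ j, lam i j) * F g := by
  have := hF.lower_mul (fun i => c i • 1) g (fun i => by simp [hc])
    fun i j k hjk => by simp [hjk.ne]
  simpa [Finset.prod_pow_eq_pow_sum] using this

theorem exists_smul_SL {g : Matrix (Fin n) (Fin n) ℂ} (hg : g.det ≠ 0) :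
    ∃ (c : ℂ) (h : SL n), c ≠ 0 ∧ g = c • h.val := by
  rcases Nat.eq_zero_or_pos n with rfl | hn
  · exact ⟨1, 1, one_ne_zero, Subsingleton.elim _ _⟩
  · obtain ⟨c, hc⟩ := IsAlgClosed.exists_pow_nat_eq g.det hn
    have hc0 : c ≠ 0 := by
      rintro rfl
      rw [zero_pow hn.ne'] at hc
      exact hg hc.symm
    refine ⟨c, ⟨c⁻¹ • g, ?_⟩, hc0, ?_⟩
    · rw [Matrix.det_smul, Fintype.card_fin, inv_pow, hc, inv_mul_cancel₀ hg]
    · simp [smul_smul, hc0]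

theorem IsSemiInvariant.mul_right (hF : IsSemiInvariant lam a F) {b : SL n} {χ : ℂ}
    (hb : ∀ g : Fin r → SL n, F (fun i => (g i).val * b.val) = χ * F fun i => (g i).val)
    {g : Fin r → Matrix (Fin n) (Fin n) ℂ} (hg : ∀ i, (g i).det ≠ 0) :
    F (fun i => g i * b.val) = χ * F g := by
  choose c h hc hgh using fun i => exists_smul_SL (hg i)
  obtain rfl : g = fun i => c i • (h i).val := funext hgh
  simp only [Matrix.smul_mul]
  rw [hF.smul c hc, hF.smul c hc, hb, mul_left_comm]

theorem IsSemiInvariant.exists_SL_ne_zero (hF : IsSemiInvariant lam a F)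
    {g : Fin r → Matrix (Fin n) (Fin n) ℂ} (hg : ∀ i, (g i).det ≠ 0) (h0 : F g ≠ 0) :
    ∃ h : Fin r → SL n, F (fun i => (h i).val) ≠ 0 := by
  choose c h hc hgh using fun i => exists_smul_SL (hg i)
  obtain rfl : g = fun i => c i • (h i).val := funext hgh
  rw [hF.smul c hc] at h0
  exact ⟨h, right_ne_zero_of_mul h0⟩

theorem prod_zpow_eq_zpow_sum {ι : Type*} (s : Finset ι) {t : ℂ} (ht : t ≠ 0) (f : ι → ℤ) :
    ∏ j ∈ s, t ^ f j = t ^ ∑ j ∈ s, f j := by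
  classical
  induction s using Finset.induction_on with
  | empty => simp
  | insert i s hi ih => rw [Finset.prod_insert hi, Finset.sum_insert hi, ih, zpow_add₀ ht]

/-- The centre of `SL(n)` forces the degrees to be congruent modulo `n`. -/
theorem IsSemiInvariant.exists_shift (hF : IsSemiInvariant lam a F)
    (h0 : ∃ h : Fin r → SL n, F (fun i => (h i).val) ≠ 0) :
    ∃ s : ℤ, ((∑ i, ∑ j, lam i j : ℕ) : ℤ) - ∑ j, a j = n * s := by
  rcases Nat.eq_zero_or_pos n with rfl | hn
  · exact ⟨0, by simp⟩
  obtain ⟨h, h0⟩ := h0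
  have hζ := Complex.isPrimitiveRoot_exp n hn.ne'
  set ζ := Complex.exp (2 * Real.pi * Complex.I / n)
  have hζ0 : ζ ≠ 0 := hζ.ne_zero hn.ne'
  let z : SL n := ⟨ζ • 1, by simp [hζ.pow_eq_one]⟩
  have h1 := hF.mul_diag z (fun i j hij => by
    change (ζ • (1 : Matrix (Fin n) (Fin n) ℂ)) i j = 0
    simp [hij]) h
  have h2 := hF.smul (fun _ => ζ) (fun _ => hζ0) fun i => (h i).val
  have h3 : ∀ j, z.val j j = ζ := fun j => by
    change (ζ • (1 : Matrix (Fin n) (Fin n) ℂ)) j j = ζ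
    simp
  have h4 : ∀ i, (h i).val * z.val = ζ • (h i).val := fun i => by
    change (h i).val * (ζ • (1 : Matrix (Fin n) (Fin n) ℂ)) = _
    rw [Matrix.mul_smul, mul_one]
  simp only [h3, h4] at h1
  rw [h2] at h1
  have h5 := mul_right_cancel₀ h0 h1
  rw [Finset.prod_pow_eq_pow_sum, ← zpow_natCast] at h5
  rw [prod_zpow_eq_zpow_sum _ hζ0] at h5
  obtain ⟨s, hs⟩ := (hζ.zpow_eq_one_iff_dvd _).1
    (show ζ ^ (((∑ i, ∑ j, lam i j : ℕ) : ℤ) - ∑ j, a j) = 1 by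
      rw [zpow_sub₀ hζ0, h5, div_self (zpow_ne_zero _ hζ0)])
  exact ⟨s, hs⟩

theorem nonneg_of_polynomial_eq_zpow {p : Polynomial ℂ} {e : ℤ} {c : ℂ} (hc : c ≠ 0)
    (h : ∀ t : ℂ, t ≠ 0 → p.eval t = t ^ e * c) : 0 ≤ e := by
  by_contra he
  push Not at he
  obtain ⟨m, rfl⟩ : ∃ m : ℕ, e = -((m : ℤ) + 1) := ⟨(-e - 1).toNat, by omega⟩
  have hq : p * Polynomial.X ^ (m + 1) = Polynomial.C c := by
    refine Polynomial.eq_of_infinite_eval_eq _ _ ?_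
    refine Set.Infinite.mono (s :=
      {t : ℂ | t ≠ 0}) (fun t ht => ?_) (Set.finite_singleton 0).infinite_compl
    have ht' : t ≠ 0 := ht
    simp only [Set.mem_ofPred_eq, Polynomial.eval_mul, Polynomial.eval_pow, Polynomial.eval_X,
      Polynomial.eval_C]
    rw [h t ht', mul_right_comm, ← zpow_natCast, ← zpow_add₀ ht']
    simp
  have := congrArg (Polynomial.eval 0) hq
  simp at this
  exact hc this.symm

/-- King's numerical criterion: a semi-invariant can only be nonzero at a tuple of matrices if
every subspace satisfies a linear inequality on its relative positions. -/
theorem exists_king_inequality {g : Fin r → Matrix (Fin n) (Fin n) ℂ} (hg : ∀ i, (g i).det ≠ 0)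
    (lam : Fin r → Fin n → ℕ) (S : Submodule ℂ (Fin n → ℂ)) :
    ∃ (I : Finset (Fin n)) (J : Fin r → Finset (Fin n)),
      I.card = Module.finrank ℂ S ∧ (∀ i, (J i).card = Module.finrank ℂ S) ∧
      (∀ m, Module.finrank ℂ (S ⊓ supportedBelow Fin.val m : Submodule ℂ (Fin n → ℂ)) ≤
        (I.filter fun j => j.val < m).card) ∧
      (∀ i m, Module.finrank ℂ (S.map (g i).mulVecLin ⊓ supportedBelow (fun j => j.rev.val) m :
        Submodule ℂ (Fin n → ℂ)) ≤ ((J i).filter fun j => j.rev.val < m).card) ∧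
      ∀ a F, IsSemiInvariant lam a F → F g ≠ 0 →
        (I.card : ℤ) * (∑ i, ∑ j, (lam i j : ℤ) - ∑ j, a j) ≤
          n * (∑ i, ∑ j ∈ J i, (lam i j : ℤ) - ∑ j ∈ I, a j) := by
  classical
  obtain ⟨I, P, hP1, hP0, hPS, hPI⟩ := exists_echelon S (rk := Fin.val) Fin.val_injective
  choose J Q hQ1 hQ0 hQS hQJ using fun i => exists_echelon (S.map (g i).mulVecLin)
    (rk := fun j => j.rev.val) (Fin.val_injective.comp Fin.rev_injective)
  have hQ0' : ∀ i j k, j < k → Q i j k = 0 := fun i j k hjk =>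
    hQ0 i j k (Fin.lt_def.1 (Fin.rev_lt_rev.2 hjk))
  have hdetP : P.det = 1 := by
    rw [Matrix.det_of_isUpperTriangular (fun i j hij => hP0 i j hij)]
    simp [hP1]
  have hdetQ : ∀ i, (Q i).det = 1 := fun i => by
    rw [Matrix.det_of_isLowerTriangular (Q i) (fun j k hjk => hQ0' i j k hjk)]
    simp [hQ1]
  have hIcard := card_eq_finrank_of_echelon (by rw [hdetP]; exact one_ne_zero) hPS hPI
  refine ⟨I, J, hIcard, fun i => ?_, fun m => finrank_inf_supportedBelow_le (hPI m),
    fun i m => finrank_inf_supportedBelow_le (hQJ i m), fun a F hF h0 => ?_⟩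
  · rw [card_eq_finrank_of_echelon (by rw [hdetQ]; exact one_ne_zero) (hQS i) (hQJ i)]
    exact (LinearEquiv.finrank_eq (Submodule.equivMapOfInjective _
      (Matrix.mulVec_injective_iff_isUnit.2
        ((Matrix.isUnit_iff_isUnit_det _).2 (isUnit_iff_ne_zero.2 (hg i)))) S)).symm
  let gt : Fin r → Matrix (Fin n) (Fin n) ℂ := fun i => (Q i)⁻¹ * (g i * P)
  have hQinv : ∀ i, IsUnit (Q i).det := fun i => by rw [hdetQ]; exact isUnit_one
  have hgt0 : F gt = F g := by
    have h1 := hF.lower_mul Q gt (fun i => by rw [hdetQ]; exact one_ne_zero) hQ0'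
    have h2 := hF.mul_right (b := ⟨P, hdetP⟩) (χ := 1) (fun g => by
      rw [one_mul]
      exact hF.mul_uniUpper ⟨P, hdetP⟩ ⟨hP1, fun i j hij => hP0 i j hij⟩ g) hg
    simp only [gt, Matrix.mul_nonsing_inv_cancel_left _ _ (hQinv _), hQ1, one_pow,
      Finset.prod_const_one, one_mul] at h1 h2
    rw [← h1, ← h2]
  have hgtdet : ∀ i, (gt i).det ≠ 0 := fun i => by
    simp [gt, Matrix.det_mul, Matrix.det_nonsing_inv, hdetQ, hdetP, hg i]
  have hpat : ∀ i x y, y ∈ I → x ∉ J i → gt i x y = 0 := fun i x y hy hx => by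
    obtain ⟨c, hc, h⟩ := hQJ i n (g i *ᵥ P.col y) ⟨P.col y, hPS y hy, rfl⟩
      fun j hj => (hj.not_gt j.rev.isLt).elim
    have h1 : (gt i).col y = c := by
      have : (gt i).col y = (Q i)⁻¹ *ᵥ (g i *ᵥ P.col y) := by
        ext z
        simp only [gt, Matrix.col_apply, Matrix.mul_apply, Matrix.mulVec, dotProduct]
      rw [this, h, Matrix.mulVec_mulVec, Matrix.nonsing_inv_mul _ (hQinv i), Matrix.one_mulVec]
    have h2 : gt i x y = c x := congrFun h1 x
    rw [h2]
    by_contra hcx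
    exact hx (hc x hcx).1
  let A : Fin r → Matrix (Fin n) (Fin n) ℂ := fun i =>
    Matrix.of fun x y => if x ∈ J i ∧ y ∉ I then 0 else gt i x y
  let B : Fin r → Matrix (Fin n) (Fin n) ℂ := fun i =>
    Matrix.of fun x y => if x ∈ J i ∧ y ∉ I then gt i x y else 0
  obtain ⟨p, hp⟩ := polyFn_eval_line hF.poly A B
  have key : ∀ t : ℂ, t ≠ 0 → (p.comp (Polynomial.X ^ n)).eval t =
      t ^ ((∑ i, ∑ j, (if j ∈ J i then (n : ℤ) else 0) * lam i j) -
        (I.card * ∑ i, ∑ j, (lam i j : ℤ)) -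
        ∑ j, ((if j ∈ I then (n : ℤ) else 0) - I.card) * a j) * F g := by
    intro t ht
    have hd : (Matrix.diagonal fun j => t ^ ((if j ∈ I then (n : ℤ) else 0) - I.card) :
        Matrix (Fin n) (Fin n) ℂ).det = 1 := by
      rw [Matrix.det_diagonal, prod_zpow_eq_zpow_sum _ ht]
      have : ∑ j : Fin n, ((if j ∈ I then (n : ℤ) else 0) - I.card) = 0 := by
        simp [Finset.sum_sub_distrib, mul_comm]
      rw [this, zpow_zero]
    let d : SL n := ⟨_, hd⟩
    let D : Fin r → Matrix (Fin n) (Fin n) ℂ := fun i =>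
      Matrix.diagonal fun j => t ^ (if j ∈ J i then (n : ℤ) else 0)
    have hDdet : ∀ i, (D i).det ≠ 0 := fun i => by
      rw [Matrix.det_diagonal]
      exact Finset.prod_ne_zero_iff.2 fun j _ => zpow_ne_zero _ ht
    have hX : ∀ i, t ^ I.card • ((A i + t ^ n • B i) * d.val) = D i * gt i := fun i => by
      ext x y
      have hI : t ^ I.card * (t ^ I.card)⁻¹ = 1 := mul_inv_cancel₀ (pow_ne_zero _ ht)
      have hI' : t ^ I.card * t ^ ((n : ℤ) - I.card) = t ^ n := by
        rw [← zpow_natCast, ← zpow_natCast, ← zpow_add₀ ht]; simp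
      have : (t ^ I.card • ((A i + t ^ n • B i) * d.val)) x y =
          (A i x y + t ^ n * B i x y) *
            (t ^ I.card * t ^ ((if y ∈ I then (n : ℤ) else 0) - I.card)) := by
        change t ^ I.card * ((A i + t ^ n • B i) * (Matrix.diagonal
          fun j => t ^ ((if j ∈ I then (n : ℤ) else 0) - I.card))) x y = _
        rw [Matrix.mul_diagonal]
        simp only [Matrix.add_apply, Matrix.smul_apply, smul_eq_mul]
        ring
      rw [this, Matrix.diagonal_mul]
      by_cases hx : x ∈ J i <;> by_cases hy : y ∈ I
      · simp [A, B, hx, hy, hI', mul_comm]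
      · simp [A, B, hx, hy, hI]
      · simp [A, B, hx, hy, hpat i x y hy hx]
      · simp [A, B, hx, hy, hI]
    have hXdet : ∀ i, (A i + t ^ n • B i).det ≠ 0 := fun i h => by
      have h1 := congrArg Matrix.det (hX i)
      rw [Matrix.det_smul, Matrix.det_mul, h, zero_mul, mul_zero, Matrix.det_mul] at h1
      exact mul_ne_zero (hDdet i) (hgtdet i) h1.symm
    have h1 := hF.lower_mul D gt hDdet fun i j k hjk => Matrix.diagonal_apply_ne _ hjk.ne
    have h2 := hF.mul_right (b := d) (hF.mul_diag d fun i j hij => Matrix.diagonal_apply_ne _ hij)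
      hXdet
    have h3 := hF.smul (fun _ => t ^ I.card) (fun _ => pow_ne_zero _ ht)
      fun i => (A i + t ^ n • B i) * d.val
    simp only [hX] at h3
    have h4 : (fun i => A i + t ^ n • B i) = A + t ^ n • B := rfl
    have h5 : ∀ j, d.val j j = t ^ ((if j ∈ I then (n : ℤ) else 0) - I.card) := fun j =>
      Matrix.diagonal_apply_eq _ _
    have h6 : ∀ i j, D i j j = t ^ (if j ∈ J i then (n : ℤ) else 0) := fun i j =>
      Matrix.diagonal_apply_eq _ _
    rw [h2, h1, h4, hp, hgt0] at h3
    simp only [h5, h6, ← zpow_natCast, ← _root_.zpow_mul, prod_zpow_eq_zpow_sum _ ht] at h3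
    rw [Polynomial.eval_comp, Polynomial.eval_pow, Polynomial.eval_X, zpow_sub₀ ht, zpow_sub₀ ht,
      div_div, div_mul_eq_mul_div, eq_div_iff (mul_ne_zero (zpow_ne_zero _ ht) (zpow_ne_zero _ ht))]
    rw [h3]
    have h7 : ∑ i, (I.card : ℤ) * ((∑ j, lam i j : ℕ) : ℤ) =
        I.card * ∑ i, ∑ j, (lam i j : ℤ) := by
      rw [Finset.mul_sum]; push_cast; rfl
    rw [h7, ← zpow_natCast t n]
    ring
  have := nonneg_of_polynomial_eq_zpow h0 key
  simp only [ite_mul, zero_mul, Finset.sum_ite_mem, Finset.univ_inter, sub_mul,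
    Finset.sum_sub_distrib, ← Finset.mul_sum] at this
  linarith

end KingInequality

section Quiver

variable {Q A : Type} {s t : A → Q} {α β : Q → ℕ}

/-- Representations of dimension vector `β` of the quiver with arrows `a : s a ⟶ t a`. -/
abbrev QRep (s t : A → Q) (β : Q → ℕ) : Type :=
  ∀ a, (Fin (β (s a)) → ℂ) →ₗ[ℂ] (Fin (β (t a)) → ℂ)

/-- Families of linear maps, one for each vertex, between representations. -/
abbrev VertexMaps (α β : Q → ℕ) : Type := ∀ i, (Fin (α i) → ℂ) →ₗ[ℂ] (Fin (β i) → ℂ)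

/-- Families of linear maps, one for each arrow, between representations. -/
abbrev ArrowMaps (s t : A → Q) (α β : Q → ℕ) : Type :=
  ∀ a, (Fin (α (s a)) → ℂ) →ₗ[ℂ] (Fin (β (t a)) → ℂ)

/-- The map whose kernel is the space of homomorphisms `x ⟶ y` and whose cokernel is the space
of extensions. -/
def homDiff (x : QRep s t α) (y : QRep s t β) : VertexMaps α β →ₗ[ℂ] ArrowMaps s t α β where
  toFun f a := y a ∘ₗ f (s a) - f (t a) ∘ₗ x a
  map_add' f g := by
    ext1 a; simp only [Pi.add_apply, LinearMap.comp_add, LinearMap.add_comp]; abel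
  map_smul' c f := by
    ext1 a; simp [LinearMap.comp_smul, LinearMap.smul_comp, smul_sub]

theorem homDiff_apply (x : QRep s t α) (y : QRep s t β) (f : VertexMaps α β) (a : A) :
    homDiff x y f a = y a ∘ₗ f (s a) - f (t a) ∘ₗ x a := rfl

theorem finrank_vertexMaps [Fintype Q] : Module.finrank ℂ (VertexMaps α β) = ∑ i, α i * β i := by
  simp [VertexMaps, Module.finrank_pi_fintype, Module.finrank_linearMap]

theorem finrank_arrowMaps [Fintype A] :
    Module.finrank ℂ (ArrowMaps s t α β) = ∑ a, α (s a) * β (t a) := by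
  simp [ArrowMaps, Module.finrank_pi_fintype, Module.finrank_linearMap]

theorem homDiff_mem_polyFn_right (x : QRep s t α) (u : VertexMaps α β)
    (ξ : Module.Dual ℂ (ArrowMaps s t α β)) : (fun y => ξ (homDiff x y u)) ∈ polyFn _ := by
  let L : QRep s t β →ₗ[ℂ] ArrowMaps s t α β :=
    { toFun := fun y a => y a ∘ₗ u (s a)
      map_add' := fun y y' => by ext1 a; simp [LinearMap.add_comp]
      map_smul' := fun c y => by ext1 a; simp [LinearMap.smul_comp] }
  convert polyFn_comp_affine (dual_mem_polyFn ξ) (fun a => -(u (t a) ∘ₗ x a)) L using 3 with y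
  ext1 a
  simp [L, homDiff_apply, sub_eq_neg_add]

theorem homDiff_mem_polyFn_left (y : QRep s t β) (u : VertexMaps α β)
    (ξ : Module.Dual ℂ (ArrowMaps s t α β)) : (fun x => ξ (homDiff x y u)) ∈ polyFn _ := by
  let L : QRep s t α →ₗ[ℂ] ArrowMaps s t α β :=
    { toFun := fun x a => -(u (t a) ∘ₗ x a)
      map_add' := fun y y' => by ext1 a; simp [LinearMap.comp_add, add_comm]
      map_smul' := fun c y => by ext1 a; simp [LinearMap.comp_smul] }
  convert polyFn_comp_affine (dual_mem_polyFn ξ) (fun a => y a ∘ₗ u (s a)) L using 3 with x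
  ext1 a
  simp [L, homDiff_apply, sub_eq_add_neg]

/-- If `φ` is a homomorphism from a general `x` to `y`, every family of maps with values in the
image of `φ` comes from `homDiff`. -/
theorem mem_range_homDiff_of_comp_eq_zero [Fintype A] {x : QRep s t α} {y : QRep s t β} {β' : Q → ℕ}
    {φ : VertexMaps α β} {π : VertexMaps β β'}
    (hmax : ∀ x' : QRep s t α, Module.finrank ℂ (homDiff x' y).range ≤
      Module.finrank ℂ (homDiff x y).range)
    (hφ : homDiff x y φ = 0) (hker : ∀ i, LinearMap.ker (π i) = (φ i).range)
    {z : ArrowMaps s t α β} (hz : ∀ a, π (t a) ∘ₗ z a = 0) : z ∈ (homDiff x y).range := by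
  have hlift : ∀ a, ∃ v : (Fin (α (s a)) → ℂ) →ₗ[ℂ] (Fin (α (t a)) → ℂ),
      φ (t a) ∘ₗ v = z a := by
    intro a
    have hmem : ∀ w, z a w ∈ (φ (t a)).range := fun w => by
      rw [← hker, LinearMap.mem_ker]
      exact LinearMap.congr_fun (hz a) w
    obtain ⟨v, hv⟩ := Module.projective_lifting_property (φ (t a)).rangeRestrict
      ((z a).codRestrict _ hmem) (LinearMap.surjective_rangeRestrict _)
    refine ⟨v, LinearMap.ext fun w => ?_⟩
    exact congrArg Subtype.val (LinearMap.congr_fun hv w)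
  choose v hv using hlift
  let B : VertexMaps α β →ₗ[ℂ] ArrowMaps s t α β :=
    { toFun := fun f a => f (t a) ∘ₗ v a
      map_add' := fun f g => by ext1 a; simp [LinearMap.add_comp]
      map_smul' := fun c f => by ext1 a; simp [LinearMap.smul_comp] }
  have hB : B φ = z := funext hv
  rw [← hB]
  refine mem_range_of_rank_le (homDiff x y) B (fun τ => ?_) hφ
  have hτ : homDiff x y + τ • B = homDiff (fun a => x a - τ • v a) y := by
    refine LinearMap.ext fun f => funext fun a => LinearMap.ext fun w => ?_
    simp [B, homDiff_apply]
    abel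
  rw [hτ]
  exact hmax _

variable [Fintype Q] [Fintype A]

/-- `x` is general for `β` if some `homDiff x y` attains the maximal rank. -/
def IsGeneralFor (x : QRep s t α) (β : Q → ℕ) : Prop :=
  ∃ y₀ : QRep s t β, ∀ (x' : QRep s t α) (y' : QRep s t β),
    Module.finrank ℂ (homDiff x' y').range ≤ Module.finrank ℂ (homDiff x y₀).range

theorem exists_isGeneralFor (s t : A → Q) (α β : Q → ℕ) :
    ∃ x : QRep s t α, ∀ β' ≤ β, IsGeneralFor x β' := by
  classical
  have hmax : ∀ β' : Q → ℕ, ∃ z : QRep s t α × QRep s t β', ∀ z' : QRep s t α × QRep s t β',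
      Module.finrank ℂ (homDiff z'.1 z'.2).range ≤ Module.finrank ℂ (homDiff z.1 z.2).range := by
    intro β'
    have hb : BddAbove (Set.range fun z : QRep s t α × QRep s t β' =>
        Module.finrank ℂ (homDiff z.1 z.2).range) :=
      ⟨Module.finrank ℂ (ArrowMaps s t α β'), by
        rintro _ ⟨z, rfl⟩
        exact Submodule.finrank_le _⟩
    obtain ⟨z, hz⟩ := Nat.sSup_mem (Set.range_nonempty _) hb
    exact ⟨z, fun z' => (le_csSup hb ⟨z', rfl⟩).trans hz.ge⟩
  choose z hz using hmax
  have hm := fun β' => exists_polyFn_rank_le (fun x : QRep s t α => homDiff x (z β').2)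
    (fun u ξ => homDiff_mem_polyFn_left _ u ξ) (z β').1
  choose m hm hm0 hmle using hm
  obtain ⟨x, hx⟩ := polyFn_exists_prod_ne_zero (Finset.Iic β) m (fun β' _ => hm β')
    fun β' _ => ⟨_, hm0 β'⟩
  refine ⟨x, fun β' hβ' => ⟨(z β').2, fun x' y' => (hz β' (x', y')).trans (hmle β' x ?_)⟩⟩
  exact Finset.prod_ne_zero_iff.1 hx β' (Finset.mem_Iic.2 hβ')

theorem exists_quotient_map {b : ℕ} (I : Submodule ℂ (Fin b → ℂ)) :
    ∃ b' ≤ b, (I ≠ ⊥ → b' < b) ∧ ∃ π : (Fin b → ℂ) →ₗ[ℂ] (Fin b' → ℂ),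
      Function.Surjective π ∧ LinearMap.ker π = I := by
  have h := I.finrank_quotient_add_finrank
  rw [Module.finrank_fin_fun] at h
  let e := (Module.finBasis ℂ ((Fin b → ℂ) ⧸ I)).equivFun
  refine ⟨Module.finrank ℂ ((Fin b → ℂ) ⧸ I), by omega, fun hI => ?_,
    e.toLinearMap ∘ₗ I.mkQ, e.surjective.comp I.mkQ_surjective, ?_⟩
  · have := Submodule.one_le_finrank_iff.2 hI
    omega
  · rw [LinearMap.ker_comp_of_ker_eq_bot _ e.ker, Submodule.ker_mkQ]

theorem finrank_sub_le_of_pushforward {E F E' F' : Type*} [AddCommGroup E] [Module ℂ E]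
    [AddCommGroup F] [Module ℂ F] [AddCommGroup E'] [Module ℂ E'] [AddCommGroup F'] [Module ℂ F']
    [FiniteDimensional ℂ F] [FiniteDimensional ℂ F']
    {d : E →ₗ[ℂ] F} {d' : E' →ₗ[ℂ] F'} {Φ : E →ₗ[ℂ] E'} {Ψ : F →ₗ[ℂ] F'}
    (hE : Function.Surjective Φ)
    (hcomm : ∀ u, Ψ (d u) = d' (Φ u)) (hker : ∀ z, Ψ z = 0 → z ∈ d.range) :
    (Module.finrank ℂ F : ℤ) - Module.finrank ℂ d.range ≤
      Module.finrank ℂ F' - Module.finrank ℂ d'.range := by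
  have h1 := (d'.range.mkQ ∘ₗ Ψ).finrank_range_add_finrank_ker
  have h2 : Module.finrank ℂ (LinearMap.ker (d'.range.mkQ ∘ₗ Ψ)) ≤ Module.finrank ℂ d.range := by
    refine Submodule.finrank_mono fun z hz => ?_
    rw [LinearMap.mem_ker, LinearMap.comp_apply, Submodule.mkQ_apply,
      Submodule.Quotient.mk_eq_zero] at hz
    obtain ⟨v, hv⟩ := hz
    obtain ⟨u, rfl⟩ := hE v
    have := hker (z - d u) (by rw [map_sub, hcomm, hv, sub_self])
    simpa using add_mem this (LinearMap.mem_range_self d u)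
  have h3 := Submodule.finrank_le (d'.range.mkQ ∘ₗ Ψ).range
  have h4 := d'.range.finrank_quotient_add_finrank
  omega

/-- Among the representations where a given nonzero polynomial does not vanish, there is one whose
extensions with a general `x` are accounted for by a quotient. -/
theorem exists_quotient_of_isGeneralFor (x : QRep s t α) (N : ℕ) :
    ∀ β : Q → ℕ, ∑ i, β i = N → (∀ β' ≤ β, IsGeneralFor x β') →
    ∀ p ∈ polyFn (QRep s t β), (∃ y, p y ≠ 0) →
    ∃ y, p y ≠ 0 ∧ ∃ (β' : Q → ℕ) (π : VertexMaps β β') (q : QRep s t β'),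
      (∀ i, Function.Surjective (π i)) ∧ (∀ a, π (t a) ∘ₗ y a = q a ∘ₗ π (s a)) ∧
      (Module.finrank ℂ (ArrowMaps s t α β) : ℤ) - Module.finrank ℂ (homDiff x y).range ≤
        ∑ a, (α (s a) : ℤ) * β' (t a) - ∑ i, (α i : ℤ) * β' i := by
  classical
  induction N using Nat.strong_induction_on with
  | _ N ih =>
  intro β hβ hx p hp ⟨y₁, hy₁⟩
  obtain ⟨y₀, hy₀⟩ := hx β le_rfl
  obtain ⟨m, hm, hm0, hmle⟩ := exists_polyFn_rank_le (fun y : QRep s t β => homDiff x y)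
    (fun u ξ => homDiff_mem_polyFn_right _ u ξ) y₀
  obtain ⟨y, hy⟩ := polyFn_exists_mul_ne_zero hp hm hy₁ hm0
  by_cases hker : LinearMap.ker (homDiff x y) = ⊥
  · refine ⟨y, left_ne_zero_of_mul hy, β, fun i => LinearMap.id, y,
      fun i => Function.surjective_id, fun a =>
        (LinearMap.id_comp _).trans (LinearMap.comp_id _).symm, ?_⟩
    have h1 := (homDiff x y).finrank_range_add_finrank_ker
    rw [hker, finrank_bot, add_zero] at h1
    rw [h1, finrank_arrowMaps, finrank_vertexMaps]
    push_cast
    exact le_rfl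
  obtain ⟨φ, hφ, hφ0⟩ := Submodule.exists_mem_ne_zero_of_ne_bot hker
  rw [LinearMap.mem_ker] at hφ
  choose β₁ hβ₁ hβ₁lt π hπ hπker using fun i => exists_quotient_map (φ i).range
  choose j hj using fun i =>
    (π i).exists_rightInverse_of_surjective (LinearMap.range_eq_top.2 (hπ i))
  have hπφ : ∀ i, π i ∘ₗ φ i = 0 := fun i => LinearMap.ext fun w => by
    rw [LinearMap.comp_apply, LinearMap.zero_apply, ← LinearMap.mem_ker, hπker]
    exact LinearMap.mem_range_self _ _
  have hyφ : ∀ a, y a ∘ₗ φ (s a) = φ (t a) ∘ₗ x a := fun a => sub_eq_zero.1 (congrFun hφ a)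
  -- the induced representation on the quotient, and its deformations
  let q₀ : QRep s t β₁ := fun a => π (t a) ∘ₗ y a ∘ₗ j (s a)
  have hq₀ : ∀ a, π (t a) ∘ₗ y a = q₀ a ∘ₗ π (s a) := by
    intro a
    refine LinearMap.ext fun w => ?_
    have hw : w - j (s a) (π (s a) w) ∈ (φ (s a)).range := by
      rw [← hπker, LinearMap.mem_ker, map_sub, ← LinearMap.comp_apply (π _), hj,
        LinearMap.id_apply, sub_self]
    obtain ⟨u, hu⟩ := hw
    have h1 : π (t a) (y a (φ (s a) u)) = 0 := by
      rw [← LinearMap.comp_apply (y a), hyφ, ← LinearMap.comp_apply, ← LinearMap.comp_assoc, hπφ,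
        LinearMap.zero_comp, LinearMap.zero_apply]
    rw [hu, map_sub, map_sub, sub_eq_zero] at h1
    exact h1
  let L : QRep s t β₁ →ₗ[ℂ] QRep s t β :=
    { toFun := fun q a => j (t a) ∘ₗ q a ∘ₗ π (s a)
      map_add' := fun f g => by ext1 a; simp [LinearMap.add_comp, LinearMap.comp_add]
      map_smul' := fun c f => by ext1 a; simp [LinearMap.smul_comp, LinearMap.comp_smul] }
  let c : QRep s t β := y - L q₀
  have hc : ∀ q a, (c + L q) a = y a + j (t a) ∘ₗ (q a - q₀ a) ∘ₗ π (s a) := by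
    intro q a
    simp only [c, L, LinearMap.coe_mk, AddHom.coe_mk, Pi.add_apply, Pi.sub_apply,
      LinearMap.comp_sub, LinearMap.sub_comp]
    abel
  have hcπ : ∀ q a, π (t a) ∘ₗ (c + L q) a = q a ∘ₗ π (s a) := by
    intro q a
    rw [hc, LinearMap.comp_add, hq₀, ← LinearMap.comp_assoc, hj, LinearMap.id_comp,
      LinearMap.sub_comp]
    abel
  have hlt : ∑ i, β₁ i < N := by
    rw [← hβ]
    obtain ⟨i, hi⟩ := Function.ne_iff.1 hφ0
    exact Finset.sum_lt_sum (fun i _ => hβ₁ i)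
      ⟨i, Finset.mem_univ i, hβ₁lt i fun h => hi (LinearMap.range_eq_bot.1 h)⟩
  obtain ⟨q, hq, β', π', q', hπ', hcomm, hle⟩ := ih _ hlt β₁ rfl
    (fun β' h => hx β' (h.trans hβ₁)) _ (polyFn_comp_affine (mul_mem_polyFn hp hm) c L)
    ⟨q₀, by simpa [c] using hy⟩
  refine ⟨c + L q, left_ne_zero_of_mul hq, β', fun i => π' i ∘ₗ π i, q',
    fun i => (hπ' i).comp (hπ i), fun a => ?_, le_trans ?_ hle⟩
  · rw [LinearMap.comp_assoc, hcπ, ← LinearMap.comp_assoc, hcomm, LinearMap.comp_assoc]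
  let Φ : VertexMaps α β →ₗ[ℂ] VertexMaps α β₁ :=
    { toFun := fun f i => π i ∘ₗ f i
      map_add' := fun f g => by ext1 a; simp [LinearMap.comp_add]
      map_smul' := fun c f => by ext1 a; simp [LinearMap.comp_smul] }
  let Ψ : ArrowMaps s t α β →ₗ[ℂ] ArrowMaps s t α β₁ :=
    { toFun := fun f a => π (t a) ∘ₗ f a
      map_add' := fun f g => by ext1 a; simp [LinearMap.comp_add]
      map_smul' := fun c f => by ext1 a; simp [LinearMap.comp_smul] }
  refine finrank_sub_le_of_pushforward (Φ := Φ) (Ψ := Ψ) (fun f => ?_) (fun f => ?_) fun z hz => ?_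
  · refine ⟨fun i => j i ∘ₗ f i, funext fun i => ?_⟩
    change π i ∘ₗ j i ∘ₗ f i = f i
    rw [← LinearMap.comp_assoc, hj, LinearMap.id_comp]
  · refine funext fun a => ?_
    change π (t a) ∘ₗ ((c + L q) a ∘ₗ f (s a) - f (t a) ∘ₗ x a) =
      q a ∘ₗ π (s a) ∘ₗ f (s a) - (π (t a) ∘ₗ f (t a)) ∘ₗ x a
    rw [LinearMap.comp_sub, ← LinearMap.comp_assoc, hcπ, LinearMap.comp_assoc,
      LinearMap.comp_assoc]
  · refine mem_range_homDiff_of_comp_eq_zero (φ := φ) (π := π)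
      (fun x' => (hy₀ x' _).trans (hmle _ (right_ne_zero_of_mul hq))) ?_ hπker
      fun a => congrFun hz a
    refine funext fun a => ?_
    rw [homDiff_apply, hc, LinearMap.add_comp, LinearMap.comp_assoc, LinearMap.comp_assoc, hπφ,
      LinearMap.comp_zero, LinearMap.comp_zero, add_zero, hyφ, sub_self, Pi.zero_apply]

/-- If the representations where a nonzero polynomial does not vanish have no destabilizing
quotient, some `homDiff` is surjective. -/
theorem exists_homDiff_surjective (α β : Q → ℕ) {p : QRep s t β → ℂ}
    (hp : p ∈ polyFn (QRep s t β)) (hp0 : ∃ y, p y ≠ 0)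
    (hss : ∀ y, p y ≠ 0 → ∀ (β' : Q → ℕ) (π : VertexMaps β β') (q : QRep s t β'),
      (∀ i, Function.Surjective (π i)) → (∀ a, π (t a) ∘ₗ y a = q a ∘ₗ π (s a)) →
      ∑ a, (α (s a) : ℤ) * β' (t a) ≤ ∑ i, (α i : ℤ) * β' i) :
    ∃ (x : QRep s t α) (y : QRep s t β), p y ≠ 0 ∧ Function.Surjective (homDiff x y) := by
  obtain ⟨x, hx⟩ := exists_isGeneralFor s t α β
  obtain ⟨y, hy, β', π, q, hπ, hcomm, hle⟩ :=
    exists_quotient_of_isGeneralFor x _ β rfl hx p hp hp0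
  refine ⟨x, y, hy, LinearMap.range_eq_top.1 (Submodule.eq_top_of_finrank_eq ?_)⟩
  have h1 := hss y hy β' π q hπ hcomm
  have h2 := Submodule.finrank_le (homDiff x y).range
  omega

end Quiver

section SchofieldDeterminant

variable {Q A : Type} {s t : A → Q} {α β : Q → ℕ}

/-- If `h` is an isomorphism `y ⟶ y'` then `homDiff x y` and `homDiff x y'` correspond. -/
theorem homDiff_comp {x : QRep s t α} {y y' : QRep s t β} {h : VertexMaps β β}
    (hy : ∀ a, h (t a) ∘ₗ y a = y' a ∘ₗ h (s a)) (f : VertexMaps α β) :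
    homDiff x y' (fun i => h i ∘ₗ f i) = fun a => h (t a) ∘ₗ homDiff x y f a := by
  funext a
  rw [homDiff_apply, homDiff_apply, LinearMap.comp_sub, ← LinearMap.comp_assoc, ← hy,
    LinearMap.comp_assoc, LinearMap.comp_assoc]

theorem homDiff_surjective_of_surjective {x : QRep s t α} {y y' : QRep s t β} {h : VertexMaps β β}
    (hh : ∀ i, Function.Surjective (h i))
    (hy : ∀ a, h (t a) ∘ₗ y a = y' a ∘ₗ h (s a)) (hs : Function.Surjective (homDiff x y)) :
    Function.Surjective (homDiff x y') := by
  intro z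
  choose z' hz' using fun a => Module.projective_lifting_property (h (t a)) (z a) (hh (t a))
  obtain ⟨f, hf⟩ := hs z'
  exact ⟨_, (homDiff_comp hy f).trans (by rw [hf]; exact funext hz')⟩

theorem det_piMap {κ : Type} [Fintype κ] {M : κ → Type} [∀ i, AddCommGroup (M i)]
    [∀ i, Module ℂ (M i)] [∀ i, FiniteDimensional ℂ (M i)] (f : ∀ i, M i →ₗ[ℂ] M i) :
    LinearMap.det (LinearMap.pi fun i => f i ∘ₗ LinearMap.proj i) =
      ∏ i, LinearMap.det (f i) := by
  let _ : LinearOrder κ := LinearOrder.lift' (Fintype.equivFin κ) (Fintype.equivFin κ).injective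
  let b := fun i => Module.finBasis ℂ (M i)
  rw [← LinearMap.det_toMatrix (Pi.basis b)]
  have : LinearMap.toMatrix (Pi.basis b) (Pi.basis b)
      (LinearMap.pi fun i => f i ∘ₗ LinearMap.proj i) =
      Matrix.blockDiagonal' fun i => LinearMap.toMatrix (b i) (b i) (f i) := by
    ext ⟨i, k⟩ ⟨j, l⟩
    rw [LinearMap.toMatrix_apply, Matrix.blockDiagonal'_apply]
    by_cases h : i = j
    · subst h
      simp [LinearMap.toMatrix_apply]
    · simp [h]
  rw [this, (Matrix.blockTriangular_blockDiagonal' _).det_fintype]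
  refine Finset.prod_congr rfl fun i _ => ?_
  rw [← LinearMap.det_toMatrix (b i)]
  refine Eq.trans ?_ (Matrix.det_submatrix_equiv_self
    (Equiv.sigmaSubtype (β := fun i => Fin (Module.finrank ℂ (M i))) i) _)
  congr 1
  ext ⟨⟨i', k⟩, hk⟩ ⟨⟨i'', l⟩, hl⟩
  cases hk
  cases hl
  simp [Matrix.toSquareBlock_def, Equiv.sigmaSubtype]

theorem det_postcomp {m k : ℕ} (h : (Fin k → ℂ) →ₗ[ℂ] (Fin k → ℂ)) :
    LinearMap.det (LinearMap.compRight ℂ (M := Fin m → ℂ) h) =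
      LinearMap.det h ^ m := by
  let e : (Fin m → Fin k → ℂ) ≃ₗ[ℂ] ((Fin m → ℂ) →ₗ[ℂ] (Fin k → ℂ)) :=
    (Pi.basisFun ℂ (Fin m)).constr ℂ
  have h1 : LinearMap.compRight ℂ (M := Fin m → ℂ) h =
      e.toLinearMap ∘ₗ (LinearMap.pi fun i => h ∘ₗ LinearMap.proj i) ∘ₗ e.symm.toLinearMap := by
    rw [← LinearMap.comp_assoc, LinearEquiv.eq_comp_toLinearMap_symm]
    refine LinearMap.ext fun v => ?_
    refine (Pi.basisFun ℂ (Fin m)).ext fun j => ?_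
    simp only [LinearMap.comp_apply, LinearEquiv.coe_coe, LinearMap.compRight_apply, e,
      Module.Basis.constr_basis, LinearMap.pi_apply, LinearMap.proj_apply]
  rw [h1, LinearMap.det_conj, det_piMap]
  simp

/-- Schofield's determinant, relative to an identification of source and target. -/
noncomputable def schofieldDet (e : ArrowMaps s t α β ≃ₗ[ℂ] VertexMaps α β) (x : QRep s t α)
    (y : QRep s t β) : ℂ := LinearMap.det (e.toLinearMap ∘ₗ homDiff x y)

theorem schofieldDet_mem_polyFn [Fintype Q] (e : ArrowMaps s t α β ≃ₗ[ℂ] VertexMaps α β) (x : QRep s t α) :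
    schofieldDet e x ∈ polyFn (QRep s t β) := by
  have h := fun y => LinearMap.det_toMatrix (Module.finBasis ℂ (VertexMaps α β))
    (e.toLinearMap ∘ₗ homDiff x y)
  have h' : schofieldDet e x = fun y => _ := funext fun y => (h y).symm
  rw [h']
  refine det_mem_polyFn fun i j => ?_
  simp only [LinearMap.toMatrix_apply]
  exact homDiff_mem_polyFn_right x (Module.finBasis ℂ (VertexMaps α β) j)
    ((Module.finBasis ℂ (VertexMaps α β)).coord i ∘ₗ e.toLinearMap)

theorem schofieldDet_ne_zero [Fintype Q] {e : ArrowMaps s t α β ≃ₗ[ℂ] VertexMaps α β} {x : QRep s t α}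
    {y : QRep s t β} (h : Function.Surjective (homDiff x y)) : schofieldDet e x y ≠ 0 := by
  have hs : Function.Surjective (e.toLinearMap ∘ₗ homDiff x y) := e.surjective.comp h
  have hb : Function.Bijective (e.toLinearMap ∘ₗ homDiff x y) :=
    ⟨LinearMap.injective_iff_surjective.2 hs, hs⟩
  exact (LinearEquiv.isUnit_det' (LinearEquiv.ofBijective _ hb)).ne_zero

theorem schofieldDet_comp [Fintype Q] [Fintype A] (e : ArrowMaps s t α β ≃ₗ[ℂ] VertexMaps α β) {x : QRep s t α}
    {y y' : QRep s t β} {h : VertexMaps β β} (hy : ∀ a, h (t a) ∘ₗ y a = y' a ∘ₗ h (s a)) :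
    schofieldDet e x y' * ∏ i, LinearMap.det (h i) ^ α i =
      (∏ a, LinearMap.det (h (t a)) ^ α (s a)) * schofieldDet e x y := by
  let hE : VertexMaps α β →ₗ[ℂ] VertexMaps α β :=
    LinearMap.pi fun i => LinearMap.compRight ℂ (h i) ∘ₗ LinearMap.proj i
  let hF : ArrowMaps s t α β →ₗ[ℂ] ArrowMaps s t α β :=
    LinearMap.pi fun a => LinearMap.compRight ℂ (h (t a)) ∘ₗ LinearMap.proj a
  have hcomm : (e.toLinearMap ∘ₗ homDiff x y') ∘ₗ hE =
      (e.toLinearMap ∘ₗ hF ∘ₗ e.symm.toLinearMap) ∘ₗ (e.toLinearMap ∘ₗ homDiff x y) := by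
    refine LinearMap.ext fun f => ?_
    simp only [LinearMap.comp_apply, LinearEquiv.coe_coe, LinearEquiv.symm_apply_apply]
    exact congrArg e (homDiff_comp hy f)
  have hdet := congrArg LinearMap.det hcomm
  rw [LinearMap.det_comp, LinearMap.det_comp, LinearMap.det_conj, det_piMap, det_piMap] at hdet
  simp only [det_postcomp] at hdet
  exact hdet

end SchofieldDeterminant

section LeadingBlocks

/-- The map `ℂᵐ → ℂᵏ` which forgets coordinates, or adds zero coordinates. -/
def cut (m k : ℕ) : (Fin m → ℂ) →ₗ[ℂ] (Fin k → ℂ) where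
  toFun v j := if h : j.val < m then v ⟨j, h⟩ else 0
  map_add' v w := by ext j; by_cases h : j.val < m <;> simp [h]
  map_smul' c v := by ext j; by_cases h : j.val < m <;> simp [h]

theorem cut_apply {m k : ℕ} (v : Fin m → ℂ) (j : Fin k) :
    cut m k v j = if h : j.val < m then v ⟨j, h⟩ else 0 := rfl

theorem cut_self (n : ℕ) : cut n n = LinearMap.id := by
  refine LinearMap.ext fun v => funext fun j => ?_
  simp [cut_apply]

theorem cut_comp_cut {m l k : ℕ} (h : m ≤ l ∨ k ≤ l) : cut l k ∘ₗ cut m l = cut m k := by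
  refine LinearMap.ext fun v => funext fun j => ?_
  have hj := j.2
  simp only [LinearMap.comp_apply, cut_apply]
  split_ifs <;> first | rfl | omega

variable {n : ℕ}

/-- The leading `k × k` block of a matrix. -/
def leadingBlock (B : Matrix (Fin n) (Fin n) ℂ) (k : ℕ) : (Fin k → ℂ) →ₗ[ℂ] (Fin k → ℂ) :=
  cut n k ∘ₗ B.mulVecLin ∘ₗ cut k n

theorem leadingBlock_self (B : Matrix (Fin n) (Fin n) ℂ) : leadingBlock B n = B.mulVecLin := by
  rw [leadingBlock, cut_self, LinearMap.id_comp, LinearMap.comp_id]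

theorem toMatrix'_leadingBlock (B : Matrix (Fin n) (Fin n) ℂ) {k : ℕ} (hk : k ≤ n) :
    LinearMap.toMatrix' (leadingBlock B k) = B.submatrix (Fin.castLE hk) (Fin.castLE hk) := by
  ext i j
  have hi : i.val < n := i.2.trans_le hk
  have hcut : cut k n (Pi.single j 1) = Pi.single (Fin.castLE hk j) 1 := by
    ext l
    rw [cut_apply]
    by_cases hl : l.val < k
    · by_cases hlj : l = Fin.castLE hk j
      · subst hlj
        simp
      · have : (⟨l.val, hl⟩ : Fin k) ≠ j := fun h => hlj (by ext; simp [← h])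
        simp [hl, hlj, this]
    · have : l ≠ Fin.castLE hk j := fun h => hl (by rw [h]; exact j.2)
      simp [hl, this]
  rw [LinearMap.toMatrix'_apply, leadingBlock, LinearMap.comp_apply, LinearMap.comp_apply, hcut,
    cut_apply, dif_pos hi]
  simp
  rfl

/-- The product of the first `k` diagonal entries. -/
def diagProd (B : Matrix (Fin n) (Fin n) ℂ) (k : ℕ) : ℂ :=
  ∏ j ∈ Finset.univ.filter fun j : Fin n => j.val < k, B j j

theorem diagProd_succ (B : Matrix (Fin n) (Fin n) ℂ) (j : Fin n) :
    diagProd B (j.val + 1) = diagProd B j.val * B j j := by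
  have : (Finset.univ.filter fun i : Fin n => i.val < j.val + 1) =
      insert j (Finset.univ.filter fun i : Fin n => i.val < j.val) := by
    ext i
    simp [Fin.ext_iff]
    omega
  rw [diagProd, this, Finset.prod_insert (by simp), mul_comm]
  rfl

theorem diagProd_self (B : Matrix (Fin n) (Fin n) ℂ) : diagProd B n = ∏ j, B j j := by
  simp [diagProd]

theorem diagProd_eq (B : Matrix (Fin n) (Fin n) ℂ) {k : ℕ} (hk : k ≤ n) :
    diagProd B k = ∏ j : Fin k, B (Fin.castLE hk j) (Fin.castLE hk j) := by
  rw [diagProd]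
  symm
  refine Finset.prod_bij (fun j _ => Fin.castLE hk j) (fun j _ => by simp) (fun _ _ _ _ h => by
    simpa using h)
    (fun j hj => ⟨⟨j.val, by simpa using hj⟩, by simp⟩) fun _ _ => rfl

theorem det_leadingBlock_of_lower {B : Matrix (Fin n) (Fin n) ℂ}
    (hB : ∀ j k, j < k → B j k = 0) {k : ℕ} (hk : k ≤ n) :
    LinearMap.det (leadingBlock B k) = diagProd B k := by
  rw [← LinearMap.det_toMatrix', toMatrix'_leadingBlock B hk, Matrix.det_of_isLowerTriangular,
    diagProd_eq B hk]
  · rfl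
  · intro i j hij
    exact hB _ _ (by simpa using hij)

theorem det_leadingBlock_of_upper {B : Matrix (Fin n) (Fin n) ℂ}
    (hB : ∀ j k, k < j → B j k = 0) {k : ℕ} (hk : k ≤ n) :
    LinearMap.det (leadingBlock B k) = diagProd B k := by
  rw [← LinearMap.det_toMatrix', toMatrix'_leadingBlock B hk, Matrix.det_of_isUpperTriangular,
    diagProd_eq B hk]
  · rfl
  · intro i j hij
    exact hB _ _ (by simpa using hij)

theorem leadingBlock_comp_cut_of_lower {B : Matrix (Fin n) (Fin n) ℂ}
    (hB : ∀ j k, j < k → B j k = 0) {k l : ℕ} (hkl : k ≤ l) (hl : l ≤ n) :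
    leadingBlock B k ∘ₗ cut l k = cut l k ∘ₗ leadingBlock B l := by
  refine LinearMap.ext fun v => funext fun i => ?_
  have hi := i.2
  simp only [leadingBlock, LinearMap.comp_apply, cut_apply, Matrix.mulVecLin_apply, Matrix.mulVec,
    dotProduct]
  rw [dif_pos (by omega), dif_pos (by omega), dif_pos (by omega)]
  refine Finset.sum_congr rfl fun j _ => ?_
  by_cases hj : j.val < k
  · rw [dif_pos hj, dif_pos (by omega)]
  · rw [hB _ _ (Fin.lt_def.2 (by simp; omega)), zero_mul, zero_mul]

theorem leadingBlock_comp_cut_of_upper {B : Matrix (Fin n) (Fin n) ℂ}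
    (hB : ∀ j k, k < j → B j k = 0) {k l : ℕ} (hkl : k ≤ l) (hl : l ≤ n) :
    leadingBlock B l ∘ₗ cut k l = cut k l ∘ₗ leadingBlock B k := by
  refine LinearMap.ext fun v => funext fun i => ?_
  have hi := i.2
  simp only [leadingBlock, LinearMap.comp_apply, cut_apply, Matrix.mulVecLin_apply, Matrix.mulVec,
    dotProduct]
  rw [dif_pos (by omega)]
  split_ifs with hik hin
  · refine Finset.sum_congr rfl fun j _ => ?_
    by_cases hj : j.val < k
    · simp [hj, hj.trans_le hkl]
    · simp [hj]
  · omega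
  · refine Finset.sum_eq_zero fun j _ => ?_
    by_cases hj : j.val < k
    · rw [hB _ _ (Fin.lt_def.2 (by simp; omega)), zero_mul]
    · simp [hj]

theorem prod_diagProd_pow {B : Matrix (Fin n) (Fin n) ℂ} (hB : ∀ j, B j j ≠ 0) {C : ℕ} {m : Fin n →
    ℤ}
    {c : Fin n → ℕ} (hc : ∀ j, (c j : ℤ) = C - m j) :
    (∏ j, B j j ^ m j) * ∏ j : Fin n, diagProd B (j.val + 1) ^ c j =
      diagProd B n ^ C * ∏ j : Fin n, diagProd B j.val ^ c j := by
  rw [diagProd_self, ← Finset.prod_pow, ← Finset.prod_mul_distrib, ← Finset.prod_mul_distrib]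
  refine Finset.prod_congr rfl fun j _ => ?_
  rw [diagProd_succ, mul_pow, mul_left_comm, mul_comm, ← zpow_natCast (B j j), hc,
    ← zpow_add₀ (hB j), add_sub_cancel, zpow_natCast]

end LeadingBlocks

section StarQuiver

variable {n r : ℕ}

/-- The vertices of the star quiver: `r` incoming flags of quotients, and one flag of subspaces
ending in the central vertex. -/
abbrev StarVertex (n r : ℕ) : Type := (Fin r × Fin (n + 1)) ⊕ Fin (n + 1)

/-- The arrows of the star quiver. -/
abbrev StarArrow (n r : ℕ) : Type := Fin n ⊕ (Fin r ⊕ (Fin r × Fin n))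

/-- The source of an arrow of the star quiver. -/
def starSrc : StarArrow n r → StarVertex n r :=
  Sum.elim (fun j => .inr j.castSucc)
    (Sum.elim (fun _ => .inr (Fin.last n)) fun p => .inl (p.1, p.2.succ))

/-- The target of an arrow of the star quiver. -/
def starTgt : StarArrow n r → StarVertex n r :=
  Sum.elim (fun j => .inr j.succ)
    (Sum.elim (fun i => .inl (i, Fin.last n)) fun p => .inl (p.1, p.2.castSucc))

/-- The dimension vector of complete flags. -/
def starDim : StarVertex n r → ℕ := Sum.elim (fun p => p.2.val) fun k => k.val

/-- The dimension vector attached to weights. -/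
def starWeight (lam : Fin r → Fin n → ℕ) (m : Fin n → ℤ) (C : ℕ) : StarVertex n r → ℕ :=
  Sum.elim (fun p => Fin.cons (α := fun _ => ℕ) 0 (fun j => C - lam p.1 j) p.2)
    fun k => Fin.snoc (α := fun _ => ℕ) (fun j => (C - m j).toNat) C k

/-- The representation in which all flags are standard. -/
def starRep (g : Fin r → Matrix (Fin n) (Fin n) ℂ) :
    QRep (starSrc (n := n) (r := r)) starTgt starDim
  | .inl j => cut j.val (j.val + 1)
  | .inr (.inl i) => (g i).mulVecLin
  | .inr (.inr p) => cut (p.2.val + 1) p.2.val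

theorem starDim_finrank_eq {lam : Fin r → Fin n → ℕ} {m : Fin n → ℤ} {C : ℕ}
    (hC : ∀ i j, lam i j ≤ C) (hCm : ∀ j, m j ≤ C) (w : StarVertex n r → ℤ) :
    ∑ v, (starWeight lam m C v : ℤ) * w v - ∑ a, (starWeight lam m C (starSrc a) : ℤ) *
      w (starTgt a) =
      C * w (.inr 0) + ∑ j, m j * (w (.inr j.succ) - w (.inr j.castSucc)) -
      ∑ i, (C * w (.inl (i, 0)) + ∑ j, (lam i j : ℤ) *
        (w (.inl (i, j.succ)) - w (.inl (i, j.castSucc)))) := by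
  have h1 : ∀ j, ((C - m j).toNat : ℤ) = C - m j := fun j => by
    have := hCm j
    omega
  have h2 : ∀ i j, ((C - lam i j : ℕ) : ℤ) = C - lam i j := fun i j => by
    have := hC i j
    omega
  have htel : ∀ f : Fin (n + 1) → ℤ, ∑ j : Fin n, f j.succ = ∑ j : Fin n, f j.castSucc +
    f (Fin.last n) - f 0 := by
    intro f
    have := (Fin.sum_univ_succ f).symm.trans (Fin.sum_univ_castSucc f)
    linarith
  have h3 := htel fun k => w (.inr k)
  have h4 := fun i => htel fun k => w (.inl (i, k))
  simp only [starWeight, starSrc, starTgt, Fintype.sum_sum_type, Fintype.sum_prod_type,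
    Sum.elim_inl, Sum.elim_inr, Fin.sum_univ_succ (n := n) (f := fun k => _ * w (.inl (_, k))),
    Fin.sum_univ_castSucc (n := n) (f := fun k => _ * w (.inr k)), Fin.snoc_castSucc, Fin.snoc_last,
    Fin.cons_zero, Fin.cons_succ, h1, h2, sub_mul, mul_sub, Finset.sum_sub_distrib, Nat.cast_zero,
    zero_mul, zero_add, ← Finset.mul_sum, h3, h4, Finset.sum_add_distrib]
  ring

/-- Abel summation for differences with nonincreasing weights. -/
theorem mul_last_le_sum_mul_sub : ∀ {n : ℕ} {f : Fin (n + 1) → ℤ} {u : Fin (n + 2) → ℤ},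
    Antitone f → u 0 = 0 → (∀ k, 0 ≤ u k) →
    f (Fin.last n) * u (Fin.last (n + 1)) ≤ ∑ j, f j * (u j.succ - u j.castSucc)
  | 0, f, u, _, hu0, _ => by simp [hu0]
  | n + 1, f, u, hf, hu0, hu => by
    have ih := mul_last_le_sum_mul_sub (f := fun j => f j.castSucc) (u := fun k => u k.castSucc)
      (fun i j h => hf (Fin.castSucc_le_castSucc_iff.2 h)) hu0 fun k => hu _
    rw [Fin.sum_univ_castSucc]
    have h1 : f (Fin.last (n + 1)) ≤ f (Fin.last n).castSucc := hf (Fin.le_last _)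
    have h2 := mul_le_mul_of_nonneg_right h1 (hu (Fin.last (n + 1)).castSucc)
    simp only [Fin.succ_castSucc, Fin.succ_last] at ih ⊢
    rw [mul_sub]
    linarith

theorem sum_mul_sub_nonneg {f : Fin n → ℤ} {u : Fin (n + 1) → ℤ} (hf : Antitone f) (hu0 : u 0 = 0)
    (hu : ∀ k, 0 ≤ u k) (hlast : u (Fin.last n) = 0 ∨ ∀ j, 0 ≤ f j) :
    0 ≤ ∑ j, f j * (u j.succ - u j.castSucc) := by
  cases n with
  | zero => simp
  | succ n =>
    refine le_trans ?_ (mul_last_le_sum_mul_sub hf hu0 hu)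
    obtain h | h := hlast
    · rw [h, mul_zero]
    · exact mul_nonneg (h _) (hu _)

theorem sum_mul_card_filter_sub (I : Finset (Fin n)) (f : Fin n → ℤ) :
    ∑ j : Fin n, f j * (((I.filter fun i => i.val < j.succ.val).card : ℤ) -
      (I.filter fun i => i.val < j.castSucc.val).card) = ∑ j ∈ I, f j := by
  have h : ∀ j : Fin n, (((I.filter fun i => i.val < j.succ.val).card : ℤ) -
      (I.filter fun i => i.val < j.castSucc.val).card) = if j ∈ I then 1 else 0 := by
    intro j
    have hf : (I.filter fun i => i.val < j.succ.val) =
        (I.filter fun i => i.val < j.castSucc.val) ∪ I.filter fun i => i = j := by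
      ext i
      simp only [Finset.mem_union, Finset.mem_filter, Fin.val_succ, Fin.val_castSucc, Fin.ext_iff]
      grind
    rw [hf, Finset.card_union_of_disjoint, Finset.filter_eq']
    · split_ifs <;> simp
    · rw [Finset.disjoint_filter]
      rintro i - hi rfl
      simp at hi
  simp only [h, mul_ite, mul_one, mul_zero, Finset.sum_ite_mem, Finset.univ_inter]

/-- A family of maps out of the standard flag of subspaces sends each kernel into the last. -/
theorem map_cut_ker_le_ker_last {b : Fin (n + 1) → ℕ}
    {π : ∀ k : Fin (n + 1), (Fin k.val → ℂ) →ₗ[ℂ] (Fin (b k) → ℂ)}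
    {q : ∀ j : Fin n, (Fin (b j.castSucc) → ℂ) →ₗ[ℂ] (Fin (b j.succ) → ℂ)}
    (h : ∀ j : Fin n, π j.succ ∘ₗ cut j.val (j.val + 1) = q j ∘ₗ π j.castSucc) (k : Fin (n + 1)) :
    (LinearMap.ker (π k)).map (cut k.val n) ≤ LinearMap.ker (π (Fin.last n)) := by
  induction k using Fin.reverseInduction with
  | last =>
    change (LinearMap.ker (π (Fin.last n))).map (cut n n) ≤ _
    rw [cut_self, Submodule.map_id]
  | cast j ih =>
    refine le_trans ?_ ih
    rintro _ ⟨v, hv, rfl⟩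
    refine ⟨cut j.val (j.val + 1) v, ?_, ?_⟩
    · have := LinearMap.congr_fun (h j) v
      rw [LinearMap.comp_apply, LinearMap.comp_apply] at this
      have hv' : π j.castSucc v = 0 := hv
      rw [hv', map_zero] at this
      exact this
    · have := cut_comp_cut (m := j.val) (l := j.val + 1) (k := n) (.inl (Nat.le_succ _))
      exact LinearMap.congr_fun this v

/-- A family of maps out of the standard flag of quotients sends the first kernel into each. -/
theorem map_cut_ker_last_le_ker {b : Fin (n + 1) → ℕ}
    {π : ∀ k : Fin (n + 1), (Fin k.val → ℂ) →ₗ[ℂ] (Fin (b k) → ℂ)}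
    {q : ∀ j : Fin n, (Fin (b j.succ) → ℂ) →ₗ[ℂ] (Fin (b j.castSucc) → ℂ)}
    (h : ∀ j : Fin n, π j.castSucc ∘ₗ cut (j.val + 1) j.val = q j ∘ₗ π j.succ) (k : Fin (n + 1)) :
    (LinearMap.ker (π (Fin.last n))).map (cut n k.val) ≤ LinearMap.ker (π k) := by
  induction k using Fin.reverseInduction with
  | last =>
    change (LinearMap.ker (π (Fin.last n))).map (cut n n) ≤ _
    rw [cut_self, Submodule.map_id]
  | cast j ih =>
    rintro _ ⟨v, hv, rfl⟩
    have h1 : π j.succ (cut n (j.val + 1) v) = 0 := ih ⟨v, hv, rfl⟩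
    have h2 := LinearMap.congr_fun (h j) (cut n (j.val + 1) v)
    rw [LinearMap.comp_apply, LinearMap.comp_apply, h1, map_zero] at h2
    have h3 := LinearMap.congr_fun
      (cut_comp_cut (m := n) (l := j.val + 1) (k := j.val) (.inr (Nat.le_succ _))) v
    rw [LinearMap.comp_apply] at h3
    rw [h3] at h2
    exact h2

theorem finrank_le_of_map_cut_le {S : Submodule ℂ (Fin n → ℂ)} {k : ℕ} (hk : k ≤ n)
    {T : Submodule ℂ (Fin k → ℂ)} (h : T.map (cut k n) ≤ S) :
    Module.finrank ℂ T ≤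
      Module.finrank ℂ (S ⊓ supportedBelow Fin.val k : Submodule ℂ (Fin n → ℂ)) := by
  have hinj : Function.Injective (cut k n) := by
    have := cut_comp_cut (m := k) (l := n) (k := k) (.inl hk)
    rw [cut_self] at this
    exact Function.LeftInverse.injective (g := cut n k) (LinearMap.congr_fun this)
  rw [(Submodule.equivMapOfInjective _ hinj T).finrank_eq]
  refine Submodule.finrank_mono (le_inf h ?_)
  rintro _ ⟨v, -, rfl⟩ j hj
  rw [cut_apply, dif_neg hj.not_gt]

theorem finrank_le_of_map_cut_le_ker {S : Submodule ℂ (Fin n → ℂ)} {k : ℕ}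
    {T : Submodule ℂ (Fin k → ℂ)} (h : S.map (cut n k) ≤ T) :
    Module.finrank ℂ S ≤ Module.finrank ℂ T +
      Module.finrank ℂ (S ⊓ supportedBelow (fun j => j.rev.val) (n - k) :
        Submodule ℂ (Fin n → ℂ)) := by
  have h1 := ((cut n k).domRestrict S).finrank_range_add_finrank_ker
  have h2 : Module.finrank ℂ ((cut n k).domRestrict S).range ≤ Module.finrank ℂ T := by
    refine Submodule.finrank_mono (le_trans ?_ h)
    rintro _ ⟨v, rfl⟩
    exact ⟨v, v.2, rfl⟩
  have h3 : Module.finrank ℂ (LinearMap.ker ((cut n k).domRestrict S)) ≤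
      Module.finrank ℂ (S ⊓ supportedBelow (fun j => j.rev.val) (n - k) :
        Submodule ℂ (Fin n → ℂ)) := by
    rw [← Submodule.finrank_map_subtype_eq S]
    refine Submodule.finrank_mono ?_
    rintro _ ⟨v, hv, rfl⟩
    refine ⟨v.2, fun j hj => ?_⟩
    have hjk : j.val < k := by
      have hj' : n - k ≤ j.rev.val := hj
      rw [Fin.val_rev] at hj'
      have := j.2
      omega
    have := congrFun (LinearMap.mem_ker.1 hv) ⟨j.val, hjk⟩
    rw [LinearMap.domRestrict_apply, cut_apply, dif_pos j.2] at this
    exact this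
  omega

/-- The numerical criterion for the standard representation: a quotient does not destabilize if
the positions of the corresponding subspace satisfy the linear inequality. -/
theorem starRep_quotient_le {lam : Fin r → Fin n → ℕ} {m : Fin n → ℤ} {C : ℕ}
    (hC : ∀ i j, lam i j ≤ C) (hCm : ∀ j, m j ≤ C) (hlam : ∀ i, IsPartition (lam i))
    (hm : Antitone m) (hsum : ∑ i, ∑ j, (lam i j : ℤ) = ∑ j, m j)
    {g : Fin r → Matrix (Fin n) (Fin n) ℂ} (hg : ∀ i, (g i).det ≠ 0) {β' : StarVertex n r → ℕ}
    {π : VertexMaps starDim β'} {q : QRep (starSrc (n := n) (r := r)) starTgt β'}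
    (hπ : ∀ v, Function.Surjective (π v))
    (hcomm : ∀ a, π (starTgt a) ∘ₗ starRep g a = q a ∘ₗ π (starSrc a))
    {S : Submodule ℂ (Fin n → ℂ)} (hS : S = LinearMap.ker (π (.inr (Fin.last n))))
    {I : Finset (Fin n)} {J : Fin r → Finset (Fin n)}
    (hI : I.card = Module.finrank ℂ S) (hJ : ∀ i, (J i).card = Module.finrank ℂ S)
    (hIS : ∀ k, Module.finrank ℂ (S ⊓ supportedBelow Fin.val k : Submodule ℂ (Fin n → ℂ)) ≤
      (I.filter fun j => j.val < k).card)
    (hJS : ∀ i k, Module.finrank ℂ (S.map (g i).mulVecLin ⊓ supportedBelow (fun j => j.rev.val) k :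
      Submodule ℂ (Fin n → ℂ)) ≤ ((J i).filter fun j => j.rev.val < k).card)
    (hIJ : ∑ j ∈ I, m j ≤ ∑ i, ∑ j ∈ J i, (lam i j : ℤ)) :
    ∑ a, (starWeight lam m C (starSrc a) : ℤ) * β' (starTgt a) ≤
      ∑ v, (starWeight lam m C v : ℤ) * β' v := by
  let κ : StarVertex n r → ℕ := fun v => Module.finrank ℂ (LinearMap.ker (π v))
  have hκ : ∀ v, (β' v : ℤ) = starDim v - κ v := by
    intro v
    have := (π v).finrank_range_add_finrank_ker
    rw [LinearMap.range_eq_top.2 (hπ v), finrank_top, Module.finrank_fin_fun,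
      Module.finrank_fin_fun] at this
    simp only [κ]
    omega
  have hκdim : ∀ v, κ v ≤ starDim v := fun v => by
    have := hκ v
    omega
  -- the subspace flag
  have hκI : ∀ k : Fin (n + 1), κ (.inr k) ≤ (I.filter fun j => j.val < k.val).card := fun k => by
    refine le_trans (finrank_le_of_map_cut_le (Nat.lt_succ_iff.1 k.2) ?_) (hIS k.val)
    rw [hS]
    exact map_cut_ker_le_ker_last (π := fun k => π (.inr k)) (q := fun j => q (.inl j))
      (fun j => hcomm (.inl j)) k
  have hκlast : κ (.inr (Fin.last n)) = I.card := by rw [hI, hS]; rfl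
  -- the quotient flags
  have hκJ : ∀ i (k : Fin (n + 1)), ((J i).filter fun j => j.val < k.val).card ≤ κ (.inl (i, k)) :=
    by
    intro i k
    have h1 : S.map (g i).mulVecLin ≤ LinearMap.ker (π (.inl (i, Fin.last n))) := by
      rintro _ ⟨v, hv, rfl⟩
      rw [hS] at hv
      have h : π (.inl (i, Fin.last n)) ((g i).mulVecLin v) =
        q (.inr (.inl i)) (π (.inr (Fin.last n)) v) :=
        LinearMap.congr_fun (hcomm (.inr (.inl i))) v
      have hv' : π (.inr (Fin.last n)) v = 0 := hv
      rw [hv'] at h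
      exact h.trans (map_zero (q (.inr (.inl i))))
    have h2 : (S.map (g i).mulVecLin).map (cut n k.val) ≤ LinearMap.ker (π (.inl (i, k))) :=
      (Submodule.map_mono h1).trans (map_cut_ker_last_le_ker (π := fun k => π (.inl (i, k)))
        (q := fun j => q (.inr (.inr (i, j)))) (fun j => hcomm (.inr (.inr (i, j)))) k)
    have h3 : Module.finrank ℂ (S.map (g i).mulVecLin) ≤
        κ (.inl (i, k)) + ((J i).filter fun j => j.rev.val < n - k.val).card :=
      (finrank_le_of_map_cut_le_ker h2).trans (Nat.add_le_add_left (hJS i (n - k.val)) _)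
    have hinj : Function.Injective (g i).mulVecLin :=
      Matrix.mulVec_injective_of_isUnit ((Matrix.isUnit_iff_isUnit_det _).2 (hg i).isUnit)
    have h5 : Module.finrank ℂ S = Module.finrank ℂ (S.map (g i).mulVecLin) :=
      (Submodule.equivMapOfInjective _ hinj S).finrank_eq
    have h6 := Finset.card_filter_add_card_filter_not (s := J i) fun j => j.val < k.val
    have h7 : ((J i).filter fun j => ¬ j.val < k.val) =
        (J i).filter fun j => j.rev.val < n - k.val := by
      refine Finset.filter_congr fun j _ => ?_
      rw [Fin.val_rev]
      have := j.2
      omega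
    rw [h7, hJ] at h6
    omega
  have hκ0 : ∀ v, starDim v = 0 → κ v = 0 := fun v hv => by
    have := hκdim v
    omega
  have hAI := sum_mul_sub_nonneg (f := m)
    (u := fun k => ((I.filter fun j => j.val < k.val).card : ℤ) - κ (.inr k)) hm
    (by simp [hκ0 (.inr 0) rfl]) (fun k => by simpa using hκI k)
    (.inl (by simp [hκlast, Finset.filter_true_of_mem]))
  have hAJ := fun i => sum_mul_sub_nonneg (f := fun j => (lam i j : ℤ))
    (u := fun k => (κ (.inl (i, k)) : ℤ) - ((J i).filter fun j => j.val < k.val).card)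
    (fun j k hjk => Int.ofNat_le.2 (hlam i j k hjk))
    (by simp [hκ0 (.inl (i, 0)) rfl]) (fun k => by simpa using hκJ i k)
    (.inr fun j => Int.natCast_nonneg _)
  have hI' := sum_mul_card_filter_sub I m
  have hJ' := fun i => sum_mul_card_filter_sub (J i) fun j => (lam i j : ℤ)
  have hsucc : ∀ j : Fin n, (starDim (n := n) (r := r) (.inr j.succ) : ℤ) -
      starDim (n := n) (r := r) (.inr j.castSucc) = 1 := fun j => by simp [starDim]
  have hsucc' : ∀ i (j : Fin n), (starDim (n := n) (r := r) (.inl (i, j.succ)) : ℤ) -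
      starDim (n := n) (r := r) (.inl (i, j.castSucc)) = 1 := fun i j => by simp [starDim]
  rw [← sub_nonneg, starDim_finrank_eq hC hCm fun v => (β' v : ℤ)]
  have hsub : ∀ (v w : StarVertex n r), (starDim v : ℤ) - starDim w = 1 →
      (β' v : ℤ) - β' w = 1 - ((κ v : ℤ) - κ w) := fun v w h => by
    rw [hκ, hκ]
    linarith
  have hz : ∀ v, starDim v = 0 → (β' v : ℤ) = 0 := fun v hv => by
    rw [hκ, hκ0 v hv, hv]
    rfl
  have hA := Finset.sum_nonneg fun i (_ : i ∈ Finset.univ) => hAJ i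
  simp only [hsub _ _ (hsucc _), hsub _ _ (hsucc' _ _), hz (.inr 0) rfl, hz (.inl (_, 0)) rfl,
    mul_sub, Finset.sum_sub_distrib, mul_one, mul_zero, zero_add] at hI' hJ' hAI hA ⊢
  simp only [← hJ', Finset.sum_sub_distrib] at hIJ
  linarith

end StarQuiver

section PolynomialMaps

variable {Z M M' M'' : Type*} [AddCommGroup Z] [Module ℂ Z] [AddCommGroup M] [Module ℂ M]
  [AddCommGroup M'] [Module ℂ M'] [AddCommGroup M''] [Module ℂ M'']

/-- Maps whose coordinates are polynomial functions. -/
def IsPolyMap (f : Z → M) : Prop := ∀ ξ : Module.Dual ℂ M, (fun z => ξ (f z)) ∈ polyFn Z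

theorem isPolyMap_const (c : M) : IsPolyMap fun _ : Z => c := fun _ => const_mem_polyFn _

theorem isPolyMap_linear (A : Z →ₗ[ℂ] M) : IsPolyMap fun z => A z := fun ξ =>
  dual_mem_polyFn (ξ ∘ₗ A)

theorem IsPolyMap.add {f g : Z → M} (hf : IsPolyMap f) (hg : IsPolyMap g) :
    IsPolyMap fun z => f z + g z := fun ξ => by
  simp only [map_add]
  exact add_mem_polyFn (hf ξ) (hg ξ)

theorem IsPolyMap.linear {f : Z → M} (hf : IsPolyMap f) (A : M →ₗ[ℂ] M') :
    IsPolyMap fun z => A (f z) := fun ξ => hf (ξ ∘ₗ A)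

theorem IsPolyMap.bilinear [FiniteDimensional ℂ M] {f : Z → M} {g : Z → M'} (hf : IsPolyMap f)
    (hg : IsPolyMap g) (A : M →ₗ[ℂ] M' →ₗ[ℂ] M'') : IsPolyMap fun z => A (f z) (g z) := by
  intro ξ
  let b := Module.finBasis ℂ M
  have h : ∀ z, ξ (A (f z) (g z)) = ∑ i, b.coord i (f z) * ξ (A (b i) (g z)) := by
    intro z
    conv_lhs => rw [← b.sum_repr (f z), map_sum, LinearMap.sum_apply, map_sum]
    simp only [map_smul, LinearMap.smul_apply, smul_eq_mul, Module.Basis.coord_apply]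
  simp only [h]
  exact sum_mem_polyFn fun i _ => mul_mem_polyFn (hf _) (hg.linear (A (b i)) ξ)

theorem IsPolyMap.comp [FiniteDimensional ℂ M'] [FiniteDimensional ℂ M''] {f : Z → M' →ₗ[ℂ] M''}
    {g : Z → M →ₗ[ℂ] M'} (hf : IsPolyMap f) (hg : IsPolyMap g) :
    IsPolyMap fun z => f z ∘ₗ g z :=
  hf.bilinear hg (LinearMap.llcomp ℂ M M' M'')

theorem isPolyMap_pi {κ : Type*} [Fintype κ] {M : κ → Type*} [∀ i, AddCommGroup (M i)]
    [∀ i, Module ℂ (M i)] {f : Z → ∀ i, M i} (hf : ∀ i, IsPolyMap fun z => f z i) :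
    IsPolyMap f := by
  classical
  intro ξ
  have h : ∀ z, ξ (f z) = ∑ i, ξ (Pi.single i (f z i)) := fun z => by
    rw [← map_sum, Finset.univ_sum_single]
  simp only [h]
  exact sum_mem_polyFn fun i _ => (hf i).linear (LinearMap.single ℂ M i) ξ

theorem IsPolyMap.det {k : ℕ} {f : Z → (Fin k → ℂ) →ₗ[ℂ] (Fin k → ℂ)} (hf : IsPolyMap f) :
    (fun z => LinearMap.det (f z)) ∈ polyFn Z := by
  simp only [← LinearMap.det_toMatrix']
  exact det_mem_polyFn fun i j => hf
    (Matrix.entryLinearMap ℂ ℂ i j ∘ₗ (LinearMap.toMatrix' (R := ℂ)).toLinearMap)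

end PolynomialMaps

section Gauge

variable {n r : ℕ}

/-- The projection onto the last coordinate line. -/
def lastProj (j : ℕ) : (Fin (j + 1) → ℂ) →ₗ[ℂ] (Fin (j + 1) → ℂ) :=
  LinearMap.single ℂ (fun _ => ℂ) (Fin.last j) ∘ₗ LinearMap.proj (Fin.last j)

theorem cut_comp_cut_add_lastProj (j : ℕ) :
    cut j (j + 1) ∘ₗ cut (j + 1) j + lastProj j = LinearMap.id := by
  refine LinearMap.ext fun v => funext fun i => ?_
  induction i using Fin.lastCases with
  | last => simp [lastProj, cut_apply]
  | cast i =>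
    simp [lastProj, cut_apply, Fin.ext_iff, i.2.ne]
    rfl

theorem lastProj_comp_cut (j : ℕ) : lastProj j ∘ₗ cut j (j + 1) = 0 := by
  refine LinearMap.ext fun v => ?_
  simp [lastProj, cut_apply]

theorem cut_comp_lastProj (j : ℕ) : cut (j + 1) j ∘ₗ lastProj j = 0 := by
  refine LinearMap.ext fun v => funext fun i => ?_
  simp [lastProj, cut_apply, Fin.ext_iff, i.2.ne, i.2.trans (Nat.lt_succ_self _)]

/-- The change of coordinates making a flag of subspaces standard. -/
def subspaceGauge (A : ∀ j : Fin n, (Fin j.val → ℂ) →ₗ[ℂ] (Fin (j.val + 1) → ℂ))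
    (k : Fin (n + 1)) : (Fin k.val → ℂ) →ₗ[ℂ] (Fin k.val → ℂ) :=
  Fin.induction (motive := fun k => (Fin k.val → ℂ) →ₗ[ℂ] (Fin k.val → ℂ)) LinearMap.id
    (fun j C => A j ∘ₗ C ∘ₗ cut (j.val + 1) j.val + lastProj j.val) k

/-- The change of coordinates making a flag of quotients standard. -/
def quotientGauge (P : ∀ j : Fin n, (Fin (j.val + 1) → ℂ) →ₗ[ℂ] (Fin j.val → ℂ))
    (k : Fin (n + 1)) : (Fin k.val → ℂ) →ₗ[ℂ] (Fin k.val → ℂ) :=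
  Fin.induction (motive := fun k => (Fin k.val → ℂ) →ₗ[ℂ] (Fin k.val → ℂ)) LinearMap.id
    (fun j C => cut j.val (j.val + 1) ∘ₗ C ∘ₗ P j + lastProj j.val) k

theorem subspaceGauge_succ (A : ∀ j : Fin n, (Fin j.val → ℂ) →ₗ[ℂ] (Fin (j.val + 1) → ℂ))
    (j : Fin n) : subspaceGauge A j.succ =
      A j ∘ₗ subspaceGauge A j.castSucc ∘ₗ cut (j.val + 1) j.val + lastProj j.val := rfl

theorem quotientGauge_succ (P : ∀ j : Fin n, (Fin (j.val + 1) → ℂ) →ₗ[ℂ] (Fin j.val → ℂ))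
    (j : Fin n) : quotientGauge P j.succ =
      cut j.val (j.val + 1) ∘ₗ quotientGauge P j.castSucc ∘ₗ P j + lastProj j.val := rfl

theorem subspaceGauge_comp_cut (A : ∀ j : Fin n, (Fin j.val → ℂ) →ₗ[ℂ] (Fin (j.val + 1) → ℂ))
    (j : Fin n) : subspaceGauge A j.succ ∘ₗ cut j.val (j.val + 1) =
      A j ∘ₗ subspaceGauge A j.castSucc := by
  have h := cut_comp_cut (m := j.val) (l := j.val + 1) (k := j.val) (.inl (Nat.le_succ _))
  rw [cut_self] at h
  rw [subspaceGauge_succ, LinearMap.add_comp, lastProj_comp_cut, add_zero, LinearMap.comp_assoc,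
    LinearMap.comp_assoc, h]
  rfl

theorem cut_comp_quotientGauge (P : ∀ j : Fin n, (Fin (j.val + 1) → ℂ) →ₗ[ℂ] (Fin j.val → ℂ))
    (j : Fin n) : cut (j.val + 1) j.val ∘ₗ quotientGauge P j.succ =
      quotientGauge P j.castSucc ∘ₗ P j := by
  have h := cut_comp_cut (m := j.val) (l := j.val + 1) (k := j.val) (.inl (Nat.le_succ _))
  rw [cut_self] at h
  rw [quotientGauge_succ, LinearMap.comp_add, cut_comp_lastProj, add_zero, ← LinearMap.comp_assoc,
    h]
  rfl

theorem subspaceGauge_cut (k : Fin (n + 1)) :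
    subspaceGauge (n := n) (fun j => cut j.val (j.val + 1)) k = LinearMap.id := by
  induction k using Fin.induction with
  | zero => rfl
  | succ j ih =>
    rw [subspaceGauge_succ, ih]
    exact cut_comp_cut_add_lastProj j.val

theorem quotientGauge_cut (k : Fin (n + 1)) :
    quotientGauge (n := n) (fun j => cut (j.val + 1) j.val) k = LinearMap.id := by
  induction k using Fin.induction with
  | zero => rfl
  | succ j ih =>
    rw [quotientGauge_succ, ih]
    exact cut_comp_cut_add_lastProj j.val

variable {Z : Type*} [AddCommGroup Z] [Module ℂ Z]

theorem isPolyMap_subspaceGauge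
    {A : Z → ∀ j : Fin n, (Fin j.val → ℂ) →ₗ[ℂ] (Fin (j.val + 1) → ℂ)}
    (hA : ∀ j, IsPolyMap fun z => A z j) (k : Fin (n + 1)) :
    IsPolyMap fun z => subspaceGauge (A z) k := by
  induction k using Fin.induction with
  | zero => exact isPolyMap_const _
  | succ j ih =>
    exact ((hA j).comp (ih.comp (isPolyMap_const (cut (j.val + 1) j.val)))).add (isPolyMap_const _)

theorem isPolyMap_quotientGauge
    {P : Z → ∀ j : Fin n, (Fin (j.val + 1) → ℂ) →ₗ[ℂ] (Fin j.val → ℂ)}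
    (hP : ∀ j, IsPolyMap fun z => P z j) (k : Fin (n + 1)) :
    IsPolyMap fun z => quotientGauge (P z) k := by
  induction k using Fin.induction with
  | zero => exact isPolyMap_const _
  | succ j ih =>
    exact ((isPolyMap_const (cut j.val (j.val + 1))).comp (ih.comp (hP j))).add (isPolyMap_const _)

/-- The change of coordinates making all flags standard. -/
def starGauge (y : QRep (starSrc (n := n) (r := r)) starTgt starDim) :
    VertexMaps (starDim (n := n) (r := r)) starDim
  | .inl p => quotientGauge (fun j => y (.inr (.inr (p.1, j)))) p.2
  | .inr k => subspaceGauge (fun j => y (.inl j)) k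

/-- The matrices of the central arrows after all flags have been made standard. -/
def straighten (y : QRep (starSrc (n := n) (r := r)) starTgt starDim) (i : Fin r) :
    Matrix (Fin n) (Fin n) ℂ :=
  LinearMap.toMatrix' (starGauge y (.inl (i, Fin.last n)) ∘ₗ
    (y (.inr (.inl i)) : (Fin n → ℂ) →ₗ[ℂ] (Fin n → ℂ)) ∘ₗ starGauge y (.inr (Fin.last n)))

theorem isPolyMap_arrow {Q A : Type} {s t : A → Q} {β : Q → ℕ} (a : A) :
    IsPolyMap fun y : QRep s t β => y a := fun ξ =>
  dual_mem_polyFn (ξ ∘ₗ (LinearMap.proj a : QRep s t β →ₗ[ℂ] _))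

theorem isPolyMap_starGauge (v : StarVertex n r) :
    IsPolyMap fun y : QRep (starSrc (n := n) (r := r)) starTgt starDim => starGauge y v := by
  obtain ⟨i, k⟩ | k := v
  · exact isPolyMap_quotientGauge (P := fun y : QRep (starSrc (n := n) (r := r)) starTgt starDim =>
      fun j => y (.inr (.inr (i, j)))) (fun j => isPolyMap_arrow _) k
  · exact isPolyMap_subspaceGauge (A := fun y : QRep (starSrc (n := n) (r := r)) starTgt starDim =>
      fun j => y (.inl j)) (fun j => isPolyMap_arrow _) k

theorem isPolyMap_straighten : IsPolyMap (straighten (n := n) (r := r)) := by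
  refine isPolyMap_pi fun i => IsPolyMap.linear ?_ (LinearMap.toMatrix' (R := ℂ)).toLinearMap
  have h : IsPolyMap fun y : QRep (starSrc (n := n) (r := r)) starTgt starDim =>
      (y (.inr (.inl i)) : (Fin n → ℂ) →ₗ[ℂ] (Fin n → ℂ)) := isPolyMap_arrow (Sum.inr (Sum.inl i))
  exact (isPolyMap_starGauge (.inl (i, Fin.last n))).comp
    (h.comp (isPolyMap_starGauge (.inr (Fin.last n))))

theorem starGauge_starRep (g : Fin r → Matrix (Fin n) (Fin n) ℂ) (v : StarVertex n r) :
    starGauge (starRep g) v = LinearMap.id := by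
  obtain ⟨i, k⟩ | k := v
  · exact quotientGauge_cut k
  · exact subspaceGauge_cut k

theorem straighten_starRep (g : Fin r → Matrix (Fin n) (Fin n) ℂ) :
    straighten (starRep g) = g := by
  funext i
  rw [straighten, starGauge_starRep, starGauge_starRep]
  exact LinearMap.toMatrix'_toLin' (g i)

/-- Generic representations are isomorphic to those in which all flags are standard. -/
theorem exists_equiv_starRep {y : QRep (starSrc (n := n) (r := r)) starTgt starDim}
    (hy : ∀ v, LinearMap.det (starGauge y v) ≠ 0) :
    ∃ h : ∀ v : StarVertex n r, (Fin (starDim v) → ℂ) ≃ₗ[ℂ] (Fin (starDim v) → ℂ),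
      ∀ a, (h (starTgt a)).toLinearMap ∘ₗ y a =
        starRep (straighten y) a ∘ₗ (h (starSrc a)).toLinearMap := by
  let e : ∀ v : StarVertex n r, (Fin (starDim v) → ℂ) ≃ₗ[ℂ] (Fin (starDim v) → ℂ) :=
    fun v => LinearMap.equivOfDetNeZero (starGauge y v) (hy v)
  have he : ∀ v u, e v u = starGauge y v u := fun _ _ => rfl
  refine ⟨fun v => match v with
    | .inl p => e (.inl p)
    | .inr k => (e (.inr k)).symm, ?_⟩
  rintro (j | i | ⟨i, j⟩) <;> refine LinearMap.ext fun u => ?_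
  · obtain ⟨w, rfl⟩ := (e (.inr j.castSucc)).surjective u
    change (e (.inr j.succ)).symm (y (.inl j) (e (.inr j.castSucc) w)) =
      cut j.val (j.val + 1) ((e (.inr j.castSucc)).symm (e (.inr j.castSucc) w))
    rw [LinearEquiv.symm_apply_apply]
    exact (e (.inr j.succ)).symm_apply_eq.2
      (LinearMap.congr_fun (subspaceGauge_comp_cut (fun j => y (.inl j)) j) w).symm
  · obtain ⟨w, rfl⟩ := (e (.inr (Fin.last n))).surjective u
    change e (.inl (i, Fin.last n)) (y (.inr (.inl i)) (e (.inr (Fin.last n)) w)) =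
      (straighten y i).mulVecLin ((e (.inr (Fin.last n))).symm (e (.inr (Fin.last n)) w))
    rw [LinearEquiv.symm_apply_apply, straighten, ← Matrix.toLin'_apply', Matrix.toLin'_toMatrix']
    rfl
  · exact (LinearMap.congr_fun
      (cut_comp_quotientGauge (fun j => y (.inr (.inr (i, j)))) j) u).symm

end Gauge

section StarDet

variable {n r : ℕ}

theorem isPolyMap_starRep : IsPolyMap (starRep (n := n) (r := r)) := by
  refine isPolyMap_pi ?_
  rintro (j | i | p)
  · exact isPolyMap_const _
  · exact isPolyMap_linear ((Matrix.toLin' (R := ℂ)).toLinearMap ∘ₗ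
      (LinearMap.proj i : (Fin r → Matrix (Fin n) (Fin n) ℂ) →ₗ[ℂ] _))
  · exact isPolyMap_const _

/-- The action of lower triangular matrices on the flags of quotients. -/
def quotientBlocks (b : Fin r → Matrix (Fin n) (Fin n) ℂ) :
    VertexMaps (starDim (n := n) (r := r)) starDim
  | .inl p => leadingBlock (b p.1) p.2.val
  | .inr _ => LinearMap.id

/-- The action of an upper triangular matrix on the flag of subspaces. -/
def subspaceBlocks (b : Matrix (Fin n) (Fin n) ℂ) :
    VertexMaps (starDim (n := n) (r := r)) starDim
  | .inl _ => LinearMap.id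
  | .inr k => leadingBlock b k.val

theorem quotientBlocks_comp_starRep {b : Fin r → Matrix (Fin n) (Fin n) ℂ}
    (hb : ∀ i j k, j < k → b i j k = 0) (g : Fin r → Matrix (Fin n) (Fin n) ℂ)
    (a : StarArrow n r) : quotientBlocks b (starTgt a) ∘ₗ starRep g a =
      starRep (fun i => b i * g i) a ∘ₗ quotientBlocks b (starSrc a) := by
  obtain j | i | ⟨i, j⟩ := a
  · rfl
  · change leadingBlock (b i) n ∘ₗ (g i).mulVecLin = (b i * g i).mulVecLin ∘ₗ LinearMap.id
    rw [leadingBlock_self, Matrix.mulVecLin_mul]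
    rfl
  · exact leadingBlock_comp_cut_of_lower (hb i) (Nat.le_succ j.val) j.2

theorem subspaceBlocks_comp_starRep {b : Matrix (Fin n) (Fin n) ℂ} (hb : ∀ j k, k < j → b j k = 0)
    (g : Fin r → Matrix (Fin n) (Fin n) ℂ) (a : StarArrow n r) :
    subspaceBlocks b (starTgt a) ∘ₗ starRep (fun i => g i * b) a =
      starRep g a ∘ₗ subspaceBlocks b (starSrc a) := by
  obtain j | i | ⟨i, j⟩ := a
  · exact leadingBlock_comp_cut_of_upper hb (Nat.le_succ j.val) j.2
  · change LinearMap.id ∘ₗ (g i * b).mulVecLin = (g i).mulVecLin ∘ₗ leadingBlock b n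
    rw [leadingBlock_self, Matrix.mulVecLin_mul]
    rfl
  · rfl

variable {lam : Fin r → Fin n → ℕ} {m : Fin n → ℤ} {C : ℕ}

theorem prod_det_quotientBlocks (hC : ∀ i j, lam i j ≤ C) {b : Fin r → Matrix (Fin n) (Fin n) ℂ}
    (hb : ∀ i j k, j < k → b i j k = 0) (hb0 : ∀ i j, b i j j ≠ 0) :
    ∏ a, LinearMap.det (quotientBlocks b (starTgt a)) ^ starWeight lam m C (starSrc a) =
      (∏ i, ∏ j, b i j j ^ lam i j) *
        ∏ v, LinearMap.det (quotientBlocks b v) ^ starWeight lam m C v := by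
  have hdet : ∀ v, LinearMap.det (quotientBlocks b v) =
      Sum.elim (fun p => diagProd (b p.1) p.2.val) (fun _ => 1) v := by
    rintro (⟨i, k⟩ | k)
    · exact det_leadingBlock_of_lower (hb i) (Nat.lt_succ_iff.1 k.2)
    · exact LinearMap.det_id
  have h := fun i => prod_diagProd_pow (hb0 i) (c := fun j => C - lam i j) (C := C)
    (m := fun j => (lam i j : ℤ)) fun j => by
      have := hC i j
      omega
  simp only [zpow_natCast] at h
  simp only [hdet]
  simp only [Fintype.prod_sum_type, Fintype.prod_prod_type, starSrc, starTgt, Sum.elim_inl,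
    Sum.elim_inr, one_pow, Finset.prod_const_one, one_mul, mul_one, starWeight,
    Fin.snoc_last, Fin.cons_succ, Fin.prod_univ_succ (n := n), Fin.cons_zero, pow_zero,
    Fin.val_last, Fin.val_castSucc, Fin.val_succ, ← Finset.prod_mul_distrib, h]

theorem prod_det_subspaceBlocks (hCm : ∀ j, m j ≤ C) {b : Matrix (Fin n) (Fin n) ℂ}
    (hb : ∀ j k, k < j → b j k = 0) (hb0 : ∀ j, b j j ≠ 0) :
    ∏ v, LinearMap.det (subspaceBlocks (r := r) b v) ^ starWeight lam m C v =
      (∏ j, b j j ^ m j) *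
        ∏ a, LinearMap.det (subspaceBlocks (r := r) b (starTgt a)) ^
          starWeight lam m C (starSrc a) := by
  have hdet : ∀ v, LinearMap.det (subspaceBlocks (r := r) b v) =
      Sum.elim (fun _ => 1) (fun k => diagProd b k.val) v := by
    rintro (p | k)
    · exact LinearMap.det_id
    · exact det_leadingBlock_of_upper hb (Nat.lt_succ_iff.1 k.2)
  have h := prod_diagProd_pow hb0 (c := fun j => (C - m j).toNat) (C := C) (m := m) fun j => by
    have := hCm j
    omega
  simp only [hdet]
  simp only [Fintype.prod_sum_type, starSrc, starTgt, Sum.elim_inl,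
    Sum.elim_inr, one_pow, Finset.prod_const_one, one_mul, mul_one, starWeight,
    Fin.snoc_last, Fin.snoc_castSucc, Fin.prod_univ_castSucc (n := n),
    Fin.val_last, Fin.val_castSucc, Fin.val_succ, h]
  ring

theorem diag_ne_zero_of_lower {B : Matrix (Fin n) (Fin n) ℂ} (hB : ∀ j k, j < k → B j k = 0)
    (h : B.det ≠ 0) (j : Fin n) : B j j ≠ 0 := by
  have hd : B.det = ∏ j, B j j :=
    Matrix.det_of_isLowerTriangular B fun j k hjk => hB j k (by simpa using hjk)
  rw [hd] at h
  exact Finset.prod_ne_zero_iff.1 h j (Finset.mem_univ j)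

theorem schofieldDet_starRep_lower_mul (hC : ∀ i j, lam i j ≤ C)
    (e : ArrowMaps starSrc starTgt (starWeight lam m C) starDim ≃ₗ[ℂ]
      VertexMaps (starWeight lam m C) starDim)
    (x : QRep starSrc starTgt (starWeight lam m C)) {b : Fin r → Matrix (Fin n) (Fin n) ℂ}
    (hb : ∀ i j k, j < k → b i j k = 0) (hb0 : ∀ i j, b i j j ≠ 0)
    (g : Fin r → Matrix (Fin n) (Fin n) ℂ) :
    schofieldDet e x (starRep fun i => b i * g i) =
      (∏ i, ∏ j, b i j j ^ lam i j) * schofieldDet e x (starRep g) := by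
  have h := schofieldDet_comp e (x := x) (quotientBlocks_comp_starRep hb g)
  rw [prod_det_quotientBlocks hC hb hb0] at h
  refine mul_right_cancel₀ (Finset.prod_ne_zero_iff.2 fun v _ => pow_ne_zero _ ?_)
    (h.trans (by ring))
  obtain ⟨i, k⟩ | k := v
  · change LinearMap.det (leadingBlock (b i) k.val) ≠ 0
    rw [det_leadingBlock_of_lower (hb i) (Nat.lt_succ_iff.1 k.2)]
    exact Finset.prod_ne_zero_iff.2 fun j _ => hb0 i j
  · change LinearMap.det LinearMap.id ≠ 0
    rw [LinearMap.det_id]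
    exact one_ne_zero

theorem schofieldDet_starRep_mul_upper (hCm : ∀ j, m j ≤ C)
    (e : ArrowMaps starSrc starTgt (starWeight lam m C) starDim ≃ₗ[ℂ]
      VertexMaps (starWeight lam m C) starDim)
    (x : QRep starSrc starTgt (starWeight lam m C)) {b : Matrix (Fin n) (Fin n) ℂ}
    (hb : ∀ j k, k < j → b j k = 0) (hb0 : ∀ j, b j j ≠ 0)
    (g : Fin r → Matrix (Fin n) (Fin n) ℂ) :
    schofieldDet e x (starRep fun i => g i * b) =
      (∏ j, b j j ^ m j) * schofieldDet e x (starRep g) := by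
  have h := schofieldDet_comp e (x := x) (subspaceBlocks_comp_starRep hb g)
  rw [prod_det_subspaceBlocks hCm hb hb0] at h
  refine mul_left_cancel₀ (Finset.prod_ne_zero_iff.2 fun a _ => pow_ne_zero _ ?_)
    (h.symm.trans (by ring))
  obtain p | k := starTgt a
  · change LinearMap.det LinearMap.id ≠ 0
    rw [LinearMap.det_id]
    exact one_ne_zero
  · change LinearMap.det (leadingBlock b k.val) ≠ 0
    rw [det_leadingBlock_of_upper hb (Nat.lt_succ_iff.1 k.2)]
    exact Finset.prod_ne_zero_iff.2 fun j _ => hb0 j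

end StarDet

section Segments

variable {n r : ℕ}

theorem add_mul_le_of_le_endpoints {x c d : ℤ} {k l : ℕ} (hlk : l ≤ k) (h0 : x ≤ c)
    (hk : x + k * d ≤ c) : x + l * d ≤ c := by
  have hl : (l : ℤ) ≤ k := Int.ofNat_le.2 hlk
  have hl0 : (0 : ℤ) ≤ l := Int.natCast_nonneg l
  obtain hd | hd := le_total 0 d
  · nlinarith
  · nlinarith

/-- If the linear inequalities bounding the quotients of generic standard representations hold,
then some determinantal semi-invariant does not vanish. -/
theorem exists_isSemiInvariant_of_inequalities {lam : Fin r → Fin n → ℕ}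
    (hlam : ∀ i, IsPartition (lam i)) {m : Fin n → ℤ} (hm : Antitone m)
    (hsum : ∑ i, ∑ j, (lam i j : ℤ) = ∑ j, m j) {q : (Fin r → Matrix (Fin n) (Fin n) ℂ) → ℂ}
    (hq : q ∈ polyFn (Fin r → Matrix (Fin n) (Fin n) ℂ)) (hq0 : ∃ g, q g ≠ 0)
    (hdet : ∀ g, q g ≠ 0 → ∀ i, (g i).det ≠ 0)
    (hineq : ∀ g, q g ≠ 0 → ∀ S : Submodule ℂ (Fin n → ℂ),
      ∃ (I : Finset (Fin n)) (J : Fin r → Finset (Fin n)), I.card = Module.finrank ℂ S ∧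
        (∀ i, (J i).card = Module.finrank ℂ S) ∧
        (∀ k, Module.finrank ℂ (S ⊓ supportedBelow Fin.val k : Submodule ℂ (Fin n → ℂ)) ≤
          (I.filter fun j => j.val < k).card) ∧
        (∀ i k, Module.finrank ℂ (S.map (g i).mulVecLin ⊓ supportedBelow (fun j => j.rev.val) k :
          Submodule ℂ (Fin n → ℂ)) ≤ ((J i).filter fun j => j.rev.val < k).card) ∧
        ∑ j ∈ I, m j ≤ ∑ i, ∑ j ∈ J i, (lam i j : ℤ))
    {a : Fin n → ℤ} {s : ℤ} (hs : ∀ j, m j = a j + s) :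
    ∃ D, IsSemiInvariant lam a D ∧
      ∃ g : Fin r → Matrix (Fin n) (Fin n) ℂ, (∀ i, (g i).det ≠ 0) ∧ D g ≠ 0 := by
  obtain ⟨C, hC, hCm⟩ : ∃ C : ℕ, (∀ i j, lam i j ≤ C) ∧ ∀ j, m j ≤ C := by
    refine ⟨∑ i, ∑ j, lam i j + ∑ j, (m j).toNat, fun i j => ?_, fun j => ?_⟩
    · exact ((Finset.single_le_sum (f := lam i) (fun _ _ => Nat.zero_le _)
        (Finset.mem_univ j)).trans (Finset.single_le_sum (f := fun i => ∑ j, lam i j)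
          (fun _ _ => Nat.zero_le _) (Finset.mem_univ i))).trans (Nat.le_add_right _ _)
    · have := Finset.single_le_sum (f := fun j => (m j).toNat) (fun _ _ => Nat.zero_le _)
        (Finset.mem_univ j)
      have := Int.self_le_toNat (m j)
      omega
  obtain ⟨x, y, hy, hxy⟩ := exists_homDiff_surjective (s := starSrc) (t := starTgt)
    (starWeight lam m C) starDim
    (p := fun y => (∏ v, LinearMap.det (starGauge y v)) * q (straighten y))
    (mul_mem_polyFn (prod_mem_polyFn fun v _ => (isPolyMap_starGauge v).det)
      (polyFn_comp hq isPolyMap_straighten))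
    (by
      obtain ⟨g, hg⟩ := hq0
      refine ⟨starRep g, ?_⟩
      simp only [straighten_starRep, starGauge_starRep, LinearMap.det_id, Finset.prod_const_one,
        one_mul]
      exact hg)
    (by
      intro y hy β' π q' hπ hcomm
      have hqy := right_ne_zero_of_mul hy
      obtain ⟨h, hh⟩ := exists_equiv_starRep fun v =>
        Finset.prod_ne_zero_iff.1 (left_ne_zero_of_mul hy) v (Finset.mem_univ v)
      obtain ⟨I, J, hI, hJ, hIS, hJS, hIJ⟩ := hineq _ hqy
        (LinearMap.ker (π (.inr (Fin.last n)) ∘ₗ (h (.inr (Fin.last n))).symm.toLinearMap))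
      refine starRep_quotient_le hC hCm hlam hm hsum (hdet _ hqy)
        (π := fun v => π v ∘ₗ (h v).symm.toLinearMap) (q := q')
        (fun v => (hπ v).comp (h v).symm.surjective) (fun a => LinearMap.ext fun u => ?_)
        rfl hI hJ hIS hJS hIJ
      obtain ⟨w, rfl⟩ := (h (starSrc a)).surjective u
      have h1 := LinearMap.congr_fun (hh a) w
      have h2 := LinearMap.congr_fun (hcomm a) w
      simp only [LinearMap.comp_apply, LinearEquiv.coe_coe] at h1 h2 ⊢
      rw [← h1, LinearEquiv.symm_apply_apply, LinearEquiv.symm_apply_apply, h2])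
  have hqy := right_ne_zero_of_mul hy
  obtain ⟨h, hh⟩ := exists_equiv_starRep fun v =>
    Finset.prod_ne_zero_iff.1 (left_ne_zero_of_mul hy) v (Finset.mem_univ v)
  have hxg := homDiff_surjective_of_surjective (h := fun v => (h v).toLinearMap)
    (fun v => (h v).surjective) hh hxy
  let e : ArrowMaps starSrc starTgt (starWeight lam m C) starDim ≃ₗ[ℂ]
      VertexMaps (starWeight lam m C) starDim := LinearEquiv.ofFinrankEq _ _ (by
    rw [finrank_vertexMaps, finrank_arrowMaps]
    have h := starDim_finrank_eq hC hCm fun v => (starDim v : ℤ)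
    simp only [starDim, Sum.elim_inl, Sum.elim_inr, Fin.val_succ, Fin.val_castSucc, Fin.val_zero,
      Nat.cast_add, Nat.cast_one, add_sub_cancel_left, mul_one, Nat.cast_zero, mul_zero, zero_add,
      hsum, sub_self] at h
    exact_mod_cast (sub_eq_zero.1 h).symm)
  refine ⟨fun g => schofieldDet e x (starRep g), ⟨?_, ?_, ?_, ?_⟩, straighten y, hdet _ hqy,
    schofieldDet_ne_zero hxg⟩
  · exact polyFn_comp (schofieldDet_mem_polyFn e x) isPolyMap_starRep
  · exact fun b g hb0 hb => schofieldDet_starRep_lower_mul hC e x hb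
      (fun i => diag_ne_zero_of_lower (hb i) (hb0 i)) g
  · intro b hb g
    rw [schofieldDet_starRep_mul_upper hCm e x (fun j k hkj => hb.2 j k hkj)
      fun j => by rw [hb.1]; exact one_ne_zero]
    simp [hb.1]
  · intro b hb g
    have hb1 : ∏ j, b.val j j = 1 := by
      refine (Matrix.det_diagonal (d := fun j => b.val j j)).symm.trans (Eq.trans ?_ b.2)
      congr 1
      ext i j
      by_cases hij : i = j
      · simp [hij]
      · simp [hij, hb i j hij]
    have hb0 : ∀ j, b.val j j ≠ 0 := fun j =>
      Finset.prod_ne_zero_iff.1 (hb1.trans_ne one_ne_zero) j (Finset.mem_univ j)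
    rw [schofieldDet_starRep_mul_upper hCm e x (fun j k hkj => hb j k hkj.ne') hb0]
    simp only [hs, zpow_add₀ (hb0 _), Finset.prod_mul_distrib, Finset.prod_zpow, hb1, one_zpow,
      mul_one]

end Segments

theorem convexity_LR_segments (n r : ℕ)
    (lam : Fin r → Fin n → ℕ) (hlam : ∀ i, IsPartition (lam i))
    (V : Fin r → Type*) [∀ i, AddCommGroup (V i)] [∀ i, Module ℂ (V i)]
    [∀ i, FiniteDimensional ℂ (V i)]
    -- `ρ i` is the irreducible representation `V(λ⁽ⁱ⁾)`
    (ρ : ∀ i, Representation ℂ (SL n) (V i)) (hirr : ∀ i, RepIsIrreducible (ρ i))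
    (hhw : ∀ i, Occurs (ρ i) (fun j => (lam i j : ℤ)))
    (ν : Fin n → ℕ) (hν : IsPartition ν) (γ : Fin n → ℤ)
    (hγ : ∑ j, γ j = 0)  -- γ lies in the root lattice
    (k : ℕ) (hk : 0 < k)
    (hνk : IsPartition fun j => ((ν j : ℤ) + k • γ j).toNat)
    (hνknn : ∀ j, 0 ≤ (ν j : ℤ) + k • γ j)  -- ν + kγ is again a partition
    (h0 : Occurs (piTensorRep ρ) (fun j => (ν j : ℤ)))
    (hkocc : Occurs (piTensorRep ρ) (fun j => (ν j : ℤ) + k • γ j)) :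
    ∀ l : ℕ, l ≤ k → Occurs (piTensorRep ρ) (fun j => (ν j : ℤ) + l • γ j) := by
  intro l hl
  obtain rfl | hn := Nat.eq_zero_or_pos n
  · rwa [Subsingleton.elim (fun j => (ν j : ℤ) + l • γ j) fun j => (ν j : ℤ)]
  obtain ⟨F, hF, hF0⟩ := exists_semiInvariant_of_occurs hlam hirr hhw h0
  obtain ⟨G, hG, hG0⟩ := exists_semiInvariant_of_occurs hlam hirr hhw hkocc
  obtain ⟨s, hs⟩ := hF.exists_shift hF0
  have hsum : ∀ t : ℕ, ∑ j, ((ν j : ℤ) + t • γ j) = ∑ j, (ν j : ℤ) := fun t => by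
    rw [Finset.sum_add_distrib, ← Finset.smul_sum, hγ, smul_zero, add_zero]
  push_cast at hs
  let q : (Fin r → Matrix (Fin n) (Fin n) ℂ) → ℂ := fun g => F g * G g * ∏ i, (g i).det
  obtain ⟨D, hD, g, hg, hDg⟩ := exists_isSemiInvariant_of_inequalities (q := q)
    (m := fun j => (ν j : ℤ) + l • γ j + s) (a := fun j => (ν j : ℤ) + l • γ j) (s := s) hlam
    (by
      intro i j hij
      have h1 := hν i j hij
      have h2 := hνk i j hij
      have h3 := add_mul_le_of_le_endpoints (x := (ν j : ℤ) - ν i) (c := 0) (d := γ j - γ i) hl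
        (by omega) (by
          have := hνknn i
          have := hνknn j
          simp only [nsmul_eq_mul] at *
          rw [mul_sub]
          omega)
      simp only [nsmul_eq_mul]
      linarith)
    (by
      rw [Finset.sum_add_distrib, hsum, Finset.sum_const, Finset.card_univ, Fintype.card_fin,
        nsmul_eq_mul]
      linarith)
    (mul_mem_polyFn (mul_mem_polyFn hF.poly hG.poly) (prod_mem_polyFn fun i _ =>
      det_mem_polyFn fun j j' => dual_mem_polyFn (Matrix.entryLinearMap ℂ ℂ j j' ∘ₗ
        (LinearMap.proj i : (Fin r → Matrix (Fin n) (Fin n) ℂ) →ₗ[ℂ] _))))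
    (by
      obtain ⟨f, hf⟩ := hF0
      obtain ⟨f', hf'⟩ := hG0
      obtain ⟨z, hz⟩ := polyFn_exists_mul_ne_zero hF.poly hG.poly hf hf'
      exact polyFn_exists_mul_ne_zero (mul_mem_polyFn hF.poly hG.poly)
        (prod_mem_polyFn fun i _ => det_mem_polyFn fun j j' => dual_mem_polyFn
          (Matrix.entryLinearMap ℂ ℂ j j' ∘ₗ
            (LinearMap.proj i : (Fin r → Matrix (Fin n) (Fin n) ℂ) →ₗ[ℂ] _))) hz
        (y := fun _ => 1) (by simp))
    (fun g hg i => Finset.prod_ne_zero_iff.1 (right_ne_zero_of_mul hg) i (Finset.mem_univ i))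
    (by
      intro g hg S
      obtain ⟨I, J, hI, hJ, hIS, hJS, hIJ⟩ := exists_king_inequality (fun i =>
        Finset.prod_ne_zero_iff.1 (right_ne_zero_of_mul hg) i (Finset.mem_univ i)) lam S
      refine ⟨I, J, hI, hJ, hIS, hJS, ?_⟩
      have h1 := hIJ _ F hF (left_ne_zero_of_mul (left_ne_zero_of_mul hg))
      have h2 := hIJ _ G hG (right_ne_zero_of_mul (left_ne_zero_of_mul hg))
      rw [hsum] at h2
      rw [hs, mul_left_comm] at h1 h2
      have h1' := le_of_mul_le_mul_left h1 (Int.natCast_pos.2 hn)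
      have h2' := le_of_mul_le_mul_left h2 (Int.natCast_pos.2 hn)
      simp only [Finset.sum_add_distrib, Finset.sum_const, nsmul_eq_mul, ← Finset.mul_sum] at h2' ⊢
      have := add_mul_le_of_le_endpoints (x := I.card * s + ∑ j ∈ I, (ν j : ℤ))
        (c := ∑ i, ∑ j ∈ J i, (lam i j : ℤ)) (d := ∑ j ∈ I, γ j) hl (by linarith) (by linarith)
      linarith)
    fun j => rfl
  exact occurs_of_semiInvariant hlam hirr hhw hD (hD.exists_SL_ne_zero hg hDg)
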